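/- arXiv:1402.4721 — 2 statements merged into one kernel-verified Lean document; each statement's English description precedes it below -/
import Mathlib

section
/- Let k ≥ 1 and let λ1, ..., λk be coprime nonzero integers, and set S = |λ1| + ... + |λk|. Then there exists a constant C'' ≥ 0, depending only on λ1, ..., λk, such that for every integer u with S ≤ u ≤ S² and every finite subset A of the integers, |λ1·A + ... + λk·A| ≥ (u/S)·|A| − C''·|λ1 ⋯ λk|^u. -/
/-! The exponential error term plays no role: since `u / S ≤ S` and `|λ₁ ⋯ λ_k| ^ u ≥ 1`, it
suffices to prove the sharp bound `|λ₁ · A + ⋯ + λ_k · A| ≥ S |A| - C` (`exists_card_sumDil_ge`),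
in three steps.

The first step is the bound `|B + m · A| ≥ |B| + m |A| - C` (`exists_card_add_dil`), for sets `B`
meeting at least as many residue classes as `A` modulo every divisor of a power of `m`. Replace
`A` by its class modulo `N` containing `a ∈ A` and sum over `a`. The resulting `sumW` decreases as
`N` becomes more divisible, and is at least roughly `|A| |B| + g q |A| ^ 2`, with `g` the number
of classes of `B` modulo `m N` and `q` the proportion of pairs of `A` that are congruent modulo
`N`. If `B + m · A` is too small, then the normalised decrease `G` of `sumW` satisfies `G + g q <
m`. Starting from `N = 1`, where `G = 0` and `q = 1`, one can keep multiplying `N` by divisors of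
`m` so that `G + β (log g + 2 log q)` stays nonnegative (`exists_next_modulus`): either many
classes of `B` fail to split into all their lifts, whence `sumW` drops, or most of them do, whence
`g` grows, to a contradiction if `q` drops sharply. Consequently `q` stays above a positive
constant, whereas `q = 1 / |A|` as soon as `N` exceeds the diameter of `A`.

The second step shows that a sum of coprime dilates of `A` meets at least as many classes as `A`
modulo any integer (`cnt_le_cnt_sumDil`), so that such sums can take the place of `B`.

The third step is an induction on the number of dilates. Write the sumset as `X = a · A + q · Y`,
with `q` the greatest common divisor of the coefficients other than the first and `Y` a sum of
coprime dilates of `A`. If `A`, contained in a single class modulo `N`, meets all `q` classes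
modulo `q N` inside it, the first two steps applied to each of these classes and the bound for `Y`
add up to the required bound (`exists_bound_of_fully_distributed`). Otherwise take `N` to be the
greatest common divisor of the differences of `A`. Each class of `A` modulo `q N` either is itself
fully distributed modulo `q (q N)` or gains a whole class of `A` in the sumset (`exists_gain`). If
all classes have at least `|A| / (2 S)` elements this gain is a positive proportion of `|A|`; if a
class is smaller, its sum with `q · Y` still has at least `|A|` elements, a gain of the same
order. So a bound `j |A| ≤ 2 S |X| + C` always improves to one with `j + 1`, until `j = 2 S ^ 2`
(`exists_bound_of_le`).
-/

open Pointwise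

namespace SumDilates

open Finset

/-! ### Dilates and residue classes -/

/-- The dilate `t · A`. -/
def dil (t : ℤ) (A : Finset ℤ) : Finset ℤ := A.image (fun a => t * a)

/-- The part of `A` lying in the residue class of `a` modulo `N`. -/
def cls (N a : ℤ) (A : Finset ℤ) : Finset ℤ := A.filter (fun x => N ∣ x - a)

/-- The number of residue classes modulo `M` met by `A`. -/
def cnt (M : ℤ) (A : Finset ℤ) : ℕ := #(A.image (· % M))

lemma mem_dil {t x : ℤ} {A : Finset ℤ} : x ∈ dil t A ↔ ∃ a ∈ A, t * a = x := by
  simp [dil]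

lemma mem_cls {N a x : ℤ} {A : Finset ℤ} : x ∈ cls N a A ↔ x ∈ A ∧ N ∣ x - a := by
  simp [cls]

lemma cls_subset (N a : ℤ) (A : Finset ℤ) : cls N a A ⊆ A := filter_subset _ _

lemma self_mem_cls {N a : ℤ} {A : Finset ℤ} (h : a ∈ A) : a ∈ cls N a A := by
  simp [mem_cls, h]

lemma cls_anti {M N a : ℤ} {A : Finset ℤ} (h : N ∣ M) : cls M a A ⊆ cls N a A := by
  intro x hx
  rw [mem_cls] at *
  exact ⟨hx.1, h.trans hx.2⟩

lemma dil_mono {t : ℤ} {A B : Finset ℤ} (h : A ⊆ B) : dil t A ⊆ dil t B := image_subset_image h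

lemma card_dil {t : ℤ} (ht : t ≠ 0) (A : Finset ℤ) : #(dil t A) = #A :=
  card_image_of_injective _ (mul_right_injective₀ ht)

lemma dil_nonempty {t : ℤ} {A : Finset ℤ} (h : A.Nonempty) : (dil t A).Nonempty := h.image _

lemma emod_eq_iff {M x y : ℤ} : x % M = y % M ↔ M ∣ x - y := by
  rw [Int.emod_eq_emod_iff_emod_sub_eq_zero, Int.dvd_iff_emod_eq_zero]

lemma dvd_sub_swap {M x y : ℤ} (h : M ∣ x - y) : M ∣ y - x := by
  rw [← neg_sub]; exact (dvd_neg).2 h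

lemma dvd_sub_tr {M x y z : ℤ} (h : M ∣ x - y) (h' : M ∣ y - z) : M ∣ x - z := by
  have := dvd_add h h'
  rwa [sub_add_sub_cancel] at this

lemma card_add_ge {A B : Finset ℤ} (hA : A.Nonempty) (hB : B.Nonempty) :
    #A + #B ≤ #(A + B) + 1 := by
  have h := cauchy_davenport_add_of_linearOrder_isCancelAdd hA hB
  have : #A + #B - 1 ≤ #(A + B) := by convert h
  omega

lemma card_le_card_add {A B : Finset ℤ} (hB : B.Nonempty) : #A ≤ #(A + B) :=
  card_le_card_add_right hB

lemma cnt_le_of_dvd {M N : ℤ} (h : N ∣ M) (A : Finset ℤ) : cnt N A ≤ cnt M A := by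
  unfold cnt
  have : A.image (· % N) = (A.image (· % M)).image (· % N) := by
    rw [image_image]
    apply image_congr
    intro x _
    simp [Int.emod_emod_of_dvd _ h]
  rw [this]
  exact card_image_le

lemma cnt_mono {M : ℤ} {A B : Finset ℤ} (h : A ⊆ B) : cnt M A ≤ cnt M B :=
  card_le_card (image_subset_image h)

lemma cnt_pos {M : ℤ} {A : Finset ℤ} (h : A.Nonempty) : 0 < cnt M A :=
  card_pos.2 (h.image _)

/-- Every function on a nonempty finset has a fibre of at least average size. -/
lemma exists_large_fiber {α β : Type*} [DecidableEq β] (f : α → β) (s : Finset α)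
    (hs : s.Nonempty) : ∃ a ∈ s, #s ≤ #(s.image f) * #{x ∈ s | f x = f a} := by
  obtain ⟨a, ha, hmax⟩ := exists_max_image s (fun a => #{x ∈ s | f x = f a}) hs
  refine ⟨a, ha, ?_⟩
  rw [mul_comm]
  apply card_le_mul_card_image
  intro b hb
  obtain ⟨a', ha', rfl⟩ := mem_image.1 hb
  exact hmax a' ha'

/-- Each class modulo `M` splits into `d` classes modulo `d * M`. -/
lemma cnt_mul_le {M d : ℤ} (hM : 0 < M) (hd : 0 < d) (A : Finset ℤ) :
    (cnt (d * M) A : ℤ) ≤ d * cnt M A := by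
  have h1 : (#(A.image (· % (d * M))) : ℤ) ≤ d * #((A.image (· % (d * M))).image (· % M)) := by
    lift d to ℕ using hd.le
    norm_cast
    apply card_le_mul_card_image
    intro r hr
    have : #{x ∈ A.image (· % (d * M)) | x % M = r} ≤ #(Finset.range d) := by
      apply card_le_card_of_injOn (fun x => (x / M).toNat)
      · intro x hx
        simp only [coe_filter, mem_image, Set.mem_ofPred_eq] at hx
        obtain ⟨⟨a, _, rfl⟩, _⟩ := hx
        have h0 : 0 ≤ a % (d * M) := Int.emod_nonneg _ (by positivity)
        have h1 : a % (d * M) < d * M := Int.emod_lt_of_pos _ (by positivity)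
        have h2 : a % (d * M) / M < d := Int.ediv_lt_of_lt_mul hM h1
        have h3 : 0 ≤ a % (d * M) / M := Int.ediv_nonneg h0 hM.le
        simp only [coe_range, Set.mem_Iio]
        omega
      · intro x hx y hy hxy
        simp only [coe_filter, mem_image, Set.mem_ofPred_eq] at hx hy
        obtain ⟨⟨a, _, rfl⟩, ha⟩ := hx
        obtain ⟨⟨b, _, rfl⟩, hb⟩ := hy
        have h0 : 0 ≤ a % (d * M) := Int.emod_nonneg _ (by positivity)
        have h0' : 0 ≤ b % (d * M) := Int.emod_nonneg _ (by positivity)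
        have h3 : 0 ≤ a % (d * M) / M := Int.ediv_nonneg h0 hM.le
        have h3' : 0 ≤ b % (d * M) / M := Int.ediv_nonneg h0' hM.le
        simp only at hxy
        have h4 : a % (d * M) / M = b % (d * M) / M := by omega
        rw [← Int.mul_ediv_add_emod (a % (d * M)) M, ← Int.mul_ediv_add_emod (b % (d * M)) M, h4,
          ha, hb]
    simpa using this
  have h2 : (A.image (· % (d * M))).image (· % M) = A.image (· % M) := by
    rw [image_image]
    apply image_congr
    intro x _
    simp [Int.emod_emod_of_dvd _ (Dvd.intro_left d rfl)]
  rw [h2] at h1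
  exact h1

/-- Subsets of `S` lying in pairwise distinct residue classes `φ c` modulo `M` are disjoint. -/
lemma sum_card_le_of_classes {M : ℤ} {S : Finset ℤ} (I : Finset ℤ) (T : ℤ → Finset ℤ) (φ : ℤ → ℤ)
    (hI : ∀ c ∈ I, ∀ c' ∈ I, M ∣ φ c - φ c' → c = c')
    (hT : ∀ c ∈ I, T c ⊆ S) (hTc : ∀ c ∈ I, ∀ x ∈ T c, M ∣ x - φ c) :
    ∑ c ∈ I, #(T c) ≤ #S := by
  rw [← card_biUnion]
  · exact card_le_card (biUnion_subset.2 hT)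
  · intro c hc c' hc' hne
    change Disjoint (T c) (T c')
    rw [disjoint_left]
    intro x hx hx'
    apply hne
    apply hI c hc c' hc'
    exact dvd_sub_tr (dvd_sub_swap (hTc c hc x hx)) (hTc c' hc' x hx')

lemma residues_inj {M : ℤ} {B : Finset ℤ} {c c' : ℤ} (hc : c ∈ B.image (· % M))
    (hc' : c' ∈ B.image (· % M)) (h : M ∣ c - c') : c = c' := by
  obtain ⟨b, _, rfl⟩ := mem_image.1 hc
  obtain ⟨b', _, rfl⟩ := mem_image.1 hc'
  have := emod_eq_iff.2 h
  simpa using this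

lemma sum_card_residues {M : ℤ} (B : Finset ℤ) :
    ∑ c ∈ B.image (· % M), #(cls M c B) = #B := by
  rw [card_eq_sum_card_image (· % M) B]
  apply sum_congr rfl
  intro c hc
  obtain ⟨b, _, rfl⟩ := mem_image.1 hc
  congr 1
  ext x
  simp only [mem_cls, mem_filter]
  rw [← emod_eq_iff]
  simp

lemma exists_mem_of_residue {M c : ℤ} {B : Finset ℤ} (hc : c ∈ B.image (· % M)) :
    ∃ b ∈ B, M ∣ b - c := by
  obtain ⟨b, hb, rfl⟩ := mem_image.1 hc
  exact ⟨b, hb, by rw [← emod_eq_iff]; simp⟩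

/-- Adding a set lying in a single residue class modulo `M` gains at least its size minus one on
every residue class modulo `M` met by `B`. -/
lemma card_add_single_class {M : ℤ} {B S : Finset ℤ} (hS : S.Nonempty)
    (h : ∀ x ∈ S, ∀ y ∈ S, M ∣ x - y) :
    #B + cnt M B * #S ≤ #(B + S) + cnt M B := by
  obtain ⟨s, hs⟩ := hS
  have h1 : ∑ c ∈ B.image (· % M), #(cls M c B + S) ≤ #(B + S) := by
    apply sum_card_le_of_classes (M := M) _ _ (fun c => c + s)
    · intro c hc c' hc' h
      exact residues_inj hc hc' (by rwa [add_sub_add_right_eq_sub] at h)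
    · intro c _; exact add_subset_add_right (cls_subset _ _ _)
    · intro c _ x hx
      obtain ⟨y, hy, z, hz, rfl⟩ := mem_add.1 hx
      rw [show y + z - (c + s) = (y - c) + (z - s) by ring]
      exact dvd_add (mem_cls.1 hy).2 (h z hz s hs)
  have h2 : ∑ c ∈ B.image (· % M), (#(cls M c B) + #S) ≤
      ∑ c ∈ B.image (· % M), (#(cls M c B + S) + 1) := by
    apply sum_le_sum
    intro c hc
    apply card_add_ge _ ⟨s, hs⟩
    obtain ⟨b, hb, hbc⟩ := exists_mem_of_residue hc
    exact ⟨b, mem_cls.2 ⟨hb, hbc⟩⟩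
  rw [sum_add_distrib, sum_add_distrib, sum_card_residues] at h2
  simp only [sum_const, smul_eq_mul, mul_one] at h2
  unfold cnt
  omega

/-! ### Congruent pairs and the averaged sumset -/

/-- The number of pairs of elements of `A` that are congruent modulo `N`. -/
def pairs (N : ℤ) (A : Finset ℤ) : ℕ := ∑ a ∈ A, #(cls N a A)

/-- The total size of the sets `B + m · A_a`, where `A_a` is the class of `a` modulo `N` in `A`,
summed over all `a ∈ A`. -/
def sumW (m N : ℤ) (A B : Finset ℤ) : ℕ := ∑ a ∈ A, #(B + dil m (cls N a A))

lemma filter_emod_eq_cls {N c : ℤ} {A : Finset ℤ} (hc : c ∈ A.image (· % N)) :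
    {x ∈ A | x % N = c} = cls N c A := by
  obtain ⟨b, _, rfl⟩ := mem_image.1 hc
  ext x
  simp only [mem_cls, mem_filter]
  rw [← emod_eq_iff]
  simp

lemma cls_congr {N a b : ℤ} {A : Finset ℤ} (h : N ∣ a - b) : cls N a A = cls N b A := by
  ext x
  simp only [mem_cls]
  exact ⟨fun hx => ⟨hx.1, dvd_sub_tr hx.2 h⟩, fun hx => ⟨hx.1, dvd_sub_tr hx.2 (dvd_sub_swap h)⟩⟩

lemma pairs_eq_sum_sq (N : ℤ) (A : Finset ℤ) :
    pairs N A = ∑ c ∈ A.image (· % N), #(cls N c A) ^ 2 := by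
  unfold pairs
  rw [← sum_fiberwise_of_maps_to (g := (· % N)) (t := A.image (· % N))
    (fun x hx => mem_image_of_mem _ hx)]
  apply sum_congr rfl
  intro c hc
  rw [filter_emod_eq_cls hc, sq, ← smul_eq_mul, ← sum_const]
  apply sum_congr rfl
  intro x hx
  rw [cls_congr (mem_cls.1 hx).2]

/-- The Cauchy-Schwarz inequality for the sizes of the classes of `A`. -/
lemma sq_card_le_pairs_mul_cnt (N : ℤ) (A : Finset ℤ) : #A ^ 2 ≤ pairs N A * cnt N A := by
  rw [pairs_eq_sum_sq, mul_comm, ← sum_card_residues (M := N) A]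
  unfold cnt
  exact sq_sum_le_card_mul_sum_sq

lemma pairs_anti {M N : ℤ} (h : N ∣ M) (A : Finset ℤ) : pairs M A ≤ pairs N A :=
  sum_le_sum fun _ _ => card_le_card (cls_anti h)

lemma sumW_anti {m M N : ℤ} (h : N ∣ M) (A B : Finset ℤ) : sumW m M A B ≤ sumW m N A B :=
  sum_le_sum fun _ _ => card_le_card (add_subset_add_left (dil_mono (cls_anti h)))

lemma cls_one (a : ℤ) (A : Finset ℤ) : cls 1 a A = A := by
  ext x; simp [mem_cls]

lemma pairs_one (A : Finset ℤ) : pairs 1 A = #A ^ 2 := by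
  simp [pairs, cls_one, sq]

lemma sumW_one (m : ℤ) (A B : Finset ℤ) : sumW m 1 A B = #A * #(B + dil m A) := by
  simp [sumW, cls_one]

lemma card_le_pairs (N : ℤ) (A : Finset ℤ) : #A ≤ pairs N A := by
  unfold pairs
  calc #A = ∑ a ∈ A, 1 := by simp
    _ ≤ _ := sum_le_sum fun a ha => card_pos.2 ⟨a, self_mem_cls ha⟩

/-- `card_add_single_class` applied to `B` and each `m · A_a`, and summed over `a`. -/
lemma sumW_lower {m N : ℤ} (hm : 0 < m) (A B : Finset ℤ) :
    #A * #B + cnt (m * N) B * pairs N A ≤ sumW m N A B + cnt (m * N) B * #A := by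
  have h : ∑ a ∈ A, (#B + cnt (m * N) B * #(cls N a A)) ≤
      ∑ a ∈ A, (#(B + dil m (cls N a A)) + cnt (m * N) B) := by
    apply sum_le_sum
    intro a ha
    have := card_add_single_class (M := m * N) (B := B) (S := dil m (cls N a A))
      (dil_nonempty ⟨a, self_mem_cls ha⟩) ?_
    · rwa [card_dil hm.ne'] at this
    · intro x hx y hy
      obtain ⟨x', hx', rfl⟩ := mem_dil.1 hx
      obtain ⟨y', hy', rfl⟩ := mem_dil.1 hy
      rw [← mul_sub]
      exact mul_dvd_mul_left _ (dvd_sub_tr (mem_cls.1 hx').2 (dvd_sub_swap (mem_cls.1 hy').2))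
  rw [sum_add_distrib, sum_add_distrib, ← mul_sum] at h
  simp only [sum_const, smul_eq_mul] at h
  unfold pairs sumW
  linarith

open Classical in
/-- The residues `c` modulo `M` met by `B` for which `B` misses at least one of the `d` residues
modulo `d * M` lying above `c`. -/
noncomputable def nonfull (d M : ℤ) (B : Finset ℤ) : Finset ℤ :=
  (B.image (· % M)).filter (fun c => ∃ t : ℤ, ∀ b ∈ B, ¬ d * M ∣ b - (c + M * t))

lemma nonfull_subset (d M : ℤ) (B : Finset ℤ) : nonfull d M B ⊆ B.image (· % M) := by
  classical exact filter_subset _ _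

/-- A residue modulo `M` met by `B` that is not in `nonfull d M B` has all its `d` lifts met by
`B`. -/
lemma cnt_step {d M : ℤ} (hd : 0 < d) (hM : 0 < M) (B : Finset ℤ) :
    d * ((cnt M B : ℤ) - #(nonfull d M B)) ≤ cnt (d * M) B := by
  classical
  set R := B.image (· % M)
  have hsub : nonfull d M B ⊆ R := nonfull_subset _ _ _
  have h1 : #(R \ nonfull d M B) = cnt M B - #(nonfull d M B) := by
    rw [card_sdiff_of_subset hsub]; rfl
  have h2 : #(nonfull d M B) ≤ cnt M B := card_le_card hsub
  have h3 : #((R \ nonfull d M B) ×ˢ Finset.Ico 0 d) ≤ cnt (d * M) B := by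
    unfold cnt
    apply card_le_card_of_injOn (fun x => x.1 + M * x.2)
    · rintro ⟨c, t⟩ hx
      simp only [coe_product, Set.mem_prod, mem_coe, mem_sdiff, mem_Ico] at hx
      obtain ⟨⟨hc, hn⟩, ht0, ht1⟩ := hx
      have : ∃ b ∈ B, d * M ∣ b - (c + M * t) := by
        by_contra hcon
        push Not at hcon
        exact hn (mem_filter.2 ⟨hc, t, hcon⟩)
      obtain ⟨b, hb, hdiv⟩ := this
      simp only [coe_image, Set.mem_image, mem_coe]
      refine ⟨b, hb, ?_⟩
      rw [emod_eq_iff.2 hdiv]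
      obtain ⟨b', _, rfl⟩ := mem_image.1 hc
      have h4 := Int.emod_nonneg b' hM.ne'
      have h5 := Int.emod_lt_of_pos b' hM
      apply Int.emod_eq_of_lt
      · positivity
      · nlinarith
    · rintro ⟨c, t⟩ hx ⟨c', t'⟩ hx' heq
      simp only [coe_product, Set.mem_prod, mem_coe, mem_sdiff, mem_Ico] at hx hx' heq
      have hcc : c = c' := by
        apply residues_inj hx.1.1 hx'.1.1
        exact ⟨t' - t, by linarith⟩
      subst hcc
      have : t = t' := by
        have := add_left_cancel heq
        exact mul_left_cancel₀ hM.ne' this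
      rw [this]
  rw [card_product, h1, Int.card_Ico] at h3
  zify [h2] at h3
  simp only [sub_zero] at h3
  rw [Int.toNat_of_nonneg hd.le] at h3
  linarith

/-- A set of integers closed under addition and containing the multiples of some `d > 0` is a
subgroup of `ℤ`, hence consists of the multiples of a single integer. -/
lemma exists_generator_of_addClosed {d : ℤ} (hd : 0 < d) (K : Set ℤ)
    (hadd : ∀ x ∈ K, ∀ y ∈ K, x + y ∈ K) (hmul : ∀ t, d * t ∈ K) :
    ∃ h : ℤ, ∀ x, x ∈ K ↔ h ∣ x := by
  have h0 : (0 : ℤ) ∈ K := by simpa using hmul 0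
  have hn : ∀ x ∈ K, ∀ n : ℕ, (n : ℤ) * x ∈ K := by
    intro x hx n
    induction n with
    | zero => simpa using h0
    | succ n ih =>
      push_cast
      rw [add_mul, one_mul]
      exact hadd _ ih _ hx
  let H : AddSubgroup ℤ :=
    { carrier := K
      add_mem' := fun {a b} ha hb => hadd a ha b hb
      zero_mem' := h0
      neg_mem' := by
        intro x hx
        have h2 := hadd _ (hn x hx (d - 1).toNat) _ (hmul (-x))
        rw [Int.toNat_of_nonneg (by omega)] at h2
        convert h2 using 1
        ring }
  obtain ⟨h, hH⟩ := Int.subgroup_cyclic H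
  refine ⟨h, fun x => ?_⟩
  change x ∈ H ↔ _
  rw [hH, AddSubgroup.mem_closure_singleton]
  constructor
  · rintro ⟨n, rfl⟩; exact ⟨n, by simp [mul_comm]⟩
  · rintro ⟨n, rfl⟩; exact ⟨n, by simp [mul_comm]⟩

/-- A set of integers closed under addition, containing the multiples of `d` but not `1`, consists
of multiples of some prime factor of `d`. -/
lemma exists_prime_of_addClosed {d : ℤ} (hd : 0 < d) (K : Set ℤ)
    (hadd : ∀ x ∈ K, ∀ y ∈ K, x + y ∈ K) (hmul : ∀ t, d * t ∈ K) (h1 : (1 : ℤ) ∉ K) :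
    ∃ p : ℤ, Prime p ∧ 0 < p ∧ p ∣ d ∧ ∀ x ∈ K, p ∣ x := by
  obtain ⟨h, hmem⟩ := exists_generator_of_addClosed hd K hadd hmul
  have hd' : h ∣ d := (hmem d).1 (by simpa using hmul 1)
  have hnu : h.natAbs ≠ 1 := by
    intro hh
    apply h1
    rw [hmem, ← Int.natAbs_dvd, hh]
    simp
  obtain ⟨p, hp, hph⟩ := Nat.exists_prime_and_dvd hnu
  have hph' : (p : ℤ) ∣ h := Int.natCast_dvd.2 hph
  exact ⟨p, Nat.prime_iff_prime_int.1 hp, by exact_mod_cast hp.pos, hph'.trans hd',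
    fun x hx => hph'.trans ((hmem x).1 hx)⟩

/-- If `B` misses a residue above `c` modulo `d * (m * N)`, then there is a prime `p ∣ d` such that,
for every `a`, passing from the class of `a` modulo `d * N` to its class modulo `N` creates new
elements of the sumset above `c + m * a`; up to the factor `d` there are at least as many of them as
elements congruent to `a` modulo `N` but not modulo `p * N`. -/
lemma nonfull_gain {d m N c : ℤ} (hd : 0 < d) (hm : 0 < m) (hN : 0 < N) (A B : Finset ℤ)
    (hc : c ∈ nonfull d (m * N) B) :
    ∃ p : ℤ, Prime p ∧ 0 < p ∧ p ∣ d ∧ ∀ a, ∃ T ⊆ B + dil m (cls N a A),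
      Disjoint T (B + dil m (cls (d * N) a A)) ∧ (∀ x ∈ T, m * N ∣ x - (c + m * a)) ∧
      #(cls N a A) ≤ (#(cls (p * N) a A) : ℤ) + d * #T := by
  classical
  obtain ⟨hcB, t, ht⟩ := mem_filter.1 hc
  obtain ⟨b₀, hb₀, hb₀c⟩ := exists_mem_of_residue hcB
  -- The translations (in units of `m * N`) preserving the set of residues met by `B` above `c`.
  let K : Set ℤ := {σ | ∀ b ∈ B, m * N ∣ b - c → ∃ b' ∈ B, d * (m * N) ∣ b' - (b + m * N * σ)}
  have hstep : ∀ {b b' σ : ℤ}, m * N ∣ b - c → d * (m * N) ∣ b' - (b + m * N * σ) →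
      m * N ∣ b' - c := by
    intro b b' σ h1 h2
    have h3 : m * N ∣ b' - (b + m * N * σ) := (Dvd.intro_left d rfl).trans h2
    have h4 := dvd_add (dvd_add h3 h1) (Dvd.intro σ rfl : m * N ∣ m * N * σ)
    rwa [show b' - (b + m * N * σ) + (b - c) + m * N * σ = b' - c by ring] at h4
  obtain ⟨p, hp, hp0, hpd, hpK⟩ := exists_prime_of_addClosed hd K
    (by
      intro x hx y hy b hb hbc
      obtain ⟨b', hb', h'⟩ := hx b hb hbc
      obtain ⟨b'', hb'', h''⟩ := hy b' hb' (hstep hbc h')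
      refine ⟨b'', hb'', ?_⟩
      have := dvd_add h'' h'
      rwa [show b'' - (b' + m * N * y) + (b' - (b + m * N * x)) = b'' - (b + m * N * (x + y)) by
        ring] at this)
    (by
      intro t b hb _
      exact ⟨b, hb, ⟨-t, by ring⟩⟩)
    (by
      intro h1
      have hall : ∀ n : ℕ, ∃ b ∈ B, d * (m * N) ∣ b - (b₀ + m * N * n) := by
        intro n
        induction n with
        | zero => exact ⟨b₀, hb₀, by simp⟩
        | succ n ih =>
          obtain ⟨b, hb, hbn⟩ := ih
          obtain ⟨b', hb', h'⟩ := h1 b hb (hstep hb₀c hbn)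
          refine ⟨b', hb', ?_⟩
          have := dvd_add h' hbn
          push_cast
          rwa [show b' - (b + m * N * 1) + (b - (b₀ + m * N * n)) = b' - (b₀ + m * N * (n + 1)) by
            ring] at this
      obtain ⟨s, hs⟩ := hb₀c
      -- Replace `t - s` by a nonnegative representative modulo `d`.
      obtain ⟨b, hb, hbn⟩ := hall ((t - s) % d).toNat
      apply ht b hb
      rw [Int.toNat_of_nonneg (Int.emod_nonneg _ hd.ne')] at hbn
      have h2 : d * (m * N) ∣ m * N * ((t - s) % d - (t - s)) := by
        rw [mul_comm d]
        exact mul_dvd_mul_left _ (dvd_sub_swap ⟨(t - s) / d, by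
          have := Int.emod_add_mul_ediv (t - s) d; linarith⟩)
      have := dvd_add hbn h2
      rwa [show b - (b₀ + m * N * ((t - s) % d)) + m * N * ((t - s) % d - (t - s)) =
        b - (c + m * N * t) + ((c + m * N * s) - b₀) by ring,
        show c + m * N * s - b₀ = 0 by linarith, add_zero] at this)
  refine ⟨p, hp, hp0, hpd, fun a => ?_⟩
  set U := cls N a A \ cls (p * N) a A with hU
  have hUcard : (#(cls N a A) : ℤ) ≤ #(cls (p * N) a A) + #U := by
    have := card_le_card_sdiff_add_card (s := cls N a A) (t := cls (p * N) a A)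
    rw [← hU] at this
    omega
  rcases U.eq_empty_or_nonempty with hU0 | hU0
  · refine ⟨∅, empty_subset _, disjoint_empty_left _, by simp, ?_⟩
    rw [hU0] at hUcard
    simpa using hUcard
  obtain ⟨a', ha', hfib⟩ := exists_large_fiber (· % (d * N)) U hU0
  have hUN : ∀ x ∈ U, x ∈ A ∧ N ∣ x - a := fun x hx => mem_cls.1 (mem_sdiff.1 hx).1
  obtain ⟨s, hs⟩ := (hUN a' ha').2
  have hsK : s ∉ K := by
    intro hsK
    apply (mem_sdiff.1 ha').2
    rw [mem_cls]
    refine ⟨(hUN a' ha').1, ?_⟩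
    rw [hs, mul_comm p]
    exact mul_dvd_mul_left _ (hpK s hsK)
  obtain ⟨b, hb, hbc, hbB⟩ : ∃ b ∈ B, m * N ∣ b - c ∧
      ∀ b' ∈ B, ¬ d * (m * N) ∣ b' - (b + m * N * s) := by
    by_contra hcon
    push Not at hcon
    exact hsK hcon
  set F := {x ∈ U | x % (d * N) = a' % (d * N)} with hF
  refine ⟨F.image (fun x => b + m * x), ?_, ?_, ?_, ?_⟩
  · intro y hy
    obtain ⟨x, hx, rfl⟩ := mem_image.1 hy
    have hxU := hUN x (mem_filter.1 hx).1
    exact add_mem_add hb (mem_dil.2 ⟨x, mem_cls.2 hxU, rfl⟩)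
  · rw [disjoint_left]
    intro y hy hy'
    obtain ⟨x, hx, rfl⟩ := mem_image.1 hy
    obtain ⟨b', hb', z, hz, hzy⟩ := mem_add.1 hy'
    obtain ⟨w, hw, rfl⟩ := mem_dil.1 hz
    have hx' := emod_eq_iff.1 (mem_filter.1 hx).2
    apply hbB b' hb'
    have h1 := mul_dvd_mul_left m (dvd_sub hx' (mem_cls.1 hw).2)
    rw [show m * (d * N) = d * (m * N) by ring] at h1
    rwa [show m * (x - a' - (w - a)) = b' - (b + m * N * s) + (m * (N * s) - m * (a' - a)) by
      linear_combination -hzy, hs, sub_self, add_zero] at h1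
  · intro y hy
    obtain ⟨x, hx, rfl⟩ := mem_image.1 hy
    have hxU := hUN x (mem_filter.1 hx).1
    rw [show b + m * x - (c + m * a) = (b - c) + m * (x - a) by ring]
    exact dvd_add hbc (mul_dvd_mul_left _ hxU.2)
  · rw [card_image_of_injective _ (fun x y hxy => mul_left_cancel₀ hm.ne' (add_left_cancel hxy))]
    have h1 : (#(U.image (· % (d * N))) : ℤ) ≤ d := by
      have h2 := cnt_mul_le hN hd U
      have h3 : cnt N U ≤ 1 := by
        apply card_le_one.2
        intro x hx y hy
        obtain ⟨x', hx', rfl⟩ := mem_image.1 hx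
        obtain ⟨y', hy', rfl⟩ := mem_image.1 hy
        exact emod_eq_iff.2 (dvd_sub_tr (hUN x' hx').2 (dvd_sub_swap (hUN y' hy').2))
      have h4 : d * (cnt N U : ℤ) ≤ d * 1 := by
        apply mul_le_mul_of_nonneg_left _ hd.le
        exact_mod_cast h3
      unfold cnt at h2 h4
      linarith
    have h2 : (#U : ℤ) ≤ #(U.image (· % (d * N))) * #F := by exact_mod_cast hfib
    have h3 : (#(U.image (· % (d * N))) : ℤ) * #F ≤ d * #F :=
      mul_le_mul_of_nonneg_right h1 (by positivity)
    linarith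

/-- Quantitative gain in `sumW` on passing from the modulus `d * N` to `N`. -/
lemma sumW_step {d m N : ℤ} (hd : 0 < d) (hm : 0 < m) (hN : 0 < N) (A B : Finset ℤ) (K : ℝ)
    (hK : ∀ p : ℤ, Prime p → 0 < p → p ∣ d → (pairs (p * N) A : ℝ) + K ≤ pairs N A) :
    (d : ℝ) * sumW m (d * N) A B + #(nonfull d (m * N) B) * K ≤ d * sumW m N A B := by
  choose! p hp hp0 hpd T hTs hTd hTc hTcard using
    fun c => nonfull_gain (c := c) hd hm hN A B
  have h1 : ∀ a ∈ A, ∑ c ∈ nonfull d (m * N) B, #(T c a) + #(B + dil m (cls (d * N) a A)) ≤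
      #(B + dil m (cls N a A)) := by
    intro a _
    have hsub : B + dil m (cls (d * N) a A) ⊆ B + dil m (cls N a A) :=
      add_subset_add_left (dil_mono (cls_anti (Dvd.intro_left d rfl)))
    have h2 := sum_card_le_of_classes (M := m * N)
      (S := (B + dil m (cls N a A)) \ (B + dil m (cls (d * N) a A)))
      (nonfull d (m * N) B) (fun c => T c a) (fun c => c + m * a)
      (by
        intro c hc c' hc' h
        exact residues_inj (nonfull_subset _ _ _ hc) (nonfull_subset _ _ _ hc')
          (by rwa [add_sub_add_right_eq_sub] at h))
      (by
        intro c hc x hx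
        exact mem_sdiff.2 ⟨hTs c hc a hx, disjoint_left.1 (hTd c hc a) hx⟩)
      (fun c hc x hx => hTc c hc a x hx)
    rw [card_sdiff_of_subset hsub] at h2
    have := card_le_card hsub
    omega
  have h3 : ∑ a ∈ A, ∑ c ∈ nonfull d (m * N) B, #(T c a) + sumW m (d * N) A B ≤ sumW m N A B := by
    unfold sumW
    rw [← sum_add_distrib]
    exact sum_le_sum h1
  have h4 : ∀ c ∈ nonfull d (m * N) B, K ≤ d * ∑ a ∈ A, (#(T c a) : ℝ) := by
    intro c hc
    have h5 : (pairs N A : ℝ) ≤ pairs (p c * N) A + d * ∑ a ∈ A, (#(T c a) : ℝ) := by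
      unfold pairs
      push_cast
      rw [mul_sum, ← sum_add_distrib]
      apply sum_le_sum
      intro a _
      exact_mod_cast hTcard c hc a
    have := hK _ (hp c hc) (hp0 c hc) (hpd c hc)
    linarith
  have h6 : (#(nonfull d (m * N) B) : ℝ) * K ≤
      d * ∑ a ∈ A, ∑ c ∈ nonfull d (m * N) B, (#(T c a) : ℝ) := by
    rw [sum_comm, mul_sum, ← nsmul_eq_mul]
    exact card_nsmul_le_sum _ _ _ h4
  have h7 : ∑ a ∈ A, ∑ c ∈ nonfull d (m * N) B, (#(T c a) : ℝ) + sumW m (d * N) A B ≤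
      sumW m N A B := by exact_mod_cast h3
  have h8 := mul_le_mul_of_nonneg_left h7 (show (0 : ℝ) ≤ d by exact_mod_cast hd.le)
  linarith

/-! ### The potential -/

/-- The threshold for the proportion of nonfull classes: above it the loss grows substantially,
below it the number of classes does. -/
noncomputable def etaC (m : ℝ) : ℝ := Real.exp (-(12 * m ^ 3)) / m ^ 2

/-- The weight of the logarithmic term in the potential. -/
noncomputable def betaC (m : ℝ) : ℝ := etaC m / (12 * m ^ 2)

/-- The lower bound for the proportion of congruent pairs along the iteration. -/
noncomputable def kappaC (m : ℝ) : ℝ := Real.exp (-(m / betaC m)) / m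

lemma etaC_pos {m : ℝ} (hm : 2 ≤ m) : 0 < etaC m := by unfold etaC; positivity

lemma betaC_pos {m : ℝ} (hm : 2 ≤ m) : 0 < betaC m := by
  have := etaC_pos hm; unfold betaC; positivity

lemma kappaC_pos {m : ℝ} (hm : 2 ≤ m) : 0 < kappaC m := by unfold kappaC; positivity

lemma etaC_eq {m : ℝ} (hm : 2 ≤ m) : etaC m = 12 * m ^ 2 * betaC m := by
  unfold betaC; field_simp

lemma etaC_le {m : ℝ} (hm : 2 ≤ m) : etaC m ≤ 1 / 9 := by
  unfold etaC
  have h3 : (8 : ℝ) ≤ m ^ 3 := by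
    have := pow_le_pow_left₀ (by norm_num) hm 3
    norm_num at this; exact this
  have h2 : (4 : ℝ) ≤ m ^ 2 := by nlinarith
  have h : Real.exp (-(12 * m ^ 3)) ≤ 1 / 9 := by
    rw [Real.exp_neg, ← one_div]
    apply one_div_le_one_div_of_le (by norm_num)
    have := Real.add_one_le_exp (12 * m ^ 3)
    linarith
  rw [div_le_iff₀ (by positivity)]
  linarith

/-- The potential `G + β (log g + 2 log q)`, where `G` stands for the loss, `g` for the number of
classes and `q` for the proportion of pairs, stays nonnegative when `q` decreases by a factor at
least `3 / 4` and the loss grows in proportion to the relative decrease of `q`. -/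
lemma potential_step_1a {m g g' q q' G G' : ℝ} (hm : 2 ≤ m) (hg : 0 < g) (hgg : g ≤ g')
    (hq : 0 < q) (hq' : 3 / 4 * q ≤ q') (hqq : q' ≤ q) (hG : G + etaC m / m * (1 - q' / q) ≤ G')
    (hI : 0 ≤ G + betaC m * (Real.log g + 2 * Real.log q)) :
    0 ≤ G' + betaC m * (Real.log g' + 2 * Real.log q') := by
  have hb := betaC_pos hm
  have hq0 : 0 < q' := by linarith
  have h1 := Real.log_le_log hg hgg
  have h2 : Real.log q - Real.log q' ≤ 2 * (1 - q' / q) := by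
    rw [← Real.log_div hq.ne' hq0.ne']
    have := Real.log_le_sub_one_of_pos (div_pos hq hq0)
    refine this.trans ?_
    rw [div_sub_one hq0.ne', one_sub_div hq.ne', ← mul_div_assoc, div_le_div_iff₀ hq0 hq]
    nlinarith
  have h3 : 0 ≤ 1 - q' / q := by
    rw [sub_nonneg, div_le_one hq]; exact hqq
  have h4 : etaC m / m = 12 * m * betaC m := by
    rw [etaC_eq hm]; field_simp
  rw [h4] at hG
  have h5 : 4 * betaC m * (1 - q' / q) ≤ 12 * m * betaC m * (1 - q' / q) := by
    apply mul_le_mul_of_nonneg_right _ h3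
    nlinarith
  have h6 := mul_le_mul_of_nonneg_left h1 hb.le
  have h7 := mul_le_mul_of_nonneg_left h2 hb.le
  nlinarith

/-- The potential stays nonnegative when `q` decreases by a factor at least `3 / 4` while `g` grows
by a factor at least `16 / 9 = (4 / 3) ^ 2`. -/
lemma potential_step_1b {m g g' q q' G G' : ℝ} (hm : 2 ≤ m) (hg : 0 < g) (hgg : 16 / 9 * g ≤ g')
    (hq : 0 < q) (hq' : 3 / 4 * q ≤ q') (hG : G ≤ G')
    (hI : 0 ≤ G + betaC m * (Real.log g + 2 * Real.log q)) :
    0 ≤ G' + betaC m * (Real.log g' + 2 * Real.log q') := by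
  have hb := betaC_pos hm
  have h1 := Real.log_le_log (by positivity) hgg
  have h2 := Real.log_le_log (by positivity) hq'
  rw [Real.log_mul (by norm_num) hg.ne'] at h1
  rw [Real.log_mul (by norm_num) hq.ne'] at h2
  have h3 : Real.log (16 / 9) + 2 * Real.log (3 / 4) = 0 := by
    have : (2 : ℝ) * Real.log (3 / 4) = Real.log ((3 / 4) ^ 2) := by
      rw [Real.log_pow]; norm_num
    rw [this, ← Real.log_mul (by norm_num) (by norm_num)]
    norm_num
  have h4 : Real.log g + 2 * Real.log q ≤ Real.log g' + 2 * Real.log q' := by linarith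
  have := mul_le_mul_of_nonneg_left h4 hb.le
  linarith

/-- The potential stays nonnegative when the loss grows by a fixed amount and the product `g * q`
stays at least `1`. -/
lemma potential_step_2a {m g g' q q' G G' : ℝ} (hm : 2 ≤ m) (hg : 0 < g) (hgg : g ≤ g')
    (hq : 0 < q) (hgq' : 1 ≤ g * q') (hgq : g * q ≤ m) (hG : G + etaC m / (4 * m) ≤ G')
    (hI : 0 ≤ G + betaC m * (Real.log g + 2 * Real.log q)) :
    0 ≤ G' + betaC m * (Real.log g' + 2 * Real.log q') := by
  have hb := betaC_pos hm
  have hq0 : 0 < q' := by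
    by_contra h
    push Not at h
    nlinarith
  have h1 := Real.log_le_log hg hgg
  have h2 : 0 ≤ Real.log g + Real.log q' := by
    rw [← Real.log_mul hg.ne' hq0.ne']
    exact Real.log_nonneg hgq'
  have h3 : Real.log g + Real.log q ≤ Real.log m := by
    rw [← Real.log_mul hg.ne' hq.ne']
    exact Real.log_le_log (by positivity) hgq
  have h4 : Real.log m ≤ m := by
    have := Real.log_le_sub_one_of_pos (show 0 < m by linarith)
    linarith
  have h5 : etaC m / (4 * m) = 3 * m * betaC m := by
    rw [etaC_eq hm]; field_simp; norm_num
  rw [h5] at hG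
  have h6 : Real.log g + 2 * Real.log q - 2 * m ≤ Real.log g' + 2 * Real.log q' := by linarith
  have := mul_le_mul_of_nonneg_left h6 hb.le
  nlinarith

/-- A large number of classes together with a small loss contradicts nonnegativity of the
potential. -/
lemma potential_step_2b {m g q G : ℝ} (hm : 2 ≤ m) (hgη : 1 ≤ etaC m * g)
    (hq : 0 < q) (hgq : g * q ≤ m) (hG : G < m * etaC m)
    (hI : 0 ≤ G + betaC m * (Real.log g + 2 * Real.log q)) : False := by
  have hb := betaC_pos hm
  have he := etaC_pos hm
  have hg : 0 < g := by
    by_contra h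
    push Not at h
    nlinarith
  have h1 : Real.log g + Real.log q ≤ Real.log m := by
    rw [← Real.log_mul hg.ne' hq.ne']
    exact Real.log_le_log (by positivity) hgq
  have h2 : 0 ≤ Real.log (etaC m) + Real.log g := by
    rw [← Real.log_mul he.ne' hg.ne']
    exact Real.log_nonneg hgη
  have h3 : Real.log (etaC m) = -(12 * m ^ 3) - 2 * Real.log m := by
    unfold etaC
    rw [Real.log_div (by positivity) (by positivity), Real.log_exp, Real.log_pow]
    norm_num
  have h4 : Real.log g + 2 * Real.log q ≤ -(12 * m ^ 3) := by linarith
  have h5 := mul_le_mul_of_nonneg_left h4 hb.le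
  have h6 := etaC_eq hm
  have h7 : m * etaC m = 12 * m ^ 3 * betaC m := by rw [h6]; ring
  linarith

/-- Nonnegativity of the potential together with `G + g * q < m` bounds `q` from below and `g` from
above, uniformly in the modulus. -/
lemma potential_bound {m g q G : ℝ} (hm : 2 ≤ m) (hg : 0 < g) (hq : 0 < q)
    (hG0 : 0 ≤ G) (hGgq : G + g * q < m)
    (hI : 0 ≤ G + betaC m * (Real.log g + 2 * Real.log q)) :
    kappaC m < q ∧ g ≤ m / kappaC m := by
  have hb := betaC_pos hm
  have hκ := kappaC_pos hm
  have hgq : 0 < g * q := by positivity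
  have h1 : Real.log g + Real.log q ≤ Real.log m := by
    rw [← Real.log_mul hg.ne' hq.ne']
    exact Real.log_le_log (by positivity) (by linarith)
  have h3 : Real.log (kappaC m) = -(m / betaC m) - Real.log m := by
    unfold kappaC
    rw [Real.log_div (by positivity) (by positivity), Real.log_exp]
  have h4 : -(m / betaC m) < Real.log g + 2 * Real.log q := by
    rw [← neg_div, div_lt_iff₀ hb]
    linarith
  have h5 : Real.log (kappaC m) < Real.log q := by linarith
  have h6 := (Real.log_lt_log_iff hκ hq).1 h5
  refine ⟨h6, ?_⟩
  rw [le_div_iff₀ hκ]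
  nlinarith

/-! ### The sharp bound for `B + m · A` -/

/-- The number of classes modulo `m * N` met by `B`, as a real number. -/
noncomputable def gR (m N : ℤ) (B : Finset ℤ) : ℝ := cnt (m * N) B

/-- The proportion of pairs in `A` congruent modulo `N`. -/
noncomputable def qR (N : ℤ) (A : Finset ℤ) : ℝ := pairs N A / (#A : ℝ) ^ 2

/-- The normalised loss in `sumW` when `A` is cut into its classes modulo `N`. -/
noncomputable def lossR (m N : ℤ) (A B : Finset ℤ) : ℝ :=
  ((sumW m 1 A B : ℝ) - sumW m N A B) / (#A : ℝ) ^ 2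

lemma qR_pos {N : ℤ} {A : Finset ℤ} (hA : A.Nonempty) : 0 < qR N A := by
  have h1 := card_le_pairs N A
  have h2 : 0 < #A := hA.card_pos
  have h3 : (0 : ℝ) < pairs N A := by exact_mod_cast h2.trans_le h1
  unfold qR
  positivity

lemma qR_anti {M N : ℤ} (h : N ∣ M) (A : Finset ℤ) : qR M A ≤ qR N A := by
  unfold qR
  gcongr
  exact pairs_anti h A

lemma lossR_mono {m M N : ℤ} (h : N ∣ M) (A B : Finset ℤ) : lossR m N A B ≤ lossR m M A B := by
  unfold lossR
  gcongr
  exact sumW_anti h A B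

lemma lossR_one (m : ℤ) (A B : Finset ℤ) : lossR m 1 A B = 0 := by simp [lossR]

lemma gR_pos {m N : ℤ} {B : Finset ℤ} (hB : B.Nonempty) : 0 < gR m N B := by
  unfold gR; exact_mod_cast cnt_pos hB

lemma gR_mono {m M N : ℤ} (h : N ∣ M) (B : Finset ℤ) : gR m N B ≤ gR m M B := by
  unfold gR; exact_mod_cast cnt_le_of_dvd (mul_dvd_mul_left m h) B

lemma gR_mul_le {m N d : ℤ} (hm : 0 < m) (hN : 0 < N) (hd : 0 < d) (B : Finset ℤ) :
    gR m (d * N) B ≤ d * gR m N B := by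
  unfold gR
  have := cnt_mul_le (mul_pos hm hN) hd B
  rw [show m * (d * N) = d * (m * N) by ring]
  exact_mod_cast this

/-- The Cauchy-Schwarz inequality in normalised form. -/
lemma one_le_mul_qR {N : ℤ} {A : Finset ℤ} (hA : A.Nonempty) {x : ℝ} (hx : (cnt N A : ℝ) ≤ x) :
    1 ≤ x * qR N A := by
  have h1 := sq_card_le_pairs_mul_cnt N A
  have h2 : (0 : ℝ) < #A := by exact_mod_cast hA.card_pos
  have h3 : (#A : ℝ) ^ 2 ≤ pairs N A * cnt N A := by exact_mod_cast h1
  have h4 : (pairs N A : ℝ) * cnt N A ≤ pairs N A * x := by gcongr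
  unfold qR
  rw [← mul_div_assoc, le_div_iff₀ (by positivity)]
  linarith

/-- The smallness of `B + m · A` limits the loss and the number of classes simultaneously. -/
lemma lossR_add_lt {m N : ℤ} (hm : 0 < m) {A B : Finset ℤ} (hA : A.Nonempty) {C : ℕ}
    (hcon : (#(B + dil m A) : ℝ) + C < #B + m * #A) (hg : gR m N B ≤ C) :
    lossR m N A B + gR m N B * qR N A < m := by
  have h1 := sumW_lower (N := N) hm A B
  have h2 : (0 : ℝ) < #A := by exact_mod_cast hA.card_pos
  have h3 : (#A : ℝ) * #B + gR m N B * pairs N A ≤ sumW m N A B + gR m N B * #A := by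
    unfold gR; exact_mod_cast h1
  have h4 : (sumW m 1 A B : ℝ) = #A * #(B + dil m A) := by rw [sumW_one]; push_cast; rfl
  have h5 := mul_lt_mul_of_pos_left hcon h2
  have h6 := mul_le_mul_of_nonneg_right hg h2.le
  unfold lossR qR
  rw [← mul_div_assoc, ← add_div, div_lt_iff₀ (by positivity), h4]
  nlinarith

/-- The growth of the potential: if `B` meets at least as many classes as `A` modulo every divisor
of a power of `m`, and `B + m · A` is too small, then every modulus `N` with nonnegative potential
and few classes has a proper multiple with the same properties. The multiple is `p * N`
if some prime `p ∣ m` keeps at least `3 / 4` of the congruent pairs, and `m * N` otherwise. If many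
classes of `B` are nonfull, the loss grows. If few are, the number of classes grows, which in the
second case contradicts the smallness of `B + m · A`. -/
lemma exists_next_modulus {m : ℤ} (hm : 2 ≤ m) {A B : Finset ℤ} (hA : A.Nonempty)
    (hB : B.Nonempty) (H : ∀ (n : ℕ) (M : ℤ), 0 < M → M ∣ m ^ n → cnt M A ≤ cnt M B) {C : ℕ}
    (hC : (m : ℝ) * (m / kappaC m) ≤ C)
    (hcon : (#(B + dil m A) : ℝ) + C < #B + m * #A) {N : ℤ} (hN : 0 < N)
    (hNm : ∃ n : ℕ, N ∣ m ^ n)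
    (hI : 0 ≤ lossR m N A B + betaC m * (Real.log (gR m N B) + 2 * Real.log (qR N A)))
    (hg : gR m N B ≤ m / kappaC m) :
    ∃ N', N < N' ∧ (∃ n : ℕ, N' ∣ m ^ n) ∧
      0 ≤ lossR m N' A B + betaC m * (Real.log (gR m N' B) + 2 * Real.log (qR N' A)) ∧
      gR m N' B ≤ m / kappaC m := by
  obtain ⟨n, hn⟩ := hNm
  have hm0 : 0 < m := by omega
  have hmR : (2 : ℝ) ≤ m := by exact_mod_cast hm
  have hκ := kappaC_pos hmR
  have hη := etaC_pos hmR
  have hη9 := etaC_le hmR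
  have hgpos : 0 < gR m N B := gR_pos hB
  have hqpos : 0 < qR N A := qR_pos hA
  have hA0 : (0 : ℝ) < #A := by exact_mod_cast hA.card_pos
  have hC' : ∀ d : ℤ, 0 < d → d ≤ m → gR m (d * N) B ≤ C := by
    intro d hd hdm
    have h1 : (d : ℝ) ≤ m := by exact_mod_cast hdm
    have h2 : (0 : ℝ) < d := by exact_mod_cast hd
    calc gR m (d * N) B ≤ d * gR m N B := gR_mul_le hm0 hN hd B
      _ ≤ m * (m / kappaC m) := by gcongr
      _ ≤ C := hC
  have hgC : gR m N B ≤ C := by simpa using hC' 1 one_pos (by omega)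
  have hloss0 : ∀ M, 0 ≤ lossR m M A B := by
    intro M; rw [← lossR_one m A B]; exact lossR_mono (one_dvd _) _ _
  have hfin : ∀ d : ℤ, 2 ≤ d → d ∣ m →
      0 ≤ lossR m (d * N) A B +
        betaC m * (Real.log (gR m (d * N) B) + 2 * Real.log (qR (d * N) A)) →
      ∃ N', N < N' ∧ (∃ n : ℕ, N' ∣ m ^ n) ∧
        0 ≤ lossR m N' A B + betaC m * (Real.log (gR m N' B) + 2 * Real.log (qR N' A)) ∧
        gR m N' B ≤ m / kappaC m := by
    intro d hd hdm hI'
    refine ⟨d * N, by nlinarith, ⟨n + 1, ?_⟩, hI', ?_⟩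
    · rw [pow_succ, mul_comm]; exact mul_dvd_mul hn hdm
    · exact (potential_bound hmR (gR_pos hB) (qR_pos hA) (hloss0 _)
        (lossR_add_lt hm0 hA hcon (hC' d (by omega) (Int.le_of_dvd hm0 hdm))) hI').2
  have hmN : m * N ∣ m ^ (n + 1) := by rw [pow_succ, mul_comm]; exact mul_dvd_mul hn dvd_rfl
  have hcntAB : cnt (m * N) A ≤ cnt (m * N) B := H (n + 1) _ (by positivity) hmN
  have hgq1 : 1 ≤ gR m N B * qR N A := by
    apply one_le_mul_qR hA
    unfold gR
    exact_mod_cast (cnt_le_of_dvd (Dvd.intro_left m rfl) A).trans hcntAB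
  have hgqm1 : 1 ≤ gR m N B * qR (m * N) A := by
    apply one_le_mul_qR hA
    unfold gR
    exact_mod_cast hcntAB
  have hlt := lossR_add_lt hm0 hA hcon hgC
  have hgqm : gR m N B * qR N A ≤ m := by linarith [hloss0 N]
  have hcnt : ∀ d : ℤ, 0 < d →
      d * (gR m N B - #(nonfull d (m * N) B)) ≤ gR m (d * N) B := by
    intro d hd
    have := cnt_step hd (mul_pos hm0 hN) B
    unfold gR
    rw [show m * (d * N) = d * (m * N) by ring]
    exact_mod_cast this
  -- `sumW_step` in normalised form.
  have hstep : ∀ d : ℤ, 0 < d → ∀ K : ℝ,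
      (∀ p : ℤ, Prime p → 0 < p → p ∣ d → qR (p * N) A + K ≤ qR N A) →
      lossR m N A B + #(nonfull d (m * N) B) * K / d ≤ lossR m (d * N) A B := by
    intro d hd K hK
    have hdR : (0 : ℝ) < d := by exact_mod_cast hd
    have h1 := sumW_step hd hm0 hN A B (K * (#A : ℝ) ^ 2) (by
      intro p hp hp0 hpd
      have h2 := hK p hp hp0 hpd
      unfold qR at h2
      have h3 := mul_le_mul_of_nonneg_right h2 (show (0 : ℝ) ≤ (#A : ℝ) ^ 2 by positivity)
      rwa [add_mul, div_mul_cancel₀ _ (by positivity), div_mul_cancel₀ _ (by positivity)] at h3)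
    unfold lossR
    rw [div_add_div _ _ (by positivity) (by positivity), div_le_div_iff₀ (by positivity)
      (by positivity)]
    have h4 := mul_le_mul_of_nonneg_right h1 (show (0 : ℝ) ≤ (#A : ℝ) ^ 2 by positivity)
    nlinarith
  by_cases hcase : ∃ p : ℤ, Prime p ∧ 0 < p ∧ p ∣ m ∧ 3 / 4 * qR N A ≤ qR (p * N) A
  · obtain ⟨p, hp, hp0, hpm, hpq⟩ := hcase
    have hp2 : 2 ≤ p := by
      have : p ≠ 1 := fun h => hp.not_isUnit (h ▸ isUnit_one)
      omega
    have hp2R : (2 : ℝ) ≤ p := by exact_mod_cast hp2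
    have hpmR : (p : ℝ) ≤ m := by exact_mod_cast Int.le_of_dvd hm0 hpm
    apply hfin p hp2 hpm
    have hdiv : N ∣ p * N := Dvd.intro_left p rfl
    have hqq := qR_anti hdiv A
    by_cases hν : etaC m * gR m N B ≤ #(nonfull p (m * N) B)
    · apply potential_step_1a hmR hgpos (gR_mono hdiv B) hqpos hpq hqq _ hI
      have h1 := hstep p hp0 (qR N A - qR (p * N) A) (by
        intro p' hp' hp'0 hpp
        have : p' = p := by
          have h2 := Int.associated_iff_natAbs.1 (hp'.associated_of_dvd hp hpp)
          omega
        rw [this]; linarith)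
      refine le_trans ?_ h1
      have h2 : etaC m * (1 - qR (p * N) A / qR N A) ≤
          #(nonfull p (m * N) B) * (qR N A - qR (p * N) A) := by
        have h3 : 0 ≤ 1 - qR (p * N) A / qR N A := by
          rw [sub_nonneg, div_le_one hqpos]; exact hqq
        have h4 : qR N A - qR (p * N) A = qR N A * (1 - qR (p * N) A / qR N A) := by
          field_simp
        rw [h4, ← mul_assoc]
        apply mul_le_mul_of_nonneg_right _ h3
        nlinarith
      have h5 : etaC m / m * (1 - qR (p * N) A / qR N A) ≤
          #(nonfull p (m * N) B) * (qR N A - qR (p * N) A) / p := by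
        rw [div_mul_eq_mul_div]
        apply div_le_div₀ _ h2 (by linarith) hpmR
        exact mul_nonneg (by positivity) (by linarith)
      linarith
    · push Not at hν
      apply potential_step_1b hmR hgpos _ hqpos hpq (lossR_mono hdiv A B) hI
      have h1 := hcnt p hp0
      have h2 : etaC m * gR m N B ≤ 1 / 9 * gR m N B :=
        mul_le_mul_of_nonneg_right hη9 hgpos.le
      have h3 : 2 * (gR m N B - #(nonfull p (m * N) B)) ≤
          p * (gR m N B - #(nonfull p (m * N) B)) :=
        mul_le_mul_of_nonneg_right hp2R (by linarith)
      linarith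
  · push Not at hcase
    have hdiv : N ∣ m * N := Dvd.intro_left m rfl
    by_cases hν : etaC m * gR m N B ≤ #(nonfull m (m * N) B)
    · apply hfin m hm dvd_rfl
      apply potential_step_2a hmR hgpos (gR_mono hdiv B) hqpos hgqm1 hgqm _ hI
      have h1 := hstep m hm0 (qR N A / 4) (by
        intro p hp hp0 hpm
        linarith [hcase p hp hp0 hpm])
      refine le_trans ?_ h1
      have h2 : etaC m ≤ #(nonfull m (m * N) B) * qR N A := by nlinarith
      have h5 : etaC m / (4 * m) ≤ #(nonfull m (m * N) B) * (qR N A / 4) / m := by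
        rw [div_le_div_iff₀ (by positivity) (by positivity)]
        nlinarith
      linarith
    · exfalso
      push Not at hν
      have h1 := hcnt m hm0
      have h2 := lossR_add_lt hm0 hA hcon (hC' m hm0 le_rfl)
      have h3 := lossR_mono (m := m) hdiv A B
      have h4 := hloss0 N
      have hq' : 0 < qR (m * N) A := qR_pos hA
      have h5 : m * (gR m N B - #(nonfull m (m * N) B)) * qR (m * N) A ≤
          gR m (m * N) B * qR (m * N) A := mul_le_mul_of_nonneg_right h1 hq'.le
      rcases Nat.eq_zero_or_pos #(nonfull m (m * N) B) with h0 | h0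
      · rw [h0] at h5
        push_cast at h5
        nlinarith
      · have h6 : (1 : ℝ) ≤ #(nonfull m (m * N) B) := by exact_mod_cast h0
        apply potential_step_2b hmR (by linarith) hqpos hgqm _ hI
        have h7 : (1 - etaC m) * gR m N B ≤ gR m N B - #(nonfull m (m * N) B) := by linarith
        have h8 : (1 - etaC m) * 1 ≤ (1 - etaC m) * (gR m N B * qR (m * N) A) :=
          mul_le_mul_of_nonneg_left hgqm1 (by linarith)
        have h9 := mul_le_mul_of_nonneg_right h7 hq'.le
        have h10 : m * ((1 - etaC m) * 1) ≤
            m * ((gR m N B - #(nonfull m (m * N) B)) * qR (m * N) A) := by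
          apply mul_le_mul_of_nonneg_left _ (by linarith)
          linarith
        linarith

/-- The sharp sumset bound `|B + m · A| ≥ |B| + m |A| - O_m(1)`, for sets `B` meeting at least as
many residue classes as `A` modulo every divisor of a power of `m`. -/
lemma exists_card_add_dil_pos {m : ℤ} (hm : 0 < m) : ∃ C : ℕ, ∀ A B : Finset ℤ, A.Nonempty →
    B.Nonempty → (∀ (n : ℕ) (M : ℤ), 0 < M → M ∣ m ^ n → cnt M A ≤ cnt M B) →
    (#B : ℤ) + m * #A ≤ #(B + dil m A) + C := by
  rcases (show m = 1 ∨ 2 ≤ m by omega) with rfl | hm2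
  · refine ⟨1, fun A B hA hB _ => ?_⟩
    have := card_add_ge hB (dil_nonempty (t := 1) hA)
    rw [card_dil one_ne_zero] at this
    push_cast
    omega
  have hmR : (2 : ℝ) ≤ m := by exact_mod_cast hm2
  have hκ := kappaC_pos hmR
  obtain ⟨C, hC⟩ := exists_nat_ge ((m : ℝ) * (m / kappaC m))
  refine ⟨C, fun A B hA hB H => ?_⟩
  by_contra hcon
  push Not at hcon
  have hconR : (#(B + dil m A) : ℝ) + C < #B + m * #A := by exact_mod_cast hcon
  have hA0 : (0 : ℝ) < #A := by exact_mod_cast hA.card_pos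
  have hlarge : 1 / kappaC m < #A := by
    have h1 : (#B : ℝ) ≤ #(B + dil m A) := by
      exact_mod_cast card_le_card_add (dil_nonempty hA)
    have h2 : (m : ℝ) * (m / kappaC m) < m * #A := by linarith
    have h3 := lt_of_mul_lt_mul_left h2 (by linarith)
    have h4 : 1 / kappaC m ≤ m / kappaC m := by gcongr; linarith
    linarith
  have hiter : ∀ k : ℕ, ∃ N : ℤ, (k : ℤ) < N ∧ (∃ n : ℕ, N ∣ m ^ n) ∧
      0 ≤ lossR m N A B + betaC m * (Real.log (gR m N B) + 2 * Real.log (qR N A)) ∧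
      gR m N B ≤ m / kappaC m := by
    intro k
    induction k with
    | zero =>
      refine ⟨1, by simp, ⟨0, by simp⟩, ?_, ?_⟩
      · have h1 : (1 : ℝ) ≤ gR m 1 B := by
          unfold gR; exact_mod_cast cnt_pos hB
        have h2 : qR 1 A = 1 := by
          unfold qR; rw [pairs_one]; push_cast; field_simp
        rw [lossR_one, h2, Real.log_one]
        have := Real.log_nonneg h1
        have := betaC_pos hmR
        simp only [mul_zero, add_zero, zero_add]
        positivity
      · have h1 : (cnt (m * 1) B : ℤ) ≤ m * cnt 1 B := cnt_mul_le one_pos hm B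
        have h2 : cnt 1 B ≤ 1 := by
          unfold cnt
          apply card_le_one.2
          intro x hx y hy
          obtain ⟨x', _, rfl⟩ := mem_image.1 hx
          obtain ⟨y', _, rfl⟩ := mem_image.1 hy
          simp
        have h3 : gR m 1 B ≤ m := by
          unfold gR
          have : (cnt (m * 1) B : ℤ) ≤ m := by nlinarith
          exact_mod_cast this
        have h4 : kappaC m ≤ 1 := by
          unfold kappaC
          rw [div_le_one (by linarith)]
          have h5 : Real.exp (-(m / betaC m)) ≤ 1 := by
            apply Real.exp_le_one_iff.2
            have := betaC_pos hmR
            have : 0 ≤ (m : ℝ) / betaC m := by positivity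
            linarith
          linarith
        refine h3.trans ?_
        rw [le_div_iff₀ hκ]
        nlinarith
    | succ k ih =>
      obtain ⟨N, hN, h1, h2, h3⟩ := ih
      obtain ⟨N', hN', h⟩ :=
        exists_next_modulus hm2 hA hB H hC hconR (by omega) h1 h2 h3
      exact ⟨N', by push_cast; omega, h⟩
  -- A modulus exceeding the diameter of `A` separates all its elements.
  obtain ⟨N, hN, -, hI, hg⟩ := hiter (A.max' hA - A.min' hA).toNat
  have hgC : gR m N B ≤ C := by
    refine le_trans ?_ hC
    have : 0 ≤ (m : ℝ) / kappaC m := by positivity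
    nlinarith
  have hq := (potential_bound hmR (gR_pos hB) (qR_pos hA)
    (by rw [← lossR_one m A B]; exact lossR_mono (one_dvd _) _ _)
    (lossR_add_lt hm hA hconR hgC) hI).1
  have hpairs : pairs N A = #A := by
    unfold pairs
    calc ∑ a ∈ A, #(cls N a A) = ∑ a ∈ A, 1 := by
          apply sum_congr rfl
          intro a ha
          apply card_eq_one.2
          refine ⟨a, ?_⟩
          ext x
          rw [mem_cls, mem_singleton]
          constructor
          · rintro ⟨hx, hdvd⟩
            have h1 := A.le_max' x hx
            have h2 := A.min'_le x hx
            have h3 := A.le_max' a ha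
            have h4 := A.min'_le a ha
            have h5 : x - a = 0 := by
              apply Int.eq_zero_of_abs_lt_dvd hdvd
              rw [abs_lt]
              constructor <;> omega
            omega
          · rintro rfl
            exact ⟨ha, by simp⟩
      _ = #A := by simp
  unfold qR at hq
  rw [hpairs, sq, div_mul_cancel_left₀ hA0.ne', ← one_div, lt_div_iff₀ hA0] at hq
  rw [div_lt_iff₀ hκ] at hlarge
  linarith

lemma card_image_le_card_image {α β γ : Type*} [DecidableEq β] [DecidableEq γ] {s : Finset α}
    {f : α → β} {g : α → γ} (h : ∀ x ∈ s, ∀ y ∈ s, g x = g y → f x = f y) :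
    #(s.image f) ≤ #(s.image g) := by
  rcases s.eq_empty_or_nonempty with rfl | ⟨x₀, _⟩
  · simp
  have : Nonempty α := ⟨x₀⟩
  have h1 : ∀ b ∈ s.image f, ∃ x ∈ s, f x = b := fun b hb => mem_image.1 hb
  choose! r hr hrb using h1
  apply card_le_card_of_injOn (fun b => g (r b))
  · intro b hb
    exact mem_image_of_mem _ (hr b hb)
  · intro b hb b' hb' heq
    rw [← hrb b hb, ← hrb b' hb']
    exact h _ (hr b hb) _ (hr b' hb') heq

lemma cnt_dil {t M : ℤ} (h : IsCoprime t M) (A : Finset ℤ) : cnt M (dil t A) = cnt M A := by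
  unfold cnt dil
  rw [image_image]
  apply le_antisymm
  · apply card_image_le_card_image
    intro x _ y _ hxy
    simp only [Function.comp]
    rw [emod_eq_iff] at hxy ⊢
    rw [← mul_sub]
    exact hxy.mul_left t
  · apply card_image_le_card_image
    intro x _ y _ hxy
    simp only [Function.comp] at hxy
    rw [emod_eq_iff] at hxy ⊢
    rw [← mul_sub] at hxy
    exact h.symm.dvd_of_dvd_mul_left hxy

lemma dil_dil (q t : ℤ) (A : Finset ℤ) : dil q (dil t A) = dil (q * t) A := by
  unfold dil
  rw [image_image]
  simp only [Function.comp_def, mul_assoc]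

/-- The sharp bound for `B + μ · A`, with a dilation factor `μ` of either sign. -/
lemma exists_card_add_dil {μ : ℤ} (hμ : μ ≠ 0) : ∃ C : ℕ, ∀ A B : Finset ℤ, A.Nonempty →
    B.Nonempty → (∀ (n : ℕ) (M : ℤ), 0 < M → M ∣ μ ^ n → cnt M A ≤ cnt M B) →
    (#B : ℤ) + |μ| * #A ≤ #(B + dil μ A) + C := by
  obtain ⟨C, hC⟩ := exists_card_add_dil_pos (abs_pos.2 hμ)
  refine ⟨C, fun A B hA hB H => ?_⟩
  rcases abs_choice μ with h | h
  · have := hC A B hA hB (fun n M hM hdvd => H n M hM (by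
      rwa [← abs_pow, dvd_abs] at hdvd))
    rwa [h] at this ⊢
  · have := hC (dil (-1) A) B (dil_nonempty hA) hB (fun n M hM hdvd => by
      rw [cnt_dil isCoprime_one_left.neg_left]
      exact H n M hM (by rwa [← abs_pow, dvd_abs] at hdvd))
    rwa [card_dil (by norm_num), dil_dil, h, neg_mul_neg, mul_one, ← h] at this

/-! ### Residue classes met by sums of coprime dilates -/

/-- The sum of dilates `l₁ · A + l₂ · A + ⋯` over the entries of the list `l`. -/
def sumDil (l : List ℤ) (A : Finset ℤ) : Finset ℤ := (l.map fun t => dil t A).sum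

/-- Coprimality of the entries of a list of integers. -/
def Cop (l : List ℤ) : Prop := ∀ d : ℤ, (∀ x ∈ l, d ∣ x) → IsUnit d

@[simp] lemma sumDil_nil (A : Finset ℤ) : sumDil [] A = 0 := rfl

@[simp] lemma sumDil_cons (t : ℤ) (l : List ℤ) (A : Finset ℤ) :
    sumDil (t :: l) A = dil t A + sumDil l A := by simp [sumDil]

lemma sumDil_nonempty (l : List ℤ) {A : Finset ℤ} (hA : A.Nonempty) : (sumDil l A).Nonempty := by
  induction l with
  | nil => simp
  | cons t l ih => rw [sumDil_cons]; exact (dil_nonempty hA).add ih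

lemma sumDil_mono (l : List ℤ) {A B : Finset ℤ} (h : A ⊆ B) : sumDil l A ⊆ sumDil l B := by
  induction l with
  | nil => simp
  | cons t l ih => rw [sumDil_cons, sumDil_cons]; exact add_subset_add (dil_mono h) ih

lemma dil_add (q : ℤ) (A B : Finset ℤ) : dil q (A + B) = dil q A + dil q B :=
  image_add (AddMonoidHom.mulLeft q)

lemma sumDil_map (q : ℤ) (l : List ℤ) (A : Finset ℤ) :
    sumDil (l.map (q * ·)) A = dil q (sumDil l A) := by
  induction l with
  | nil => ext x; simp [dil]
  | cons t l ih => rw [List.map_cons, sumDil_cons, sumDil_cons, ih, dil_add, dil_dil]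

lemma dvd_of_mem_sumDil {N a : ℤ} {A : Finset ℤ} (h : ∀ x ∈ A, N ∣ x - a) (l : List ℤ) :
    ∀ y ∈ sumDil l A, N ∣ y - l.sum * a := by
  induction l with
  | nil => simp
  | cons t l ih =>
    intro y hy
    rw [sumDil_cons] at hy
    obtain ⟨u, hu, v, hv, rfl⟩ := mem_add.1 hy
    obtain ⟨x, hx, rfl⟩ := mem_dil.1 hu
    rw [List.sum_cons, show t * x + v - (t + l.sum) * a = t * (x - a) + (v - l.sum * a) by ring]
    exact dvd_add ((h x hx).mul_left t) (ih v hv)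

/-- Division of a list of nonzero integers by its greatest common divisor. -/
lemma exists_extract_gcd {l : List ℤ} (hne : l ≠ []) (h0 : ∀ x ∈ l, x ≠ 0) :
    ∃ (q : ℤ) (l' : List ℤ), 0 < q ∧ l = l'.map (q * ·) ∧ l' ≠ [] ∧ l'.length = l.length ∧
      Cop l' ∧ ∀ x ∈ l', x ≠ 0 := by
  obtain ⟨x₀, hx₀⟩ := List.exists_mem_of_ne_nil l hne
  obtain ⟨g, hg, hg1⟩ := Finset.extract_gcd (s := l.toFinset) (id : ℤ → ℤ)
    ⟨x₀, List.mem_toFinset.2 hx₀⟩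
  set q := l.toFinset.gcd (id : ℤ → ℤ)
  have hg' : ∀ b ∈ l, b = q * g b := fun b hb => hg b (List.mem_toFinset.2 hb)
  have hq0 : q ≠ 0 := by
    intro h
    apply h0 x₀ hx₀
    rw [hg' x₀ hx₀, h, zero_mul]
  have hqn : 0 ≤ q := Int.nonneg_of_normalize_eq_self Finset.normalize_gcd
  refine ⟨q, l.map g, by omega, ?_, by simpa using hne, by simp, ?_, ?_⟩
  · rw [List.map_map]
    conv_lhs => rw [← List.map_id l]
    apply List.map_congr_left
    intro b hb
    exact hg' b hb
  · intro d hd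
    apply isUnit_of_dvd_one
    rw [← hg1]
    apply Finset.dvd_gcd
    intro b hb
    exact hd _ (List.mem_map_of_mem (List.mem_toFinset.1 hb))
  · intro x hx
    obtain ⟨b, hb, rfl⟩ := List.mem_map.1 hx
    intro h
    apply h0 b hb
    rw [hg' b hb, h, mul_zero]

lemma Cop.isCoprime {a q : ℤ} {l : List ℤ} (h : Cop (a :: l.map (q * ·))) : IsCoprime a q := by
  rw [Int.isCoprime_iff_gcd_eq_one]
  have h1 := h (Int.gcd a q) (by
    intro x hx
    rcases List.mem_cons.1 hx with rfl | hx
    · exact Int.gcd_dvd_left _ _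
    · obtain ⟨y, _, rfl⟩ := List.mem_map.1 hx
      exact (Int.gcd_dvd_right _ _).mul_right y)
  simpa [Int.isUnit_iff_natAbs_eq] using h1

/-- Splitting of `M` into its part coprime to `a` and its part composed of primes dividing `a`. -/
lemma exists_coprime_split {a : ℤ} (n : ℕ) : ∀ M : ℤ, 0 < M → M.toNat ≤ n →
    ∃ M₁ M₂ : ℤ, 0 < M₁ ∧ 0 < M₂ ∧ M = M₁ * M₂ ∧ IsCoprime M₁ a ∧ ∃ k : ℕ, M₂ ∣ a ^ k := by
  induction n with
  | zero => intro M hM h; omega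
  | succ n ih =>
    intro M hM hn
    by_cases hg : Int.gcd M a = 1
    · exact ⟨M, 1, hM, one_pos, by simp, Int.isCoprime_iff_gcd_eq_one.2 hg, 0, by simp⟩
    · obtain ⟨M', hM'⟩ := Int.gcd_dvd_left M a
      have hg0 : 0 < Int.gcd M a := Int.gcd_pos_of_ne_zero_left _ hM.ne'
      have hg2 : (2 : ℤ) ≤ Int.gcd M a := by omega
      set g : ℤ := ((Int.gcd M a : ℕ) : ℤ)
      have hM'0 : 0 < M' := by
        by_contra h
        push Not at h
        nlinarith
      obtain ⟨M₁, M₂, h1, h2, h3, h4, k, h5⟩ := ih M' hM'0 (by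
        have : M' < M := by nlinarith
        omega)
      refine ⟨M₁, g * M₂, h1, by positivity, by rw [hM', h3]; ring, h4, k + 1, ?_⟩
      rw [pow_succ, mul_comm g]
      exact mul_dvd_mul h5 (Int.gcd_dvd_right _ _)

/-- A sum of coprime dilates of `A` meets at least as many residue classes as `A`. Write the sum as
`a · A + q · Y` and the modulus as `M₁ * M₂` with `M₁` coprime to `a` and `M₂` coprime to `q`: the
summand `a · A` realises all classes of `A` modulo `M₁`, and, with that class fixed, `q · Y` for `Y`
built from the most populated class of `A` modulo `M₁` realises enough classes modulo `M₂`. -/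
lemma cnt_le_cnt_sumDil (n : ℕ) : ∀ l : List ℤ, l.length = n → l ≠ [] → (∀ x ∈ l, x ≠ 0) → Cop l →
    ∀ M : ℤ, 0 < M → ∀ A : Finset ℤ, cnt M A ≤ cnt M (sumDil l A) := by
  induction n with
  | zero => intro l hl hne; exact absurd (List.length_eq_zero_iff.1 hl) hne
  | succ n ih =>
    intro l hl _ h0 hcop M hM A
    obtain ⟨a, t, rfl⟩ := List.exists_cons_of_length_eq_add_one hl
    by_cases ht : t = []
    · subst ht
      have ha : IsUnit a := hcop a (by simp)
      have ha' : IsCoprime a M := by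
        rcases Int.isUnit_iff.1 ha with rfl | rfl
        · exact isCoprime_one_left
        · exact isCoprime_one_left.neg_left
      rw [sumDil_cons, sumDil_nil, add_zero, cnt_dil ha']
    obtain ⟨q, t', hq, rfl, ht', hlen, hcop', h0'⟩ :=
      exists_extract_gcd ht (fun x hx => h0 x (List.mem_cons_of_mem _ hx))
    have haq := hcop.isCoprime
    rcases A.eq_empty_or_nonempty with rfl | hA
    · simp [cnt]
    obtain ⟨M₁, M₂, hM₁, hM₂, rfl, hcop₁, k, hk⟩ := exists_coprime_split (a := a) _ M hM le_rfl
    have hM12 : IsCoprime M₁ M₂ := IsCoprime.of_isCoprime_of_dvd_right hcop₁.pow_right hk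
    have hM2q : IsCoprime M₂ q := IsCoprime.of_isCoprime_of_dvd_left haq.pow_left hk
    obtain ⟨v, hv, hvmax⟩ := exists_max_image A (fun v => cnt M₂ (cls M₁ v A)) hA
    have h1 : cnt (M₁ * M₂) A ≤ cnt M₂ (cls M₁ v A) * cnt M₁ A := by
      have h2 : A.image (· % M₁) = (A.image (· % (M₁ * M₂))).image (· % M₁) := by
        rw [image_image]
        apply image_congr
        intro x _
        simp
      unfold cnt at *
      rw [h2]
      apply card_le_mul_card_image
      intro r hr
      rw [← h2] at hr
      obtain ⟨b, hb, rfl⟩ := mem_image.1 hr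
      refine le_trans (le_trans (card_le_card ?_) (card_image_le_card_image
        (s := cls M₁ b A) (f := (· % (M₁ * M₂))) ?_)) (hvmax b hb)
      · intro x hx
        obtain ⟨hx1, hx2⟩ := mem_filter.1 hx
        obtain ⟨y, hy, rfl⟩ := mem_image.1 hx1
        refine mem_image.2 ⟨y, mem_cls.2 ⟨hy, ?_⟩, rfl⟩
        rw [← emod_eq_iff]
        simpa using hx2
      · intro x hx y hy hxy
        rw [emod_eq_iff] at *
        exact hM12.mul_dvd
          (dvd_sub_tr (mem_cls.1 hx).2 (dvd_sub_swap (mem_cls.1 hy).2)) hxy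
    have h2 := ih t' (by simp only [List.length_cons, List.length_map] at hl; omega) ht'
      h0' hcop' M₂ hM₂ (cls M₁ v A)
    set Y := sumDil t' (cls M₁ v A) with hY
    -- Representatives of the classes of `A` modulo `M₁`.
    obtain ⟨R, hRA, hRi⟩ : ∃ R ⊆ A, Set.InjOn (· % M₁) (R : Set ℤ) ∧
        R.image (· % M₁) = A.image (· % M₁) := by
      have h3 : ∀ b ∈ A.image (· % M₁), ∃ x ∈ A, x % M₁ = b := fun b hb => mem_image.1 hb
      choose! r hr hrb using h3
      refine ⟨(A.image (· % M₁)).image r, ?_, ?_, ?_⟩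
      · intro x hx
        obtain ⟨b, hb, rfl⟩ := mem_image.1 hx
        exact hr b hb
      · intro x hx y hy hxy
        obtain ⟨b, hb, rfl⟩ := mem_image.1 (mem_coe.1 hx)
        obtain ⟨b', hb', rfl⟩ := mem_image.1 (mem_coe.1 hy)
        simp only at hxy
        rw [hrb b hb, hrb b' hb'] at hxy
        rw [hxy]
      · rw [image_image]
        conv_rhs => rw [← image_id (s := A.image (· % M₁))]
        apply image_congr
        intro b hb
        exact hrb b hb
    have h3 : cnt M₁ A * cnt M₂ Y ≤ cnt (M₁ * M₂) (sumDil (a :: t'.map (q * ·)) A) := by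
      calc cnt M₁ A * cnt M₂ Y
          = #((R.image (· % M₁)) ×ˢ (Y.image (· % M₂))) := by
            rw [hRi.2, card_product]; rfl
        _ = #((R ×ˢ Y).image (Prod.map (· % M₁) (· % M₂))) := by
            rw [Finset.prodMap_image_product]
        _ ≤ #((R ×ˢ Y).image (fun p => (a * p.1 + q * p.2) % (M₁ * M₂))) := by
            apply card_image_le_card_image
            rintro ⟨x, y⟩ hxy ⟨x', y'⟩ hxy' heq
            simp only [mem_product] at hxy hxy' heq
            rw [emod_eq_iff] at heq
            have hY1 : M₁ ∣ y - y' := by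
              have hc := dvd_of_mem_sumDil (N := M₁) (a := v) (A := cls M₁ v A)
                (fun z hz => (mem_cls.1 hz).2) t'
              exact dvd_sub_tr (hc y hxy.2) (dvd_sub_swap (hc y' hxy'.2))
            have hx1 : M₁ ∣ x - x' := by
              apply hcop₁.dvd_of_dvd_mul_left
              have h4 := dvd_sub ((Dvd.intro _ rfl : M₁ ∣ M₁ * M₂).trans heq) (hY1.mul_left q)
              rwa [show a * x + q * y - (a * x' + q * y') - q * (y - y') = a * (x - x') by ring]
                at h4
            have hxx : x = x' := hRi.1 hxy.1 hxy'.1 (emod_eq_iff.2 hx1)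
            subst hxx
            have hy2 : M₂ ∣ y - y' := by
              apply hM2q.dvd_of_dvd_mul_left
              have h4 := (Dvd.intro_left _ rfl : M₂ ∣ M₁ * M₂).trans heq
              rwa [show a * x + q * y - (a * x + q * y') = q * (y - y') by ring] at h4
            simp only [Prod.map_apply]
            rw [emod_eq_iff.2 hy2]
        _ ≤ _ := by
            apply card_le_card
            intro z hz
            obtain ⟨⟨x, y⟩, hxy, rfl⟩ := mem_image.1 hz
            rw [mem_product] at hxy
            refine mem_image.2 ⟨a * x + q * y, ?_, rfl⟩
            rw [sumDil_cons, sumDil_map]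
            exact add_mem_add (mem_dil.2 ⟨x, hRA hxy.1, rfl⟩)
              (mem_dil.2 ⟨y, sumDil_mono t' (cls_subset _ _ _) hxy.2, rfl⟩)
    calc cnt (M₁ * M₂) A ≤ cnt M₂ (cls M₁ v A) * cnt M₁ A := h1
      _ ≤ cnt M₂ Y * cnt M₁ A := Nat.mul_le_mul_right _ h2
      _ = cnt M₁ A * cnt M₂ Y := mul_comm _ _
      _ ≤ _ := h3

/-! ### Fully distributed sets and the gain for the others -/

/-- The sumset `a · A + q · (t₁ · A + t₂ · A + ⋯)`. -/
def dilX (a q : ℤ) (t : List ℤ) (A : Finset ℤ) : Finset ℤ := dil a A + dil q (sumDil t A)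

lemma sum_mul_mem_sumDil (t : List ℤ) {A : Finset ℤ} {r : ℤ} (hr : r ∈ A) :
    t.sum * r ∈ sumDil t A := by
  induction t with
  | nil => simp
  | cons τ t ih =>
    rw [sumDil_cons, List.sum_cons, add_mul]
    exact add_mem_add (mem_dil.2 ⟨r, hr, rfl⟩) ih

lemma mem_sumDil_of_mem {t : List ℤ} {τ : ℤ} (hτ : τ ∈ t) {A : Finset ℤ} {r y : ℤ} (hr : r ∈ A)
    (hy : y ∈ A) : τ * y + (t.sum - τ) * r ∈ sumDil t A := by
  induction t with
  | nil => simp at hτ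
  | cons σ t ih =>
    rw [sumDil_cons, List.sum_cons]
    rcases List.mem_cons.1 hτ with rfl | h
    · rw [add_sub_cancel_left]
      exact add_mem_add (mem_dil.2 ⟨y, hy, rfl⟩) (sum_mul_mem_sumDil t hr)
    · rw [show τ * y + (σ + t.sum - τ) * r = σ * r + (τ * y + (t.sum - τ) * r) by ring]
      exact add_mem_add (mem_dil.2 ⟨r, hr, rfl⟩) (ih h)

lemma card_le_card_sumDil {t : List ℤ} (ht : t ≠ []) (h0 : ∀ x ∈ t, x ≠ 0) (A : Finset ℤ) :
    #A ≤ #(sumDil t A) := by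
  obtain ⟨τ, hτ⟩ := List.exists_mem_of_ne_nil t ht
  rcases A.eq_empty_or_nonempty with rfl | ⟨r, hr⟩
  · simp
  apply card_le_card_of_injOn (fun y => τ * y + (t.sum - τ) * r)
  · intro y hy
    exact mem_sumDil_of_mem hτ hr hy
  · intro y _ y' _ h
    exact mul_left_cancel₀ (h0 τ hτ) (add_right_cancel h)

/-- If `A` lies in a single class modulo `N`, then the pieces `a · A_c + q · (⋯)`, where `A_c` runs
over the classes of `A` modulo `q * N`, are disjoint subsets of `dilX a q t A`. -/
lemma sum_card_pieces_le {a q N : ℤ} (haq : IsCoprime a q) (hN : 0 < N) (t : List ℤ)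
    {A : Finset ℤ} (hA : ∀ x ∈ A, ∀ y ∈ A, N ∣ x - y) :
    ∑ c ∈ A.image (· % (q * N)), #(dil a (cls (q * N) c A) + dil q (sumDil t A)) ≤
      #(dilX a q t A) := by
  rcases A.eq_empty_or_nonempty with rfl | ⟨a₀, ha₀⟩
  · simp
  apply sum_card_le_of_classes (M := q * N) _ _ (fun c => a * c + q * (t.sum * a₀))
  · intro c hc c' hc' h
    apply residues_inj hc hc'
    rw [add_sub_add_right_eq_sub, ← mul_sub] at h
    obtain ⟨b, hb, hbc⟩ := exists_mem_of_residue hc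
    obtain ⟨b', hb', hbc'⟩ := exists_mem_of_residue hc'
    have hNq : N ∣ q * N := Dvd.intro_left q rfl
    obtain ⟨s, hs⟩ := dvd_sub_tr (dvd_sub_tr (dvd_sub_swap (hNq.trans hbc)) (hA b hb b' hb'))
      (hNq.trans hbc')
    rw [hs, show a * (N * s) = a * s * N by ring] at h
    have h2 := Int.dvd_of_mul_dvd_mul_right hN.ne' h
    have h3 := haq.symm.dvd_of_dvd_mul_left h2
    rw [hs, mul_comm N]
    exact mul_dvd_mul_right h3 N
  · intro c _
    exact add_subset_add_right (dil_mono (cls_subset _ _ _))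
  · intro c _ x hx
    obtain ⟨u, hu, v, hv, rfl⟩ := mem_add.1 hx
    obtain ⟨u, hu', rfl⟩ := mem_dil.1 hu
    obtain ⟨v, hv', rfl⟩ := mem_dil.1 hv
    rw [show a * u + q * v - (a * c + q * (t.sum * a₀)) = a * (u - c) + q * (v - t.sum * a₀) by
      ring]
    exact dvd_add ((mem_cls.1 hu').2.mul_left a)
      (mul_dvd_mul_left q (dvd_of_mem_sumDil (fun x hx => hA x hx a₀ ha₀) t v hv'))

lemma cnt_le_of_single_class {q N : ℤ} (hq : 0 < q) (hN : 0 < N)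
    {A : Finset ℤ} (hA : ∀ x ∈ A, ∀ y ∈ A, N ∣ x - y) : (cnt (q * N) A : ℤ) ≤ q := by
  have h2 := cnt_mul_le hN hq A
  have h3 : cnt N A ≤ 1 := by
    apply card_le_one.2
    intro x hx y hy
    obtain ⟨x', hx', rfl⟩ := mem_image.1 hx
    obtain ⟨y', hy', rfl⟩ := mem_image.1 hy
    exact emod_eq_iff.2 (hA x' hx' y' hy')
  have h4 : q * (cnt N A : ℤ) ≤ q * 1 := by
    apply mul_le_mul_of_nonneg_left _ hq.le
    exact_mod_cast h3
  linarith

/-- The sharp bound for `dilX a q t A` when `A` lies in a single class modulo `N` and meets all `q`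
classes modulo `q * N` inside it. -/
lemma exists_bound_of_fully_distributed {a q Λ : ℤ} {t : List ℤ} (ha : a ≠ 0) (hq : 0 < q)
    (haq : IsCoprime a q) (ht : t ≠ []) (h0 : ∀ x ∈ t, x ≠ 0) (hcop : Cop t) {C₁ : ℕ}
    (hC₁ : ∀ A : Finset ℤ, Λ * #A ≤ #(sumDil t A) + C₁) :
    ∃ C : ℕ, ∀ (N : ℤ) (A : Finset ℤ), 0 < N → (∀ x ∈ A, ∀ y ∈ A, N ∣ x - y) →
      q ≤ cnt (q * N) A → (|a| + q * Λ) * #A ≤ #(dilX a q t A) + C := by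
  obtain ⟨C₀, hC₀⟩ := exists_card_add_dil ha
  refine ⟨q.toNat * (C₀ + C₁), fun N A hN hA hcnt => ?_⟩
  have hk : (cnt (q * N) A : ℤ) = q := le_antisymm (cnt_le_of_single_class hq hN hA) hcnt
  have hAne : A.Nonempty := by
    rw [nonempty_iff_ne_empty]
    rintro rfl
    simp [cnt] at hcnt
    omega
  set Y := sumDil t A with hY
  have hpiece : ∀ c ∈ A.image (· % (q * N)),
      (#Y : ℤ) + |a| * #(cls (q * N) c A) - C₀ ≤ #(dil a (cls (q * N) c A) + dil q Y) := by
    intro c hc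
    obtain ⟨b, hb, hbc⟩ := exists_mem_of_residue hc
    have := hC₀ (cls (q * N) c A) (dil q Y) ⟨b, mem_cls.2 ⟨hb, hbc⟩⟩
      (dil_nonempty (sumDil_nonempty t hAne)) (fun n M hM hdvd => by
        have hMq : IsCoprime q M := (IsCoprime.of_isCoprime_of_dvd_left haq.pow_left hdvd).symm
        rw [cnt_dil hMq]
        exact (cnt_mono (cls_subset _ _ _)).trans (cnt_le_cnt_sumDil _ t rfl ht h0 hcop M hM A))
    rw [card_dil hq.ne', add_comm (dil q Y)] at this
    linarith
  have hsum := sum_le_sum hpiece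
  have h1 : (∑ c ∈ A.image (· % (q * N)), #(dil a (cls (q * N) c A) + dil q Y) : ℤ) ≤
      #(dilX a q t A) := by exact_mod_cast sum_card_pieces_le haq hN t hA
  have h2 : (∑ c ∈ A.image (· % (q * N)), (#(cls (q * N) c A) : ℤ)) = #A := by
    exact_mod_cast sum_card_residues A
  rw [sum_sub_distrib, sum_add_distrib, ← mul_sum, h2] at hsum
  simp only [sum_const, nsmul_eq_mul] at hsum
  change (cnt (q * N) A : ℤ) * _ + _ - (cnt (q * N) A : ℤ) * _ ≤ _ at hsum
  rw [hk] at hsum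
  have h3 := mul_le_mul_of_nonneg_left (hC₁ A) hq.le
  push_cast
  rw [Int.toNat_of_nonneg hq.le]
  linarith

/-- If a class `R` of `A` modulo `q * N` does not meet all classes modulo `q * (q * N)` inside it,
where `N` is the greatest common divisor of the differences of `A`, then replacing one summand `R`
by another class of `A` produces an injective affine
image of that whole class outside `dilX a q t R`. -/
lemma exists_gain {a q N r : ℤ} {t : List ℤ} (hq : 0 < q) (hN : 0 < N)
    (h0 : ∀ x ∈ t, x ≠ 0) (hcop : Cop t) {A : Finset ℤ}
    (hr : r ∈ A) (hgcd : ∀ h : ℤ, (∀ x ∈ A, h ∣ x - r) → h ∣ N)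
    (hnot : (cnt (q * (q * N)) (cls (q * N) r A) : ℤ) < q) :
    ∃ y ∈ A, #(dilX a q t (cls (q * N) r A)) + #(cls (q * N) y A) ≤
      #(dil a (cls (q * N) r A) + dil q (sumDil t A)) := by
  set R := cls (q * N) r A with hR
  have hrR : r ∈ R := self_mem_cls hr
  have hRA : R ⊆ A := cls_subset _ _ _
  have hRr : ∀ x ∈ R, q * N ∣ x - r := fun x hx => (mem_cls.1 hx).2
  set M := q * (q * N) with hM
  have hM0 : 0 < M := by positivity
  have hX : ∀ z ∈ dilX a q t R, ∃ x ∈ R, M ∣ z - (a * x + q * (t.sum * r)) := by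
    intro z hz
    obtain ⟨u, hu, v, hv, rfl⟩ := mem_add.1 hz
    obtain ⟨u, hu', rfl⟩ := mem_dil.1 hu
    obtain ⟨v, hv', rfl⟩ := mem_dil.1 hv
    refine ⟨u, hu', ?_⟩
    rw [show a * u + q * v - (a * u + q * (t.sum * r)) = q * (v - t.sum * r) by ring]
    exact mul_dvd_mul_left q (dvd_of_mem_sumDil hRr t v hv')
  obtain ⟨x, hx, τ, hτ, y, hy, hnew⟩ : ∃ x ∈ R, ∃ τ ∈ t, ∃ y ∈ A, ∀ x' ∈ R,
      ¬ M ∣ a * x' - (a * x + q * τ * (y - r)) := by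
    by_contra hcon
    push Not at hcon
    -- The set of translations preserving the residues of `a · R` is a subgroup containing `q * N`.
    obtain ⟨h, hK⟩ := exists_generator_of_addClosed hM0
      {σ : ℤ | ∀ x ∈ R, ∃ x' ∈ R, M ∣ a * x' - (a * x + σ)}
      (by
        intro σ hσ σ' hσ' x hx
        obtain ⟨x', hx', h'⟩ := hσ x hx
        obtain ⟨x'', hx'', h''⟩ := hσ' x' hx'
        refine ⟨x'', hx'', ?_⟩
        have := dvd_add h'' h'
        rwa [show a * x'' - (a * x' + σ') + (a * x' - (a * x + σ)) = a * x'' - (a * x + (σ + σ')) by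
          ring] at this)
      (by
        intro s x hx
        exact ⟨x, hx, -s, by ring⟩)
    have hh : ∀ τ ∈ t, ∀ y ∈ A, h ∣ q * τ * (y - r) := by
      intro τ hτ y hy
      rw [← hK]
      exact fun x hx => hcon x hx τ hτ y hy
    have h0' : h ≠ 0 := by
      rintro rfl
      have := (hK M).1 (fun x hx => ⟨x, hx, -1, by ring⟩)
      rw [zero_dvd_iff] at this
      omega
    have hh2 : ∀ y ∈ A, h ∣ q * (y - r) := by
      intro y hy
      set g : ℤ := ((Int.gcd h (q * (y - r)) : ℕ) : ℤ) with hg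
      have hgne : g ≠ 0 := by
        rw [hg]
        exact_mod_cast (Int.gcd_pos_of_ne_zero_left _ h0').ne'
      obtain ⟨h', hh'⟩ : g ∣ h := Int.gcd_dvd_left _ _
      obtain ⟨z, hz⟩ : g ∣ q * (y - r) := Int.gcd_dvd_right _ _
      have hcz : IsCoprime h' z := by
        rw [Int.isCoprime_iff_gcd_eq_one]
        have h1 : Int.gcd (g * h') (g * z) = g.natAbs * Int.gcd h' z := Int.gcd_mul_left _ _ _
        rw [← hh', ← hz, hg, Int.natAbs_natCast] at h1
        have h2 : 0 < Int.gcd h (q * (y - r)) := Int.gcd_pos_of_ne_zero_left _ h0'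
        nlinarith
      have hu : IsUnit h' := by
        apply hcop
        intro τ hτ
        have h1 := hh τ hτ y hy
        rw [show q * τ * (y - r) = q * (y - r) * τ by ring, hz] at h1
        nth_rw 1 [hh'] at h1
        rw [mul_assoc] at h1
        exact hcz.dvd_of_dvd_mul_left (Int.dvd_of_mul_dvd_mul_left hgne h1)
      rw [hz]
      nth_rw 1 [hh']
      exact mul_dvd_mul_left g hu.dvd
    have hqN : h ∣ q * N := by
      have h1 : ∀ x ∈ A, h / Int.gcd h q ∣ x - r := by
        intro x hx
        have hgne : (Int.gcd h q : ℤ) ≠ 0 := by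
          exact_mod_cast (Int.gcd_pos_of_ne_zero_left _ h0').ne'
        apply (Int.isCoprime_iff_gcd_eq_one.2
          (Int.gcd_ediv_gcd_ediv_gcd (Int.gcd_pos_of_ne_zero_left _ h0'))).dvd_of_dvd_mul_left
        apply Int.dvd_of_mul_dvd_mul_left hgne
        rw [← mul_assoc, Int.mul_ediv_cancel' (Int.gcd_dvd_left _ _),
          Int.mul_ediv_cancel' (Int.gcd_dvd_right _ _)]
        exact hh2 x hx
      have h2 := mul_dvd_mul (Int.gcd_dvd_right h q) (hgcd _ h1)
      rwa [Int.mul_ediv_cancel' (Int.gcd_dvd_left _ _)] at h2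
    have hall : ∀ n : ℕ, ∃ x ∈ R, M ∣ a * x - (a * r + q * N * n) := by
      intro n
      exact (hK (q * N * n)).2 (hqN.mul_right _) r hrR
    choose x hxR hx using hall
    have : q.toNat ≤ cnt M R := by
      unfold cnt
      rw [← card_range q.toNat]
      apply card_le_card_of_injOn (fun n => x n % M)
      · intro n _
        exact mem_image_of_mem (· % M) (hxR n)
      · intro n hn n' hn' heq
        simp only [coe_range, Set.mem_Iio] at hn hn'
        have h1 := (emod_eq_iff.1 heq).mul_left a
        have h2 := dvd_sub (dvd_sub h1 (hx n)) (dvd_sub_swap (hx n'))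
        rw [show a * (x n - x n') - (a * x n - (a * r + q * N * n)) -
          (a * r + q * N * n' - a * x n') = q * N * (n - n') by ring, hM, mul_comm q] at h2
        have h3 := Int.dvd_of_mul_dvd_mul_left (by positivity) h2
        have h4 : (n : ℤ) - n' = 0 := by
          apply Int.eq_zero_of_abs_lt_dvd h3
          rw [abs_lt]
          constructor <;> omega
        omega
    omega
  refine ⟨y, hy, ?_⟩
  have hinj : Function.Injective (fun z => a * x + q * (τ * z + (t.sum - τ) * r)) := by
    intro z z' hzz
    exact mul_left_cancel₀ (h0 τ hτ)
      (add_right_cancel (mul_left_cancel₀ hq.ne' (add_left_cancel hzz)))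
  rw [← card_image_of_injective (cls (q * N) y A) hinj, ← card_union_of_disjoint]
  · apply card_le_card
    apply union_subset
    · exact add_subset_add_left (dil_mono (sumDil_mono t hRA))
    · intro w hw
      obtain ⟨z, hz, rfl⟩ := mem_image.1 hw
      exact add_mem_add (mem_dil.2 ⟨x, hx, rfl⟩)
        (mem_dil.2 ⟨_, mem_sumDil_of_mem hτ hr (mem_cls.1 hz).1, rfl⟩)
  · rw [disjoint_right]
    intro w hw hw'
    obtain ⟨z, hz, rfl⟩ := mem_image.1 hw
    obtain ⟨x', hx', hdvd⟩ := hX _ hw'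
    apply hnew x' hx'
    have h1 := (mul_dvd_mul_left q (mem_cls.1 hz).2).mul_left τ
    have h2 := dvd_sub h1 hdvd
    rwa [show τ * (q * (z - y)) - (a * x + q * (τ * z + (t.sum - τ) * r) -
      (a * x' + q * (t.sum * r))) = a * x' - (a * x + q * τ * (y - r)) by ring] at h2

/-! ### The sharp bound for sums of coprime dilates -/

/-- The bound `j |A| ≤ 2 S |X| + O(1)` for the sumset `X`, with `S = |a| + q * Λ`, is improved step
by step up to `j = 2 S ^ 2`, where it is the sharp one. -/
lemma exists_bound_of_le {a q Λ : ℤ} {t : List ℤ} (ha : a ≠ 0) (hq : 0 < q)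
    (haq : IsCoprime a q) (ht : t ≠ []) (h0 : ∀ x ∈ t, x ≠ 0) (hcop : Cop t) {C₁ : ℕ}
    (hC₁ : ∀ A : Finset ℤ, Λ * #A ≤ #(sumDil t A) + C₁) (S : ℤ) (hS : S = |a| + q * Λ)
    (hS1 : 1 ≤ S) (j : ℕ) (hj : j ≤ 2 * S ^ 2) :
    ∃ C : ℕ, ∀ A : Finset ℤ, (j : ℤ) * #A ≤ 2 * S * #(dilX a q t A) + C := by
  obtain ⟨CF, hCF⟩ := exists_bound_of_fully_distributed ha hq haq ht h0 hcop hC₁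
  rw [← hS] at hCF
  have hS0 : 0 < S := by omega
  induction j with
  | zero =>
    refine ⟨0, fun A => ?_⟩
    have : 0 ≤ 2 * S * (#(dilX a q t A) : ℤ) := by positivity
    push_cast
    linarith
  | succ j ih =>
    obtain ⟨C, hC⟩ := ih (by push_cast at hj; omega)
    push_cast at hj
    -- The error `D` allowed on a single class.
    set D : ℤ := C + 2 * S * CF with hD
    have hD0 : 0 ≤ D := by positivity
    have hSCF : 0 ≤ 2 * S * (CF : ℤ) := by positivity
    refine ⟨(j + 1) + (2 * S * CF).toNat + (q * D).toNat, fun A => ?_⟩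
    push_cast
    rw [Int.toNat_of_nonneg hSCF, Int.toNat_of_nonneg (mul_nonneg hq.le hD0)]
    have hqD : 0 ≤ q * D := mul_nonneg hq.le hD0
    have hjS : ((j : ℤ) + 1) ≤ 2 * S * S := by linarith [sq S]
    have hXnn : 0 ≤ 2 * S * (#(dilX a q t A) : ℤ) := by positivity
    -- A bound for fully distributed sets is stronger than the required one.
    have hfull : ∀ (N : ℤ) (A' : Finset ℤ) , 0 < N → (∀ x ∈ A', ∀ y ∈ A', N ∣ x - y) →
        q ≤ cnt (q * N) A' → ((j : ℤ) + 1) * #A' ≤ 2 * S * #(dilX a q t A') + 2 * S * CF := by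
      intro N A' hN hA' hcnt
      have h1 := mul_le_mul_of_nonneg_left (hCF N A' hN hA' hcnt) (show 0 ≤ 2 * S by omega)
      have h2 := mul_le_mul_of_nonneg_right hjS (show (0 : ℤ) ≤ #A' by positivity)
      linarith
    rcases le_or_gt #A 1 with hA1 | hA2
    · have h1 : (#A : ℤ) ≤ 1 := by exact_mod_cast hA1
      have h2 := mul_le_mul_of_nonneg_left h1 (show (0 : ℤ) ≤ j + 1 by positivity)
      linarith
    obtain ⟨r₀, hr₀, y₀, hy₀, hne⟩ := one_lt_card.1 hA2
    set N : ℤ := A.gcd (fun x => x - r₀) with hNdef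
    have hNdvd : ∀ x ∈ A, N ∣ x - r₀ := fun x hx => Finset.gcd_dvd hx
    have hN0 : N ≠ 0 := by
      intro h
      have := hNdvd y₀ hy₀
      rw [h, zero_dvd_iff] at this
      omega
    have hNnn : 0 ≤ N := Int.nonneg_of_normalize_eq_self Finset.normalize_gcd
    have hN : 0 < N := by omega
    have hAN : ∀ x ∈ A, ∀ y ∈ A, N ∣ x - y := fun x hx y hy =>
      dvd_sub_tr (hNdvd x hx) (dvd_sub_swap (hNdvd y hy))
    have hgcd : ∀ r ∈ A, ∀ h : ℤ, (∀ x ∈ A, h ∣ x - r) → h ∣ N := by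
      intro r hr h hh
      exact Finset.dvd_gcd fun x hx => dvd_sub_tr (hh x hx) (dvd_sub_swap (hh r₀ hr₀))
    by_cases hq' : q ≤ cnt (q * N) A
    · linarith [hfull N A hN hAN hq']
    set I := A.image (· % (q * N)) with hI
    have hpieces : (∑ c ∈ I, (#(dil a (cls (q * N) c A) + dil q (sumDil t A)) : ℤ)) ≤
        #(dilX a q t A) := by exact_mod_cast sum_card_pieces_le haq hN t hAN
    have hclasses : (∑ c ∈ I, (#(cls (q * N) c A) : ℤ)) = #A := by
      exact_mod_cast sum_card_residues A
    have hIq : (#I : ℤ) * D ≤ q * D :=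
      mul_le_mul_of_nonneg_right (cnt_le_of_single_class hq hN hAN) hD0
    have hmono : ∀ c, (#(dilX a q t (cls (q * N) c A)) : ℤ) ≤
        #(dil a (cls (q * N) c A) + dil q (sumDil t A)) := by
      intro c
      exact_mod_cast card_le_card
        (add_subset_add_left (dil_mono (sumDil_mono t (cls_subset _ _ _))))
    by_cases hlight : ∃ c ∈ I, 2 * S * #(cls (q * N) c A) ≤ (#A : ℤ)
    · -- A small class already contributes a full copy of `q · (⋯)`.
      obtain ⟨c₀, hc₀, hlight⟩ := hlight
      have h1 : ∀ c ∈ I, (j : ℤ) * #(cls (q * N) c A) - D + (if c = c₀ then (#A : ℤ) else 0) ≤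
          2 * S * #(dil a (cls (q * N) c A) + dil q (sumDil t A)) := by
        intro c hc
        split_ifs with hcc
        · subst hcc
          obtain ⟨b, hb, hbc⟩ := exists_mem_of_residue hc
          have h2 : (#A : ℤ) ≤ #(dil a (cls (q * N) c A) + dil q (sumDil t A)) := by
            have h3 := card_le_card_add (A := dil q (sumDil t A))
              (dil_nonempty (t := a) ⟨b, mem_cls.2 ⟨hb, hbc⟩⟩)
            rw [card_dil hq.ne', add_comm] at h3
            exact_mod_cast (card_le_card_sumDil ht h0 A).trans h3
          have h4 := mul_le_mul_of_nonneg_left h2 (show 0 ≤ 2 * S by omega)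
          have h5 : (j : ℤ) * #(cls (q * N) c A) + #A ≤ 2 * S * #A := by
            have h6 : (0 : ℤ) ≤ #A := by positivity
            have h7 : (j : ℤ) * (2 * S * #(cls (q * N) c A)) ≤ j * #A :=
              mul_le_mul_of_nonneg_left hlight (by positivity)
            have h8 := mul_le_mul_of_nonneg_right hjS h6
            -- The claim multiplied by `2 * S`.
            have h9 : 2 * S * ((j : ℤ) * #(cls (q * N) c A) + #A) ≤ 2 * S * (2 * S * #A) := by
              have h10 : 2 * S * (#A : ℤ) ≤ 2 * S * S * #A := by
                apply mul_le_mul_of_nonneg_right _ h6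
                nlinarith
              nlinarith
            exact le_of_mul_le_mul_left h9 (by omega)
          linarith
        · have h2 := hC (cls (q * N) c A)
          have h3 := mul_le_mul_of_nonneg_left (hmono c) (show 0 ≤ 2 * S by omega)
          linarith
      have h2 := sum_le_sum h1
      rw [← mul_sum, sum_add_distrib, sum_sub_distrib, ← mul_sum, hclasses] at h2
      simp only [sum_const, nsmul_eq_mul, sum_ite_eq', hc₀, if_true] at h2
      have h3 := mul_le_mul_of_nonneg_left hpieces (show 0 ≤ 2 * S by omega)
      linarith
    · push Not at hlight
      have h1 : ∀ c ∈ I, ((j : ℤ) + 1) * #(cls (q * N) c A) - D ≤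
          2 * S * #(dil a (cls (q * N) c A) + dil q (sumDil t A)) := by
        intro c hc
        have h3 := mul_le_mul_of_nonneg_left (hmono c) (show 0 ≤ 2 * S by omega)
        obtain ⟨r, hr, hrc⟩ := mem_image.1 hc
        have hcr : cls (q * N) c A = cls (q * N) r A := by
          apply cls_congr
          rw [← emod_eq_iff, ← hrc]
          simp
        by_cases hd : q ≤ cnt (q * (q * N)) (cls (q * N) c A)
        · have h2 := hfull (q * N) (cls (q * N) c A) (by positivity)
            (fun x hx y hy => dvd_sub_tr (mem_cls.1 hx).2 (dvd_sub_swap (mem_cls.1 hy).2)) hd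
          linarith
        · push Not at hd
          rw [hcr] at hd
          obtain ⟨y, hy, hgain⟩ := exists_gain (a := a) hq hN h0 hcop hr (hgcd r hr) hd
          rw [← hcr] at hgain
          have h4 : (#A : ℤ) < 2 * S * #(cls (q * N) y A) := by
            have := hlight (y % (q * N)) (mem_image_of_mem _ hy)
            rwa [cls_congr (show q * N ∣ y % (q * N) - y by rw [← emod_eq_iff]; simp)] at this
          have h5 : (#(dilX a q t (cls (q * N) c A)) : ℤ) + #(cls (q * N) y A) ≤
              #(dil a (cls (q * N) c A) + dil q (sumDil t A)) := by exact_mod_cast hgain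
          have h6 := mul_le_mul_of_nonneg_left h5 (show 0 ≤ 2 * S by omega)
          have h7 : (#(cls (q * N) c A) : ℤ) ≤ #A := by
            exact_mod_cast card_le_card (cls_subset _ _ _)
          have h8 := hC (cls (q * N) c A)
          linarith
      have h2 := sum_le_sum h1
      rw [← mul_sum, sum_sub_distrib, ← mul_sum, hclasses] at h2
      simp only [sum_const, nsmul_eq_mul] at h2
      have h3 := mul_le_mul_of_nonneg_left hpieces (show 0 ≤ 2 * S by omega)
      linarith

lemma sum_abs_map_mul {q : ℤ} (hq : 0 < q) (t : List ℤ) :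
    ((t.map (q * ·)).map abs).sum = q * (t.map abs).sum := by
  induction t with
  | nil => simp
  | cons x t ih => simp only [List.map_cons, List.sum_cons, ih, abs_mul, abs_of_pos hq]; ring

lemma sum_abs_nonneg (t : List ℤ) : 0 ≤ (t.map abs).sum := by
  apply List.sum_nonneg
  intro x hx
  obtain ⟨y, _, rfl⟩ := List.mem_map.1 hx
  exact abs_nonneg y

/-- The sharp lower bound for sums of coprime dilates, up to an additive constant. -/
lemma exists_card_sumDil_ge (n : ℕ) : ∀ l : List ℤ, l.length = n → l ≠ [] → (∀ x ∈ l, x ≠ 0) →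
    Cop l → ∃ C : ℕ, ∀ A : Finset ℤ, (l.map abs).sum * #A ≤ #(sumDil l A) + C := by
  induction n with
  | zero => intro l hl hne; exact absurd (List.length_eq_zero_iff.1 hl) hne
  | succ n ih =>
    intro l hl _ h0 hcop
    obtain ⟨a, t, rfl⟩ := List.exists_cons_of_length_eq_add_one hl
    have ha : a ≠ 0 := h0 a (by simp)
    by_cases ht : t = []
    · subst ht
      have hu : IsUnit a := hcop a (by simp)
      refine ⟨0, fun A => ?_⟩
      rw [sumDil_cons, sumDil_nil, add_zero, card_dil ha]
      simp [Int.isUnit_iff_abs_eq.1 hu]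
    obtain ⟨q, t', hq, rfl, ht', hlen, hcop', h0'⟩ :=
      exists_extract_gcd ht (fun x hx => h0 x (List.mem_cons_of_mem _ hx))
    obtain ⟨C₁, hC₁⟩ := ih t' (by simp only [List.length_cons, List.length_map] at hl; omega)
      ht' h0' hcop'
    set S : ℤ := |a| + q * (t'.map abs).sum with hS
    have hS1 : 1 ≤ S := by
      have h1 : 1 ≤ |a| := Int.one_le_abs ha
      have h2 := mul_nonneg hq.le (sum_abs_nonneg t')
      linarith
    obtain ⟨C, hC⟩ := exists_bound_of_le ha hq hcop.isCoprime ht' h0' hcop' hC₁ S hS hS1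
      (2 * S ^ 2).toNat (Int.toNat_of_nonneg (by positivity)).le
    refine ⟨C, fun A => ?_⟩
    have h1 := hC A
    rw [Int.toNat_of_nonneg (by positivity)] at h1
    rw [List.map_cons, List.sum_cons, sum_abs_map_mul hq, ← hS, sumDil_cons, sumDil_map]
    change _ ≤ (#(dilX a q t' A) : ℤ) + C
    have h2 : 2 * S * (S * #A) ≤ 2 * S * ((#(dilX a q t' A) : ℤ) + C) := by
      have h3 : (C : ℤ) ≤ 2 * S * C := by
        have : (0 : ℤ) ≤ C := by positivity
        nlinarith
      linarith
    exact le_of_mul_le_mul_left h2 (by omega)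


end SumDilates

/-- For coprime nonzero integers `λ₁, …, λ_k` with `S = |λ₁| + … + |λ_k|`, there is a
constant `C'' ≥ 0` depending only on the `λᵢ` such that for every `S ≤ u ≤ S²` and
every finite `A ⊆ ℤ`,
`|λ₁·A + … + λ_k·A| ≥ (u/S)·|A| − C''·|λ₁⋯λ_k|^u`. -/
theorem sum_dilates_iterated_bound (k : ℕ) (hk : 1 ≤ k)
    (l : Fin k → ℤ) (hl : ∀ i, l i ≠ 0) (hcop : Finset.univ.gcd l = 1)
    (S : ℕ) (hS : S = ∑ i, (l i).natAbs) :
    ∃ C'' : ℚ, 0 ≤ C'' ∧ ∀ u : ℕ, S ≤ u → u ≤ S ^ 2 → ∀ A : Finset ℤ,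
      ((u : ℚ) / (S : ℚ)) * A.card - C'' * ((|∏ i, l i| : ℤ) : ℚ) ^ u
        ≤ ((∑ i, A.image (fun a => l i * a)).card : ℚ) := by
  obtain ⟨C, hC⟩ := SumDilates.exists_card_sumDil_ge k (List.ofFn l) (by simp)
    (by
      intro h
      have := congrArg List.length h
      simp at this
      omega)
    (by
      intro x hx
      obtain ⟨i, rfl⟩ := (List.mem_ofFn' _ _).1 hx
      exact hl i)
    (by
      intro d hd
      apply isUnit_of_dvd_one
      rw [← hcop]
      apply Finset.dvd_gcd
      intro i _
      exact hd _ ((List.mem_ofFn' _ _).2 ⟨i, rfl⟩))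
  refine ⟨C, by positivity, fun u _ hu A => ?_⟩
  have h1 : SumDilates.sumDil (List.ofFn l) A = ∑ i, A.image (fun a => l i * a) := by
    unfold SumDilates.sumDil
    rw [List.map_ofFn, List.sum_ofFn]
    rfl
  have h2 : ((List.ofFn l).map abs).sum = (S : ℤ) := by
    rw [List.map_ofFn, List.sum_ofFn, hS]
    push_cast
    rfl
  have h3 := hC A
  rw [h1, h2] at h3
  have h4 : (S : ℚ) * A.card ≤ (∑ i, A.image (fun a => l i * a)).card + C := by exact_mod_cast h3
  have h5 : (u : ℚ) / S ≤ S := by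
    apply div_le_of_le_mul₀ (by positivity) (by positivity)
    rw [← sq]
    exact_mod_cast hu
  have h6 : (1 : ℚ) ≤ ((|∏ i, l i| : ℤ) : ℚ) ^ u := by
    apply one_le_pow₀
    exact_mod_cast Int.one_le_abs (Finset.prod_ne_zero_iff.2 fun i _ => hl i)
  have h7 := mul_le_mul_of_nonneg_left h6 (show (0 : ℚ) ≤ C by positivity)
  have h8 := mul_le_mul_of_nonneg_right h5 (show (0 : ℚ) ≤ A.card by positivity)
  linarith
end

section
/- Let k ≥ 1 and let λ1, ..., λk be coprime nonzero integers. Then there exists a constant C, depending only on λ1, ..., λk, such that for every finite subset A of the real numbers, |λ1·A + ... + λk·A| ≥ (|λ1| + ... + |λk|)·|A| − C. -/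
open Pointwise

/-!
A finite set of reals spans a finite-dimensional `ℚ`-space, so a suitable additive map carries it
injectively to a set of integers, and this can only shrink the sumset (`exists_int_model`,
`SD_subset_image`). It remains to bound `SD l A`, the sum of the dilates of a finite `A ⊆ ℤ`.

**Bootstrapping.** For coprime `a :: l` let `L` be the sum of the absolute values of the entries
and `g` the gcd of `l`. The shortfall `L |A| - |SD (a :: l) A|` is at most `L |A|`. Split `A` into
its pieces `A_i` in the classes mod `g`. As `a` is invertible mod `g`, the sets `a·A_i + SD l A`
are disjoint, so the shortfall of `A` is at most the sum of the shortfalls of the `A_i`. If each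
split wins `δ |A|` for a fixed `δ > 0`, the slope of a linear upper bound for the shortfall can be
lowered by `δ` repeatedly until the bound is constant (`iter`). The win occurs whenever

* some `A_i` has fewer than `|A| / (2 L)` elements, because its own sum with `SD l A` already has
  `|A|` elements, or
* some `A_i` misses a class mod `g ^ 2` contained in its class mod `g` (`class_gain`). If adding
  elements of `SD l A` produced no new residue mod `g ^ 2`, the residues of `a·A_i` would be stable
  under a group of translations, which is all of `g ℤ / g ^ 2 ℤ` unless `A` lies in one class
  modulo a prime factor of `g` (`translate_all`). In the exceptional case `A` is rescaled.

Otherwise each `A_i` meets all `g` classes mod `g ^ 2` inside its own class, and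
`a·A_i + SD l A_i` is the disjoint union of the sets `a·A_{ij} + SD l A_i`, where
`A_{ij}` is the part of `A_i` in one class mod `g ^ 2`. If each of these has at least
`|SD l A_i| + |a| |A_{ij}| - O(1)` elements, induction on the length of the list, applied to
`l / g`, bounds the shortfall (`class_full`).

**The relative bound.** This last estimate is `extend_bound`: if `X` contains a translate of
`SD l A`, then `|X + F n·A| ≥ |X| + F |A| - O(1)`, provided no prime factor of `F` divides `n` or
all of `l`. It follows by a second bootstrapping of the same shape, by induction on `l`. With
`l = b :: l'` and `G = gcd (gcd l', F)`, pieces are taken mod `G`, for `A` and for `X`; a class of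
`X` not forced by `SD l A` can be split off at a gain (`remove_class`), and in the terminal case the
induction hypothesis for `l' / G` and `F / G` is applied to the largest piece of `A` and to every
part of `X` mod `G ^ 2` (`term_bound`).
-/

/-! ### Sums of dilates and residue classes -/

/-- The sumset `l₁·A + ⋯ + l_k·A` of the dilates of `A` by the entries of the list `l`. -/
def SD : List ℤ → Finset ℤ → Finset ℤ
  | [], _ => {0}
  | a :: l, A => A.image (fun x => a * x) + SD l A

/-- The dilate `m·A`. -/
def Dil (m : ℤ) (A : Finset ℤ) : Finset ℤ := A.image (fun x => m * x)

/-- The part of `A` in the residue class of `i` modulo `m`. -/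
def cl (A : Finset ℤ) (m i : ℤ) : Finset ℤ := A.filter (fun a => m ∣ a - i)

/-- The greatest common divisor of the entries of a list; it is `0` for the empty list. -/
def lg (l : List ℤ) : ℕ := l.foldr (fun a g => Nat.gcd a.natAbs g) 0

/-- The sum of the distances of all ordered pairs, a size measure that drops under rescaling. -/
def spread (A : Finset ℤ) : ℕ := ∑ a ∈ A, ∑ b ∈ A, (a - b).natAbs

lemma dvd_cong {a b c : ℤ} (h : a ∣ b) (e : c = b) : a ∣ c := e ▸ h

lemma dvd_lg (d : ℕ) (l : List ℤ) : d ∣ lg l ↔ ∀ a ∈ l, (d : ℤ) ∣ a := by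
  induction l with
  | nil => simp [lg]
  | cons a l ih =>
    have : lg (a :: l) = Nat.gcd a.natAbs (lg l) := rfl
    rw [this, Nat.dvd_gcd_iff, ih]
    simp [Int.natCast_dvd]

lemma mem_cl {A : Finset ℤ} {m i a : ℤ} : a ∈ cl A m i ↔ a ∈ A ∧ m ∣ a - i := by
  simp [cl]

lemma mem_Dil {A : Finset ℤ} {m a : ℤ} : a ∈ Dil m A ↔ ∃ x ∈ A, m * x = a := by
  simp [Dil]

lemma mem_SD_cons {a : ℤ} {l : List ℤ} {A : Finset ℤ} {z : ℤ} :
    z ∈ SD (a :: l) A ↔ ∃ x ∈ A, ∃ y ∈ SD l A, a * x + y = z := by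
  simp [SD, Finset.mem_add]

lemma SD_mono {l : List ℤ} {A B : Finset ℤ} (h : A ⊆ B) : SD l A ⊆ SD l B := by
  induction l with
  | nil => simp [SD]
  | cons a l ih =>
    intro z hz
    rw [mem_SD_cons] at hz ⊢
    obtain ⟨x, hx, y, hy, rfl⟩ := hz
    exact ⟨x, h hx, y, ih hy, rfl⟩

lemma const_mem_SD {l : List ℤ} {A : Finset ℤ} {a : ℤ} (ha : a ∈ A) : a * l.sum ∈ SD l A := by
  induction l with
  | nil => simp [SD]
  | cons b l ih =>
    rw [mem_SD_cons]
    exact ⟨a, ha, _, ih, by simp; ring⟩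

/-- The element of `SD l A` obtained by using `x` in the summand of `c` and `a` elsewhere. -/
lemma swap_mem_SD {l : List ℤ} {A : Finset ℤ} {a x c : ℤ} (ha : a ∈ A) (hx : x ∈ A)
    (hc : c ∈ l) : a * l.sum + c * (x - a) ∈ SD l A := by
  induction l with
  | nil => simp at hc
  | cons b l ih =>
    rw [mem_SD_cons]
    rcases List.mem_cons.1 hc with rfl | hc
    · exact ⟨x, hx, _, const_mem_SD ha, by simp; ring⟩
    · exact ⟨a, ha, _, ih hc, by simp; ring⟩

lemma SD_nonempty {l : List ℤ} {A : Finset ℤ} (h : A.Nonempty) : (SD l A).Nonempty :=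
  ⟨_, const_mem_SD h.choose_spec⟩

lemma SD_singleton {l : List ℤ} {a : ℤ} : SD l {a} = {a * l.sum} := by
  induction l with
  | nil => simp [SD]
  | cons b l ih => simp [SD, ih]; ring

lemma SD_cong {l : List ℤ} {A : Finset ℤ} {d m i : ℤ} (hl : ∀ a ∈ l, d ∣ a)
    (hA : ∀ a ∈ A, m ∣ a - i) : ∀ s ∈ SD l A, d * m ∣ s - i * l.sum := by
  induction l with
  | nil => simp [SD]
  | cons b l ih =>
    intro s hs
    obtain ⟨x, hx, y, hy, rfl⟩ := mem_SD_cons.1 hs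
    have h1 := ih (fun a ha => hl a (by simp [ha])) y hy
    have h2 := mul_dvd_mul (hl b (by simp)) (hA x hx)
    have e : b * x + y - i * (b :: l).sum = b * (x - i) + (y - i * l.sum) := by
      rw [List.sum_cons]; ring
    rw [e]
    exact dvd_add h2 h1

lemma SD_map_affine (l : List ℤ) (A : Finset ℤ) (u m r : ℤ) :
    SD (l.map (u * ·)) (A.image (fun x => m * x + r)) =
      (SD l A).image (fun s => u * m * s + u * r * l.sum) := by
  induction l with
  | nil => simp [SD]
  | cons b l ih =>
    ext z
    simp only [List.map_cons, mem_SD_cons, ih, Finset.mem_image, List.sum_cons]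
    constructor
    · rintro ⟨_, ⟨x, hx, rfl⟩, _, ⟨s, hs, rfl⟩, rfl⟩
      exact ⟨_, ⟨x, hx, s, hs, rfl⟩, by ring⟩
    · rintro ⟨_, ⟨x, hx, s, hs, rfl⟩, rfl⟩
      exact ⟨_, ⟨x, hx, rfl⟩, _, ⟨s, hs, rfl⟩, by ring⟩

lemma exists_affine {A : Finset ℤ} {m i : ℤ} (hA : ∀ a ∈ A, m ∣ a - i) :
    ∃ A' : Finset ℤ, A = A'.image (fun x => m * x + i) := by
  refine ⟨A.image (fun a => (a - i) / m), ?_⟩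
  ext a
  simp only [Finset.mem_image, exists_exists_and_eq_and]
  constructor
  · intro ha
    exact ⟨a, ha, by rw [Int.mul_ediv_cancel' (hA a ha)]; ring⟩
  · rintro ⟨b, hb, rfl⟩
    rw [Int.mul_ediv_cancel' (hA b hb)]
    simpa using hb

lemma card_affine (A : Finset ℤ) {m : ℤ} (hm : m ≠ 0) (i : ℤ) :
    (A.image (fun x => m * x + i)).card = A.card := by
  apply Finset.card_image_of_injective
  intro x y h
  simpa [hm] using h

lemma card_Dil (A : Finset ℤ) {m : ℤ} (hm : m ≠ 0) : (Dil m A).card = A.card := by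
  simpa [Dil] using card_affine A hm 0

lemma Dil_singleton (m a : ℤ) : Dil m {a} = {m * a} := by
  simp [Dil]

lemma Dil_nonempty {A : Finset ℤ} (m : ℤ) (h : A.Nonempty) : (Dil m A).Nonempty :=
  h.image _

lemma Dil_mono {A B : Finset ℤ} (m : ℤ) (h : A ⊆ B) : Dil m A ⊆ Dil m B :=
  Finset.image_subset_image h

lemma cl_subset (A : Finset ℤ) (m i : ℤ) : cl A m i ⊆ A := Finset.filter_subset _ _

lemma add_card_le {X Y : Finset ℤ} (hX : X.Nonempty) (hY : Y.Nonempty) :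
    X.card + Y.card ≤ (X + Y).card + 1 := by
  have := cauchy_davenport_add_of_linearOrder_isCancelAdd hX hY
  omega

/-- If `A` lies in one residue class mod `m` and `X` in one class mod `u * m`, then both can be
rescaled simultaneously, keeping all the relevant cardinalities. -/
lemma rescale {l : List ℤ} {u m : ℤ} (hu : u ≠ 0) (hm : m ≠ 0) {A X : Finset ℤ}
    (K : ℤ) {i z t : ℤ} (hA : ∀ a ∈ A, m ∣ a - i) (hX : ∀ x ∈ X, u * m ∣ x - z)
    (hne : A.Nonempty) (ht : ∀ s ∈ SD (l.map (u * ·)) A, t + s ∈ X) :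
    ∃ A' X' : Finset ℤ, A'.Nonempty ∧ (∃ t', ∀ s ∈ SD l A', t' + s ∈ X') ∧
      A = A'.image (fun x => m * x + i) ∧ A'.card = A.card ∧ X'.card = X.card ∧
      (X' + Dil K A').card = (X + Dil (u * K) A).card := by
  obtain ⟨A', rfl⟩ := exists_affine hA
  obtain ⟨X', rfl⟩ := exists_affine hX
  have hum : u * m ≠ 0 := mul_ne_zero hu hm
  have hne' : A'.Nonempty := by simpa using hne
  refine ⟨A', X', hne', ?_, rfl, (card_affine _ hm _).symm, (card_affine _ hum _).symm, ?_⟩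
  · rw [SD_map_affine] at ht
    obtain ⟨s₀, hs₀⟩ := SD_nonempty (l := l) hne'
    have h0 := ht _ (Finset.mem_image_of_mem _ hs₀)
    simp only [Finset.mem_image] at h0
    obtain ⟨x₀, hx₀, h0⟩ := h0
    refine ⟨x₀ - s₀, fun s hs => ?_⟩
    have h1 := ht _ (Finset.mem_image_of_mem _ hs)
    simp only [Finset.mem_image] at h1
    obtain ⟨x, hx, h1⟩ := h1
    have : x = x₀ - s₀ + s := by
      apply mul_left_cancel₀ hum
      linear_combination h1 - h0
    rwa [← this]
  · have : X'.image (fun x => u * m * x + z) + Dil (u * K) (A'.image (fun x => m * x + i)) =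
        (X' + Dil K A').image (fun x => u * m * x + (z + u * K * i)) := by
      ext y
      simp only [Finset.mem_add, Finset.mem_image, mem_Dil]
      constructor
      · rintro ⟨_, ⟨x, hx, rfl⟩, _, ⟨_, ⟨a, ha, rfl⟩, rfl⟩, rfl⟩
        exact ⟨_, ⟨x, hx, _, ⟨a, ha, rfl⟩, rfl⟩, by ring⟩
      · rintro ⟨_, ⟨x, hx, _, ⟨a, ha, rfl⟩, rfl⟩, rfl⟩
        exact ⟨_, ⟨x, hx, rfl⟩, _, ⟨_, ⟨a, ha, rfl⟩, rfl⟩, by ring⟩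
    rw [this, card_affine _ hum]

lemma spread_lt {A : Finset ℤ} {m : ℤ} (hm : 2 ≤ m) (i : ℤ) (hA : 2 ≤ A.card) :
    spread A < spread (A.image (fun x => m * x + i)) := by
  have hm0 : m ≠ 0 := by omega
  have hinj : Function.Injective (fun x : ℤ => m * x + i) := by
    intro x y h
    simpa [hm0] using h
  have h1 : spread (A.image (fun x => m * x + i)) = m.natAbs * spread A := by
    unfold spread
    rw [Finset.sum_image (fun x _ y _ h => hinj h), Finset.mul_sum]
    refine Finset.sum_congr rfl fun a _ => ?_
    rw [Finset.sum_image (fun x _ y _ h => hinj h), Finset.mul_sum]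
    refine Finset.sum_congr rfl fun b _ => ?_
    rw [← Int.natAbs_mul]
    congr 1
    ring
  have h2 : 0 < spread A := by
    obtain ⟨a, ha, b, hb, hab⟩ := Finset.one_lt_card.1 hA
    unfold spread
    refine Finset.sum_pos' (fun _ _ => Nat.zero_le _) ⟨a, ha, ?_⟩
    refine Finset.sum_pos' (fun _ _ => Nat.zero_le _) ⟨b, hb, ?_⟩
    omega
  have h3 : 2 ≤ m.natAbs := by omega
  rw [h1]
  nlinarith

/-- The pieces `Y i` lie in distinct classes mod `m`, hence are disjoint. -/
lemma sum_card_le {σ : Finset ℤ} {Y : ℤ → Finset ℤ} {Z : Finset ℤ} {ν : ℤ → ℤ} {m : ℤ}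
    (hsub : ∀ i ∈ σ, Y i ⊆ Z) (hc : ∀ i ∈ σ, ∀ y ∈ Y i, m ∣ y - ν i)
    (hν : ∀ i ∈ σ, ∀ j ∈ σ, m ∣ ν i - ν j → i = j) : ∑ i ∈ σ, (Y i).card ≤ Z.card := by
  rw [← Finset.card_biUnion]
  · exact Finset.card_le_card (Finset.biUnion_subset.2 hsub)
  · intro i hi j hj hij
    rw [Function.onFun, Finset.disjoint_left]
    intro y hy hy'
    apply hij
    apply hν i hi j hj
    have := dvd_sub (hc j hj y hy') (hc i hi y hy)
    rwa [sub_sub_sub_cancel_left] at this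

lemma card_le_sum {σ : Finset ℤ} {Y : ℤ → Finset ℤ} {Z : Finset ℤ}
    (h : ∀ z ∈ Z, ∃ i ∈ σ, z ∈ Y i) : Z.card ≤ ∑ i ∈ σ, (Y i).card := by
  refine le_trans (Finset.card_le_card ?_) Finset.card_biUnion_le
  intro z hz
  simpa using h z hz

/-- A system of representatives for the residue classes modulo `m` met by `A`. -/
lemma exists_reps (A : Finset ℤ) {m : ℕ} (hm : 0 < m) : ∃ σ : Finset ℤ, σ.card ≤ m ∧
    (∀ i ∈ σ, ∀ j ∈ σ, (m : ℤ) ∣ i - j → i = j) ∧ (∀ i ∈ σ, ∃ a ∈ A, (m : ℤ) ∣ a - i) ∧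
    (∀ a ∈ A, ∃ i ∈ σ, (m : ℤ) ∣ a - i) := by
  have hm' : (0 : ℤ) < m := by exact_mod_cast hm
  have hdv : ∀ a : ℤ, (m : ℤ) ∣ a - a % m := fun a => Int.dvd_self_sub_emod
  refine ⟨A.image (fun a => a % m), ?_, ?_, ?_, ?_⟩
  · have : A.image (fun a => a % (m : ℤ)) ⊆ Finset.Ico (0 : ℤ) m := by
      intro x hx
      obtain ⟨a, -, rfl⟩ := Finset.mem_image.1 hx
      exact Finset.mem_Ico.2 ⟨Int.emod_nonneg _ hm'.ne', Int.emod_lt_of_pos _ hm'⟩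
    simpa using Finset.card_le_card this
  · simp only [Finset.mem_image]
    rintro _ ⟨a, -, rfl⟩ _ ⟨b, -, rfl⟩ h
    simpa using Int.emod_eq_emod_iff_emod_sub_eq_zero.2 (Int.emod_eq_zero_of_dvd h)
  · simp only [Finset.mem_image]
    rintro _ ⟨a, ha, rfl⟩
    exact ⟨a, ha, hdv a⟩
  · intro a ha
    exact ⟨_, Finset.mem_image_of_mem _ ha, hdv a⟩

/-- A property of residues mod `m ^ 2` stable under translation by `m * h`, `h ∈ S`, is stable
under translation by all multiples of `m`, when no prime factor of `m` divides all of `S`. -/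
lemma translate_all {m : ℕ} (hm : 0 < m) {Q : ℤ → Prop} {S : ℤ → Prop}
    (hper : ∀ w w', (m : ℤ) * m ∣ w - w' → Q w → Q w')
    (hS : ∀ h, S h → ∀ w, Q w → Q (w + m * h))
    (hcop : ∀ p : ℕ, p.Prime → p ∣ m → ∃ h, S h ∧ ¬ (p : ℤ) ∣ h) (w h : ℤ) (hw : Q w) :
    Q (w + m * h) := by
  let H : AddSubgroup ℤ :=
    { carrier := {h | ∀ w, Q w → Q (w + m * h)}
      zero_mem' := by intro w hw; simpa using hw
      add_mem' := by
        intro a b ha hb w hw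
        have := hb _ (ha w hw)
        rwa [show w + m * (a + b) = w + m * a + m * b by ring]
      neg_mem' := by
        intro a ha w hw
        -- modulo `m ^ 2`, translation by `-m * a` is translation by `(m - 1) * (m * a)`
        have key : ∀ n : ℕ, Q (w + m * (n * a)) := by
          intro n
          induction n with
          | zero => simpa using hw
          | succ n ih =>
            have := ha _ ih
            convert this using 1
            push_cast
            ring
        refine hper _ _ ?_ (key (m - 1))
        rw [Nat.cast_sub (by omega)]
        exact ⟨a, by push_cast; ring⟩ }
  -- `H` is generated by a divisor of `m`, and `S ⊆ H` excludes all its possible prime factors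
  have hmH : (m : ℤ) ∈ H := fun w hw => hper w _ ⟨-1, by ring⟩ hw
  have hSH : ∀ h, S h → h ∈ H := fun h hh w hw => hS h hh w hw
  obtain ⟨a, ha⟩ := Int.subgroup_cyclic H
  have hmem : ∀ h, h ∈ H ↔ a ∣ h := by
    intro h
    rw [ha, AddSubgroup.mem_closure_singleton]
    constructor
    · rintro ⟨n, rfl⟩
      simp
    · rintro ⟨n, rfl⟩
      exact ⟨n, by simp [mul_comm]⟩
  have ha1 : a.natAbs = 1 := by
    by_contra hne
    obtain ⟨p, hp, hpa⟩ := Nat.exists_prime_and_dvd hne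
    have hpa' : (p : ℤ) ∣ a := Int.natCast_dvd.2 hpa
    obtain ⟨h, hh, hnd⟩ := hcop p hp
      (Int.natCast_dvd_natCast.1 (hpa'.trans ((hmem _).1 hmH)))
    exact hnd (hpa'.trans ((hmem _).1 (hSH h hh)))
  have : h ∈ H := (hmem h).2 (Int.isUnit_iff_natAbs_eq.2 ha1).dvd
  exact this w hw

/-! ### Bootstrapping -/

/-- Bootstrapping: a deficiency `D` of at most linear size which, away from bounded cases, passes
to boundedly many smaller pieces with a linear gain is bounded. The slope of the linear upper
bound can be lowered by `δ` at each step until it reaches zero. The third alternative replaces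
`x` by an equally large object of smaller measure `μ`. -/
lemma iter {α : Type*} (P : α → Prop) (sz D : α → ℝ) (μ : α → ℕ) (M δ C₀ : ℝ) (N : ℕ)
    (hδ : 0 < δ) (hsz : ∀ x, P x → 0 ≤ sz x) (hM : ∀ x, P x → D x ≤ M * sz x)
    (h : ∀ x, P x → D x ≤ C₀ ∨
      (∃ (s : Finset ℤ) (y : ℤ → α), s.card ≤ N ∧ (∀ i ∈ s, P (y i)) ∧
        ∑ i ∈ s, sz (y i) ≤ sz x ∧ D x ≤ ∑ i ∈ s, D (y i) - δ * sz x + N) ∨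
      ∃ x', P x' ∧ sz x' = sz x ∧ D x ≤ D x' ∧ μ x' < μ x) :
    ∃ C, ∀ x, P x → D x ≤ C := by
  -- the slope after `n` rounds is `max (M - n * δ) 0`
  have main : ∀ n : ℕ, ∃ C : ℝ, 0 ≤ C ∧ ∀ x, P x → D x ≤ max (M - n * δ) 0 * sz x + C := by
    intro n
    induction n with
    | zero =>
      refine ⟨0, le_rfl, fun x hx => ?_⟩
      have h1 := hM x hx
      have h2 := mul_le_mul_of_nonneg_right (le_max_left M 0) (hsz x hx)
      simp
      linarith
    | succ n ih =>
      obtain ⟨C, hC, ih⟩ := ih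
      set K := max (M - n * δ) 0 with hK
      have hK0 : 0 ≤ K := le_max_right _ _
      set K' := max (M - (n + 1 : ℕ) * δ) 0 with hK'
      have hK'0 : 0 ≤ K' := le_max_right _ _
      have hKK' : K - δ ≤ K' := by
        rcases le_total (M - n * δ) 0 with h0 | h0
        · rw [hK, max_eq_right h0]; linarith
        · rw [hK, max_eq_left h0]
          refine le_trans (le_of_eq ?_) (le_max_left _ _)
          push_cast
          ring
      have hNC : 0 ≤ (N : ℝ) * C := by positivity
      have hN0 : (0 : ℝ) ≤ N := by positivity
      have hC00 := abs_nonneg C₀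
      refine ⟨|C₀| + N * C + N, by linarith, ?_⟩
      suffices H : ∀ k : ℕ, ∀ x, μ x ≤ k → P x → D x ≤ K' * sz x + (|C₀| + N * C + N) from
        fun x hx => H _ x le_rfl hx
      intro k
      induction k with
      | zero => ?_
      | succ k ihk => ?_
      all_goals
        intro x hxk hx
        have hK's : 0 ≤ K' * sz x := mul_nonneg hK'0 (hsz x hx)
        rcases h x hx with h1 | ⟨s, y, hs, hy, hsum, hD⟩ | ⟨x', hx', hsx, hDx, hμ⟩
        · have := le_abs_self C₀
          linarith
        · have e1 : ∑ i ∈ s, D (y i) ≤ ∑ i ∈ s, (K * sz (y i) + C) :=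
            Finset.sum_le_sum fun i hi => ih _ (hy i hi)
          rw [Finset.sum_add_distrib, ← Finset.mul_sum, Finset.sum_const, nsmul_eq_mul] at e1
          have e2 : (s.card : ℝ) * C ≤ N * C :=
            mul_le_mul_of_nonneg_right (by exact_mod_cast hs) hC
          have e3 := mul_le_mul_of_nonneg_left hsum hK0
          have e4 := mul_le_mul_of_nonneg_right hKK' (hsz x hx)
          linarith
        · first
          | omega
          | have := ihk x' (by omega) hx'
            rw [hsx] at this
            linarith
  obtain ⟨n, hn⟩ := exists_nat_ge (M / δ)
  obtain ⟨C, -, hC⟩ := main n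
  refine ⟨C, fun x hx => ?_⟩
  have := hC x hx
  rw [max_eq_right] at this
  · simpa using this
  · rw [div_le_iff₀ hδ] at hn
    linarith

/-- An improvement by `g - 1` of the piece `y i₀` carries over to the whole family of pieces. -/
lemma assemble {α : Type*} {P : α → Prop} {sz D : α → ℝ} {σ : Finset ℤ} {i₀ : ℤ} (hi₀ : i₀ ∈ σ)
    {y : ℤ → α} {y₀ : α} {d : ℤ → ℝ} {S T g : ℝ} (hP : ∀ i ∈ σ, P (y i)) (hP₀ : P y₀)
    (hsz : sz y₀ ≤ sz (y i₀)) (hd : ∀ i ∈ σ, d i ≤ D (y i)) (hd₀ : d i₀ ≤ D y₀ - g + 1)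
    (hS : ∑ i ∈ σ, sz (y i) ≤ S) (hT : T ≤ ∑ i ∈ σ, d i) :
    ∃ y' : ℤ → α, (∀ i ∈ σ, P (y' i)) ∧ ∑ i ∈ σ, sz (y' i) ≤ S ∧
      T ≤ ∑ i ∈ σ, D (y' i) - g + 1 := by
  refine ⟨fun i => if i = i₀ then y₀ else y i, ?_, ?_, ?_⟩
  · intro i hi
    dsimp only
    split_ifs
    · exact hP₀
    · exact hP i hi
  · refine le_trans (Finset.sum_le_sum fun i _ => ?_) hS
    dsimp only
    split_ifs with h
    · rw [h]; exact hsz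
    · exact le_rfl
  · have : ∑ i ∈ σ, (d i + if i = i₀ then g - 1 else 0) ≤
        ∑ i ∈ σ, D (if i = i₀ then y₀ else y i) := by
      refine Finset.sum_le_sum fun i hi => ?_
      split_ifs with h
      · rw [h]; linarith
      · simpa using hd i hi
    rw [Finset.sum_add_distrib, Finset.sum_ite_eq', if_pos hi₀] at this
    linarith

/-! ### The relative bound -/

/-- If a residue class met by `X` is avoided by the translate of `SD l A` contained in `X`, and
`K·A` lies in one class, then removing that class from `X` costs its own Cauchy–Davenport
contribution. -/
lemma remove_class {l : List ℤ} {X A : Finset ℤ} {q e t K : ℤ} (hK : K ≠ 0) (hA : A.Nonempty)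
    (ht : ∀ s ∈ SD l A, t + s ∈ X) (hx : ∃ x ∈ X, q ∣ x - e)
    (hDA : ∀ a ∈ A, ∀ a' ∈ A, q ∣ K * (a - a')) (hav : ∀ s ∈ SD l A, ¬ q ∣ t + s - e) :
    ∃ X' : Finset ℤ, (∀ s ∈ SD l A, t + s ∈ X') ∧
      (X' + Dil K A).card + X.card + A.card ≤ (X + Dil K A).card + X'.card + 1 := by
  set X' := X.filter (fun x => ¬ q ∣ x - e) with hX'
  set E := X.filter (fun x => q ∣ x - e) with hE
  have hEn : E.Nonempty := by
    obtain ⟨x, hx, h⟩ := hx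
    exact ⟨x, by simp [hE, hx, h]⟩
  refine ⟨X', fun s hs => by simp [hX', ht s hs, hav s hs], ?_⟩
  have h1 : E.card + X'.card = X.card := Finset.card_filter_add_card_filter_not _
  have h2 := add_card_le hEn (Dil_nonempty K hA)
  rw [card_Dil _ hK] at h2
  have hdisj : Disjoint (X' + Dil K A) (E + Dil K A) := by
    rw [Finset.disjoint_left]
    intro z hz hz'
    simp only [Finset.mem_add, mem_Dil] at hz hz'
    obtain ⟨x, hx, _, ⟨a, ha, rfl⟩, rfl⟩ := hz
    obtain ⟨x', hx', _, ⟨a', ha', rfl⟩, h⟩ := hz'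
    have hx1 := (Finset.mem_filter.1 hx).2
    have hx2 := (Finset.mem_filter.1 hx').2
    apply hx1
    have := dvd_add hx2 (hDA a' ha' a ha)
    rwa [show x' - e + K * (a' - a) = x - e by linear_combination h] at this
  have h3 : (X' + Dil K A).card + (E + Dil K A).card ≤ (X + Dil K A).card := by
    rw [← Finset.card_union_of_disjoint hdisj]
    exact Finset.card_le_card (Finset.union_subset
      (Finset.add_subset_add_right (Finset.filter_subset _ _))
      (Finset.add_subset_add_right (Finset.filter_subset _ _)))
  omega

/-- A piece whose class mod `G` is not fully distributed mod `G ^ 2` gains either from removing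
a class of `X` or from the sum with another piece of `A`. -/
lemma piece_gain {b : ℤ} {l : List ℤ} {G F₁ : ℕ} {n t a₀ z : ℤ} {X A : Finset ℤ} {v : ℕ}
    (hG : 0 < G) (hF₁ : 0 < F₁) (hn : n ≠ 0) (hbG : IsCoprime b (G : ℤ))
    (ht : ∀ s ∈ SD (b :: l.map ((G : ℤ) * ·)) A, t + s ∈ X) (ha₀ : a₀ ∈ A)
    (hcop : ∀ p : ℕ, p.Prime → p ∣ G → ¬ (p : ℤ) ∣ n ∧
      (¬ p ∣ F₁ ∨ ∃ c ∈ l, ¬ (p : ℤ) ∣ c))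
    (hsing : ∀ p : ℕ, p.Prime → p ∣ G → ∃ x ∈ A, ¬ (p : ℤ) ∣ x - a₀)
    (hz : (G : ℤ) ∣ z - a₀) (hzA : ∀ a ∈ A, ¬ (G : ℤ) * G ∣ a - z)
    (hv : ∀ x ∈ A, v ≤ (cl A G x).card) :
    ∃ X' : Finset ℤ, (∀ s ∈ SD (b :: l.map ((G : ℤ) * ·)) (cl A G a₀), t + s ∈ X') ∧
      (X' + Dil ((G : ℤ) * (F₁ * n)) (cl A G a₀)).card + (cl X G (t + b * a₀)).card + v ≤
        (cl X G (t + b * a₀) + Dil ((G : ℤ) * (F₁ * n)) A).card + X'.card + 1 := by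
  set lG := l.map ((G : ℤ) * ·) with hlG
  set K : ℤ := (G : ℤ) * (F₁ * n) with hK
  set A₀ := cl A G a₀ with hA₀
  set X₀ := cl X G (t + b * a₀) with hX₀
  have hG' : (G : ℤ) ≠ 0 := by exact_mod_cast hG.ne'
  have hK0 : K ≠ 0 := mul_ne_zero hG' (mul_ne_zero (by exact_mod_cast hF₁.ne') hn)
  have ha₀A₀ : a₀ ∈ A₀ := mem_cl.2 ⟨ha₀, by simp⟩
  have hlGd : ∀ c ∈ lG, (G : ℤ) ∣ c := by
    intro c hc
    obtain ⟨d, -, rfl⟩ := List.mem_map.1 hc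
    exact dvd_mul_right _ _
  have hA₀c : ∀ a ∈ A₀, (G : ℤ) ∣ a - a₀ := fun a ha => (mem_cl.1 ha).2
  have hSDc : ∀ s ∈ SD lG A, (G : ℤ) ∣ s := by
    intro s hs
    simpa using SD_cong (m := 1) (i := 0) hlGd (by simp) s hs
  have hinX₀ : ∀ a ∈ A₀, ∀ s ∈ SD lG A, t + (b * a + s) ∈ X₀ := by
    intro a ha s hs
    refine mem_cl.2 ⟨ht _ (mem_SD_cons.2 ⟨a, (mem_cl.1 ha).1, s, hs, rfl⟩), ?_⟩
    have := dvd_add ((hA₀c a ha).mul_left b) (hSDc s hs)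
    refine dvd_cong this ?_
    ring
  have htA₀ : ∀ s ∈ SD (b :: lG) A₀, t + s ∈ X₀ := by
    intro s hs
    obtain ⟨a, ha, y, hy, rfl⟩ := mem_SD_cons.1 hs
    exact hinX₀ a ha y (SD_mono (cl_subset _ _ _) hy)
  have hsubA₀ : X₀ + Dil K A₀ ⊆ X₀ + Dil K A :=
    Finset.add_subset_add_left (Dil_mono K (cl_subset _ _ _))
  -- a class of `X₀` mod `G ^ 2` not forced by `A₀` can be removed
  by_cases h1 : ∃ x ∈ X₀, ∀ a ∈ A₀, ¬ (G : ℤ) * G ∣ x - (t + b * a + a₀ * lG.sum)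
  · obtain ⟨x, hx, hxa⟩ := h1
    have hd : ∀ a ∈ A₀, ∀ a' ∈ A₀, (G : ℤ) * G ∣ K * (a - a') := by
      intro a ha a' ha'
      have h := dvd_sub (hA₀c a ha) (hA₀c a' ha')
      rw [sub_sub_sub_cancel_right] at h
      exact mul_dvd_mul (dvd_mul_right _ _) h
    have hav : ∀ s ∈ SD (b :: lG) A₀, ¬ (G : ℤ) * G ∣ t + s - x := by
      intro s hs hd
      obtain ⟨a, ha, y, hy, rfl⟩ := mem_SD_cons.1 hs
      apply hxa a ha
      refine dvd_cong (dvd_sub (SD_cong hlGd hA₀c y hy) hd) ?_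
      ring
    obtain ⟨X', hX', hc⟩ := remove_class hK0 ⟨a₀, ha₀A₀⟩ htA₀ ⟨x, hx, by simp⟩ hd hav
    refine ⟨X', hX', ?_⟩
    have := Finset.card_le_card hsubA₀
    have : v ≤ A₀.card := hv a₀ ha₀
    omega
  push Not at h1
  -- the sum with another piece of `A` may produce a new class mod `G ^ 2`
  by_cases h2 : ∃ c ∈ A, ∃ x ∈ X₀, ∀ x' ∈ X₀, ¬ (G : ℤ) * G ∣ x + K * c - (x' + K * a₀)
  · obtain ⟨c, hc, x, hx, hxx⟩ := h2
    refine ⟨X₀, htA₀, ?_⟩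
    have hdisj : Disjoint (X₀ + Dil K A₀) ((cl A G c).image (fun a => K * a + x)) := by
      rw [Finset.disjoint_left]
      intro y hy hy'
      simp only [Finset.mem_add, mem_Dil] at hy
      obtain ⟨x', hx', _, ⟨a, ha, rfl⟩, rfl⟩ := hy
      obtain ⟨a', ha', h⟩ := Finset.mem_image.1 hy'
      apply hxx x' hx'
      have e : (G : ℤ) ∣ (a - a₀) - (a' - c) := dvd_sub (hA₀c a ha) (mem_cl.1 ha').2
      have := mul_dvd_mul (dvd_mul_right (G : ℤ) (F₁ * n)) e
      rw [← hK] at this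
      refine dvd_cong this ?_
      linear_combination h
    have h3 : (X₀ + Dil K A₀).card + (cl A G c).card ≤ (X₀ + Dil K A).card := by
      rw [← card_affine (cl A G c) hK0 x, ← Finset.card_union_of_disjoint hdisj]
      refine Finset.card_le_card (Finset.union_subset hsubA₀ ?_)
      intro y hy
      obtain ⟨a, ha, rfl⟩ := Finset.mem_image.1 hy
      rw [add_comm (K * a) x]
      exact Finset.add_mem_add hx (mem_Dil.2 ⟨a, (mem_cl.1 ha).1, rfl⟩)
    have := hv c hc
    omega
  push Not at h2
  -- otherwise the residues of `X₀` fill a whole class mod `G`, and so do those of `A₀`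
  exfalso
  let Q : ℤ → Prop := fun w => ∃ x ∈ X₀, (G : ℤ) * G ∣ w - x
  let S : ℤ → Prop := fun h => ∃ c ∈ A, h = F₁ * n * (c - a₀) ∨ ∃ d ∈ l, h = d * (c - a₀)
  have hper : ∀ w w', (G : ℤ) * G ∣ w - w' → Q w → Q w' := by
    rintro w w' h ⟨x, hx, hwx⟩
    refine ⟨x, hx, ?_⟩
    have := dvd_sub hwx h
    rwa [sub_sub_sub_cancel_left] at this
  have hS : ∀ h, S h → ∀ w, Q w → Q (w + G * h) := by
    rintro h ⟨c, hc, rfl | ⟨d, hd, rfl⟩⟩ w ⟨x, hx, hwx⟩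
    · obtain ⟨x', hx', h⟩ := h2 c hc x hx
      refine ⟨x', hx', ?_⟩
      refine dvd_cong (dvd_add hwx h) ?_
      rw [hK]
      ring
    · obtain ⟨a, ha, h⟩ := h1 x hx
      refine ⟨_, hinX₀ a ha _ (swap_mem_SD ha₀ hc (List.mem_map_of_mem hd)), ?_⟩
      refine dvd_cong (dvd_add hwx h) ?_
      ring
  have hSc : ∀ p : ℕ, p.Prime → p ∣ G → ∃ h, S h ∧ ¬ (p : ℤ) ∣ h := by
    intro p hp hpG
    obtain ⟨x, hx, hpx⟩ := hsing p hp hpG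
    have hp' : Prime (p : ℤ) := Nat.prime_iff_prime_int.1 hp
    obtain ⟨hpn, hpF | ⟨c, hc, hpc⟩⟩ := hcop p hp hpG
    · refine ⟨_, ⟨x, hx, Or.inl rfl⟩, ?_⟩
      rw [hp'.dvd_mul, hp'.dvd_mul, Int.natCast_dvd_natCast]
      tauto
    · refine ⟨_, ⟨x, hx, Or.inr ⟨c, hc, rfl⟩⟩, ?_⟩
      rw [hp'.dvd_mul]
      tauto
  obtain ⟨k, hk⟩ := hz
  have hQ : Q (t + b * a₀ + a₀ * lG.sum) :=
    ⟨_, hinX₀ a₀ ha₀A₀ _ (const_mem_SD ha₀), by ring_nf; simp⟩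
  obtain ⟨x, hx, hwx⟩ := translate_all hG hper hS hSc _ (b * k) hQ
  obtain ⟨a, ha, hxa⟩ := h1 x hx
  apply hzA a (mem_cl.1 ha).1
  have h3 := dvd_add hwx hxa
  have h4 : (G : ℤ) * G ∣ b * (a - z) := by
    rw [← dvd_neg]
    refine dvd_cong h3 ?_
    rw [show z = a₀ + G * k by linear_combination hk]
    ring
  exact (IsCoprime.mul_right hbG hbG).symm.dvd_of_dvd_mul_left h4

lemma Ico_cong {G : ℕ} {i j : ℤ} (hi : i ∈ Finset.Ico (0 : ℤ) G) (hj : j ∈ Finset.Ico (0 : ℤ) G)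
    (h : (G : ℤ) ∣ i - j) : i = j := by
  rw [Finset.mem_Ico] at hi hj
  have h1 := Int.emod_eq_emod_iff_emod_sub_eq_zero.2 (Int.emod_eq_zero_of_dvd h)
  rwa [Int.emod_eq_of_lt hi.1 hi.2, Int.emod_eq_of_lt hj.1 hj.2] at h1

/-- The lower bound when `A` is fully distributed mod `G ^ 2` within each class mod `G` it meets:
every class of `X` mod `G` splits into all `G` classes mod `G ^ 2`, each of which contains a
translate of `SD` of the largest piece of `A`. -/
lemma term_bound {b : ℤ} {l : List ℤ} {G F₁ : ℕ} {n t : ℤ} {X A : Finset ℤ} {C₁ : ℝ}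
    (hG : 0 < G) (hF₁ : 0 < F₁) (hbG : IsCoprime b (G : ℤ)) (hC₁ : 0 ≤ C₁)
    (ht : ∀ s ∈ SD (b :: l.map ((G : ℤ) * ·)) A, t + s ∈ X) (hA : A.Nonempty)
    (hIH : ∀ A X : Finset ℤ, A.Nonempty → (∃ t, ∀ s ∈ SD l A, t + s ∈ X) →
      (X.card : ℝ) + F₁ * A.card - C₁ ≤ (X + Dil (F₁ * n) A).card)
    (hX : ∀ x ∈ X, ∃ a ∈ A, (G : ℤ) ∣ x - (t + b * a))
    (hFD : ∀ a ∈ A, ∀ z, (G : ℤ) ∣ z - a → ∃ a' ∈ A, (G : ℤ) * G ∣ a' - z) :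
    (X.card : ℝ) + G * F₁ * A.card - G * (G * C₁) ≤
      (X + Dil ((G : ℤ) * (F₁ * n)) A).card := by
  set lG := l.map ((G : ℤ) * ·) with hlG
  set K : ℤ := (G : ℤ) * (F₁ * n) with hK
  have hG' : (G : ℤ) ≠ 0 := by exact_mod_cast hG.ne'
  have hGpos : (0 : ℤ) < G := by exact_mod_cast hG
  obtain ⟨σ, hσG, hσinj, hσA, hAσ⟩ := exists_reps A hG
  have hσ : σ.Nonempty := by
    obtain ⟨a, ha⟩ := hA
    obtain ⟨i, hi, -⟩ := hAσ a ha
    exact ⟨i, hi⟩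
  obtain ⟨r, hr, hmax⟩ := Finset.exists_max_image σ (fun i => (cl A G i).card) hσ
  set B := cl A G r with hB
  have hBr : ∀ a ∈ B, (G : ℤ) ∣ a - r := fun a ha => (mem_cl.1 ha).2
  have hBn : B.Nonempty := by
    obtain ⟨a, ha, h⟩ := hσA r hr
    exact ⟨a, mem_cl.2 ⟨ha, h⟩⟩
  have hlGd : ∀ c ∈ lG, (G : ℤ) ∣ c := by
    intro c hc
    obtain ⟨d, -, rfl⟩ := List.mem_map.1 hc
    exact dvd_mul_right _ _
  have hKd : ∀ a ∈ B, (G : ℤ) * G ∣ K * (a - r) := fun a ha =>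
    mul_dvd_mul (dvd_mul_right _ _) (hBr a ha)
  have piece : ∀ i ∈ σ, ((cl X G (t + b * i)).card : ℝ) + G * (F₁ * B.card) - G * C₁ ≤
      (cl X G (t + b * i) + Dil K B).card := by
    intro i hi
    set Xi := cl X G (t + b * i) with hXi
    set Y : ℤ → Finset ℤ := fun j => cl Xi (G * G) (t + b * i + G * j) with hY
    have hj : ∀ j ∈ Finset.Ico (0 : ℤ) G,
        ((Y j).card : ℝ) + F₁ * B.card - C₁ ≤ (Y j + Dil K B).card := by
      intro j _
      obtain ⟨a₁, ha₁, ha₁i⟩ := hσA i hi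
      obtain ⟨u, v, huv⟩ := hbG
      -- the class of `A` for which `t + b * a + SD lG B` falls into the class of `Y j`
      obtain ⟨a, ha, haz⟩ := hFD a₁ ha₁ (i + G * (u * (j - r * l.sum))) (by
        refine dvd_cong (dvd_sub (dvd_mul_right (G : ℤ) (u * (j - r * l.sum))) ha₁i) ?_
        ring)
      have hlsum : lG.sum = G * l.sum := by
        simpa using List.sum_map_mul_left l id (G : ℤ)
      have hmem : ∀ s ∈ SD lG B, (t + b * a) + s ∈ Y j := by
        intro s hs
        have hs' : (G : ℤ) * G ∣ t + b * a + s - (t + b * i + G * j) := by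
          have h1 := SD_cong hlGd hBr s hs
          rw [hlsum] at h1
          have h3 : (G : ℤ) * G ∣ (G : ℤ) * G * (-(v * (j - r * l.sum))) := dvd_mul_right _ _
          refine dvd_cong (dvd_add (dvd_add h1 (haz.mul_left b)) h3) ?_
          linear_combination (G : ℤ) * (j - r * l.sum) * huv
        have hs2 : (G : ℤ) ∣ t + b * a + s - (t + b * i) := by
          refine dvd_cong (dvd_add ((dvd_mul_right _ _).trans hs') (dvd_mul_right (G : ℤ) j)) ?_
          ring
        refine mem_cl.2 ⟨mem_cl.2 ⟨?_, hs2⟩, hs'⟩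
        rw [add_assoc]
        exact ht _ (mem_SD_cons.2 ⟨a, ha, s, SD_mono (cl_subset _ _ _) hs, rfl⟩)
      obtain ⟨B', Y', hB'n, hY', -, hBc, hYc, hc⟩ := rescale hG' hG' (F₁ * n) hBr
        (fun x hx => (mem_cl.1 hx).2) hBn hmem
      have := hIH B' Y' hB'n hY'
      rwa [hBc, hYc, hc] at this
    have h1 := Finset.sum_le_sum hj
    have hXc : Xi.card ≤ ∑ j ∈ Finset.Ico (0 : ℤ) G, (Y j).card := by
      refine card_le_sum fun x hx => ?_
      obtain ⟨k, hk⟩ := (mem_cl.1 hx).2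
      refine ⟨k % G, Finset.mem_Ico.2 ⟨Int.emod_nonneg _ hG', Int.emod_lt_of_pos _ hGpos⟩,
        mem_cl.2 ⟨hx, k / G, ?_⟩⟩
      have := Int.emod_add_mul_ediv k G
      linear_combination hk - (G : ℤ) * this
    have hYc : ∑ j ∈ Finset.Ico (0 : ℤ) G, (Y j + Dil K B).card ≤ (Xi + Dil K B).card := by
      refine sum_card_le (m := (G : ℤ) * G) (ν := fun j => t + b * i + G * j + K * r) ?_ ?_ ?_
      · intro j _
        exact Finset.add_subset_add_right (cl_subset _ _ _)
      · intro j _ y hy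
        simp only [Finset.mem_add, mem_Dil] at hy
        obtain ⟨x, hx, _, ⟨a, ha, rfl⟩, rfl⟩ := hy
        refine dvd_cong (dvd_add (mem_cl.1 hx).2 (hKd a ha)) ?_
        ring
      · intro j hj j' hj' h
        refine Ico_cong hj hj' ?_
        refine (mul_dvd_mul_iff_left hG').1 (dvd_cong h ?_)
        ring
    simp only [Finset.sum_sub_distrib, Finset.sum_add_distrib, Finset.sum_const, Int.card_Ico,
      nsmul_eq_mul, sub_zero, Int.toNat_natCast] at h1
    have hXc' : (Xi.card : ℝ) ≤ ∑ j ∈ Finset.Ico (0 : ℤ) G, ((Y j).card : ℝ) := by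
      exact_mod_cast hXc
    have hYc' : ∑ j ∈ Finset.Ico (0 : ℤ) G, ((Y j + Dil K B).card : ℝ) ≤
        (Xi + Dil K B).card := by exact_mod_cast hYc
    linarith
  have h1 := Finset.sum_le_sum piece
  have hXc : X.card ≤ ∑ i ∈ σ, (cl X G (t + b * i)).card := by
    refine card_le_sum fun x hx => ?_
    obtain ⟨a, ha, hxa⟩ := hX x hx
    obtain ⟨i, hi, hai⟩ := hAσ a ha
    refine ⟨i, hi, mem_cl.2 ⟨hx, dvd_cong (dvd_add hxa (hai.mul_left b)) ?_⟩⟩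
    ring
  have hYc : ∑ i ∈ σ, (cl X G (t + b * i) + Dil K B).card ≤ (X + Dil K A).card := by
    refine sum_card_le (m := (G : ℤ)) (ν := fun i => t + b * i) ?_ ?_ ?_
    · intro i _
      exact Finset.add_subset_add (cl_subset _ _ _) (Dil_mono K (cl_subset _ _ _))
    · intro i _ y hy
      simp only [Finset.mem_add, mem_Dil] at hy
      obtain ⟨x, hx, _, ⟨a, ha, rfl⟩, rfl⟩ := hy
      have : (G : ℤ) ∣ K * a := (dvd_mul_right _ _).mul_right _
      refine dvd_cong (dvd_add (mem_cl.1 hx).2 this) ?_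
      ring
    · intro i hi j hj h
      refine hσinj i hi j hj (hbG.symm.dvd_of_dvd_mul_left (dvd_cong h ?_))
      ring
  have hAc : A.card ≤ ∑ i ∈ σ, (cl A G i).card := by
    refine card_le_sum fun a ha => ?_
    obtain ⟨i, hi, hai⟩ := hAσ a ha
    exact ⟨i, hi, mem_cl.2 ⟨ha, hai⟩⟩
  have hAc2 : A.card ≤ σ.card * B.card := by
    refine hAc.trans ?_
    rw [← smul_eq_mul]
    exact Finset.sum_le_card_nsmul _ _ _ hmax
  simp only [Finset.sum_sub_distrib, Finset.sum_add_distrib, Finset.sum_const, nsmul_eq_mul] at h1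
  have hXc' : (X.card : ℝ) ≤ ∑ i ∈ σ, ((cl X G (t + b * i)).card : ℝ) := by exact_mod_cast hXc
  have hYc' : ∑ i ∈ σ, ((cl X G (t + b * i) + Dil K B).card : ℝ) ≤ (X + Dil K A).card := by
    exact_mod_cast hYc
  have hA' : (A.card : ℝ) ≤ σ.card * B.card := by exact_mod_cast hAc2
  have h2 : (G * F₁ : ℝ) * A.card ≤ G * F₁ * (σ.card * B.card) := by gcongr
  have h3 : (σ.card : ℝ) * (G * C₁) ≤ G * (G * C₁) := by gcongr
  have e : (σ.card : ℝ) * (G * (F₁ * B.card)) = G * F₁ * (σ.card * B.card) := by ring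
  linarith

/-- Pairs `(X, A)` with `A` nonempty such that `X` contains a translate of `SD l A`. -/
def Adm (l : List ℤ) (p : Finset ℤ × Finset ℤ) : Prop :=
  p.2.Nonempty ∧ ∃ t, ∀ s ∈ SD l p.2, t + s ∈ p.1

/-- The amount by which `X + K·A` falls short of `|X| + F |A|` for `p = (X, A)`. -/
def defect (F : ℕ) (K : ℤ) (p : Finset ℤ × Finset ℤ) : ℝ :=
  F * p.2.card + p.1.card - (p.1 + Dil K p.2).card

/-- The trichotomy needed to apply `iter` to the defect of admissible pairs. -/
lemma defect_step {b : ℤ} {l : List ℤ} {G F₁ : ℕ} {n : ℤ} {C₁ : ℝ}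
    (hG : 0 < G) (hF₁ : 0 < F₁) (hn : n ≠ 0) (hbG : IsCoprime b (G : ℤ)) (hC₁ : 0 ≤ C₁)
    (hcop : ∀ p : ℕ, p.Prime → p ∣ G → ¬ (p : ℤ) ∣ n ∧
      (¬ p ∣ F₁ ∨ ∃ c ∈ l, ¬ (p : ℤ) ∣ c))
    (hIH : ∀ A X : Finset ℤ, A.Nonempty → (∃ t, ∀ s ∈ SD l A, t + s ∈ X) →
      (X.card : ℝ) + F₁ * A.card - C₁ ≤ (X + Dil (F₁ * n) A).card)
    (x : Finset ℤ × Finset ℤ) (hx : Adm (b :: l.map ((G : ℤ) * ·)) x) :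
    defect (G * F₁) ((G : ℤ) * (F₁ * n)) x ≤ G * (G * C₁) + G * F₁ ∨
    (∃ (s : Finset ℤ) (y : ℤ → Finset ℤ × Finset ℤ), s.card ≤ G ∧
      (∀ i ∈ s, Adm (b :: l.map ((G : ℤ) * ·)) (y i)) ∧
      ∑ i ∈ s, ((y i).2.card : ℝ) ≤ x.2.card ∧
      defect (G * F₁) ((G : ℤ) * (F₁ * n)) x ≤
        ∑ i ∈ s, defect (G * F₁) ((G : ℤ) * (F₁ * n)) (y i)
          - 1 / (2 * (G * F₁)) * x.2.card + G) ∨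
    ∃ x', Adm (b :: l.map ((G : ℤ) * ·)) x' ∧ (x'.2.card : ℝ) = x.2.card ∧
      defect (G * F₁) ((G : ℤ) * (F₁ * n)) x ≤ defect (G * F₁) ((G : ℤ) * (F₁ * n)) x' ∧
      spread x'.2 < spread x.2 := by
  obtain ⟨X, A⟩ := x
  obtain ⟨hA, t, ht⟩ := hx
  dsimp only at hA ht ⊢
  set lG := l.map ((G : ℤ) * ·) with hlG
  set K : ℤ := (G : ℤ) * (F₁ * n) with hK
  have hG' : (G : ℤ) ≠ 0 := by exact_mod_cast hG.ne'
  have hK0 : K ≠ 0 := mul_ne_zero hG' (mul_ne_zero (by exact_mod_cast hF₁.ne') hn)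
  have hGK : (G : ℤ) ∣ K := dvd_mul_right _ _
  have hG1 : (1 : ℝ) ≤ G := by exact_mod_cast hG
  have hF1 : (1 : ℝ) ≤ F₁ := by exact_mod_cast hF₁
  have hGF : (1 : ℝ) ≤ G * F₁ := one_le_mul_of_one_le_of_one_le hG1 hF1
  have hlGd : ∀ c ∈ lG, (G : ℤ) ∣ c := by
    intro c hc
    obtain ⟨d, -, rfl⟩ := List.mem_map.1 hc
    exact dvd_mul_right _ _
  have hSDc : ∀ s ∈ SD lG A, (G : ℤ) ∣ s := by
    intro s hs
    simpa using SD_cong (m := 1) (i := 0) hlGd (by simp) s hs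
  have hXn : X.Nonempty := by
    obtain ⟨s, hs⟩ := SD_nonempty (l := b :: lG) hA
    exact ⟨_, ht s hs⟩
  have hA1 : 1 ≤ A.card := Finset.card_pos.2 hA
  have hδ : 1 / (2 * ((G : ℝ) * F₁)) * A.card ≤ A.card := by
    have : 1 / (2 * ((G : ℝ) * F₁)) ≤ 1 := by
      rw [div_le_one (by linarith)]
      linarith
    exact mul_le_of_le_one_left (by positivity) this
  have hδ2 : ((G : ℝ) * F₁) * (1 / (2 * ((G : ℝ) * F₁)) * A.card) = A.card / 2 := by
    field_simp
  set δ : ℝ := 1 / (2 * ((G : ℝ) * F₁)) with hδdef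
  have hcd := add_card_le hXn (Dil_nonempty K hA)
  rw [card_Dil _ hK0] at hcd
  -- removal of a class of `X` gives the second alternative with a single piece
  have single : (∃ X' : Finset ℤ, (∀ s ∈ SD (b :: lG) A, t + s ∈ X') ∧
      (X' + Dil K A).card + X.card + A.card ≤ (X + Dil K A).card + X'.card + 1) →
      ∃ (s : Finset ℤ) (y : ℤ → Finset ℤ × Finset ℤ), s.card ≤ G ∧
      (∀ i ∈ s, Adm (b :: lG) (y i)) ∧ ∑ i ∈ s, ((y i).2.card : ℝ) ≤ A.card ∧
      defect (G * F₁) K (X, A) ≤ ∑ i ∈ s, defect (G * F₁) K (y i) - δ * A.card + G := by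
    rintro ⟨X', hX', hc⟩
    refine ⟨{0}, fun _ => (X', A), by rwa [Finset.card_singleton], fun _ _ => ⟨hA, t, hX'⟩, by simp, ?_⟩
    have hc' : ((X' + Dil K A).card : ℝ) + X.card + A.card ≤
      (X + Dil K A).card + X'.card + 1 := by exact_mod_cast hc
    simp only [defect, Finset.sum_singleton]
    linarith
  by_cases hA2 : A.card = 1
  · left
    have hcd' : (X.card : ℝ) + A.card ≤ (X + Dil K A).card + 1 := by exact_mod_cast hcd
    simp only [defect, hA2] at hcd' ⊢
    have : 0 ≤ (G : ℝ) * (G * C₁) := by positivity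
    push_cast at hcd' ⊢
    linarith
  -- if `A` lies in one class mod a prime `p ∣ G`, either `X` does too and both are rescaled, or
  -- a class of `X` can be removed
  by_cases h2 : ∃ p : ℕ, p.Prime ∧ p ∣ G ∧ ∃ r : ℤ, ∀ a ∈ A, (p : ℤ) ∣ a - r
  · obtain ⟨p, hp, hpG, r, hr⟩ := h2
    have hpG' : (p : ℤ) ∣ G := Int.natCast_dvd_natCast.2 hpG
    have hp0 : (p : ℤ) ≠ 0 := by exact_mod_cast hp.ne_zero
    by_cases h3 : ∃ c : ℤ, ∀ x ∈ X, (p : ℤ) ∣ x - c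
    · right; right
      obtain ⟨c, hc⟩ := h3
      have hid : (b :: lG).map ((1 : ℤ) * ·) = b :: lG := by simp
      obtain ⟨A', X', hA'n, hX', hAA', hAc, hXc, hsum⟩ := rescale (l := b :: lG) (u := 1)
        (t := t) one_ne_zero hp0 K hr (by simpa using hc) hA (by rwa [hid])
      refine ⟨(X', A'), ⟨hA'n, hX'⟩, by simp [hAc], ?_, ?_⟩
      · simp only [defect, hAc, hXc, hsum, one_mul]
        exact le_rfl
      · dsimp only
        rw [hAA']
        exact spread_lt (by exact_mod_cast hp.two_le) r (by omega)
    · right; left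
      apply single
      push Not at h3
      obtain ⟨x, hx, hxc⟩ := h3 (t + r * (b :: lG).sum)
      refine remove_class (q := (p : ℤ)) (e := x) hK0 hA ht ⟨x, hx, by simp⟩
        (fun a _ a' _ => (hpG'.trans hGK).mul_right _) ?_
      intro s hs h
      apply hxc
      have h4 := SD_cong (l := b :: lG) (d := 1) (by simp) hr s hs
      rw [one_mul] at h4
      refine dvd_cong (dvd_sub h4 h) ?_
      ring
  by_cases h3 : ∃ x ∈ X, ∀ a ∈ A, ¬ (G : ℤ) ∣ x - (t + b * a)
  · right; left
    apply single
    obtain ⟨x, hx, hxa⟩ := h3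
    refine remove_class (q := (G : ℤ)) (e := x) hK0 hA ht ⟨x, hx, by simp⟩
      (fun a _ a' _ => hGK.mul_right _) ?_
    intro s hs h
    obtain ⟨a, ha, y, hy, rfl⟩ := mem_SD_cons.1 hs
    apply hxa a ha
    refine dvd_cong (dvd_sub (hSDc y hy) h) ?_
    ring
  push Not at h2 h3
  by_cases h4 : ∀ a ∈ A, ∀ z, (G : ℤ) ∣ z - a → ∃ a' ∈ A, (G : ℤ) * G ∣ a' - z
  · left
    have := term_bound hG hF₁ hbG hC₁ ht hA hIH h3 h4
    simp only [defect]
    push_cast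
    have h0 : 0 ≤ (G : ℝ) * F₁ := by positivity
    linarith
  right; left
  obtain ⟨σ, hσG, hσinj, hσA, hAσ⟩ := exists_reps A hG
  set d : ℤ → ℝ := fun i => (G * F₁ : ℕ) * (cl A G i).card + (cl X G (t + b * i)).card -
    (cl X G (t + b * i) + Dil K A).card with hd
  have hmemX : ∀ i, ∀ s ∈ SD (b :: lG) (cl A G i), t + s ∈ cl X G (t + b * i) := by
    intro i s hs
    refine mem_cl.2 ⟨ht s (SD_mono (cl_subset _ _ _) hs), ?_⟩
    obtain ⟨a, ha, y, hy, rfl⟩ := mem_SD_cons.1 hs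
    have h5 := hSDc y (SD_mono (cl_subset _ _ _) hy)
    refine dvd_cong (dvd_add ((mem_cl.1 ha).2.mul_left b) h5) ?_
    ring
  have hclne : ∀ i ∈ σ, (cl A G i).Nonempty := by
    intro i hi
    obtain ⟨a, ha, h⟩ := hσA i hi
    exact ⟨a, mem_cl.2 ⟨ha, h⟩⟩
  have hP : ∀ i ∈ σ, Adm (b :: lG) (cl X G (t + b * i), cl A G i) :=
    fun i hi => ⟨hclne i hi, t, hmemX i⟩
  have hdD : ∀ i ∈ σ, d i ≤ defect (G * F₁) K (cl X G (t + b * i), cl A G i) := by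
    intro i _
    have : (cl X G (t + b * i) + Dil K (cl A G i)).card ≤ (cl X G (t + b * i) + Dil K A).card :=
      Finset.card_le_card (Finset.add_subset_add_left (Dil_mono K (cl_subset _ _ _)))
    have : ((cl X G (t + b * i) + Dil K (cl A G i)).card : ℝ) ≤
      (cl X G (t + b * i) + Dil K A).card := by exact_mod_cast this
    simp only [hd, defect]
    linarith
  have hS : ∑ i ∈ σ, ((cl A G i).card : ℝ) ≤ A.card := by
    have : ∑ i ∈ σ, (cl A G i).card ≤ A.card :=
      sum_card_le (m := (G : ℤ)) (ν := fun i => i) (fun i _ => cl_subset _ _ _)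
        (fun i _ y hy => (mem_cl.1 hy).2) hσinj
    exact_mod_cast this
  have hT : defect (G * F₁) K (X, A) ≤ ∑ i ∈ σ, d i := by
    have hXc : X.card ≤ ∑ i ∈ σ, (cl X G (t + b * i)).card := by
      refine card_le_sum fun x hx => ?_
      obtain ⟨a, ha, hxa⟩ := h3 x hx
      obtain ⟨i, hi, hai⟩ := hAσ a ha
      refine ⟨i, hi, mem_cl.2 ⟨hx, dvd_cong (dvd_add hxa (hai.mul_left b)) ?_⟩⟩
      ring
    have hYc : ∑ i ∈ σ, (cl X G (t + b * i) + Dil K A).card ≤ (X + Dil K A).card := by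
      refine sum_card_le (m := (G : ℤ)) (ν := fun i => t + b * i) ?_ ?_ ?_
      · intro i _
        exact Finset.add_subset_add_right (cl_subset _ _ _)
      · intro i _ y hy
        simp only [Finset.mem_add, mem_Dil] at hy
        obtain ⟨x, hx, _, ⟨a, ha, rfl⟩, rfl⟩ := hy
        refine dvd_cong (dvd_add (mem_cl.1 hx).2 (hGK.mul_right a)) ?_
        ring
      · intro i hi j hj h
        refine hσinj i hi j hj (hbG.symm.dvd_of_dvd_mul_left (dvd_cong h ?_))
        ring
    have hAc : A.card ≤ ∑ i ∈ σ, (cl A G i).card := by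
      refine card_le_sum fun a ha => ?_
      obtain ⟨i, hi, hai⟩ := hAσ a ha
      exact ⟨i, hi, mem_cl.2 ⟨ha, hai⟩⟩
    have hXc' : (X.card : ℝ) ≤ ∑ i ∈ σ, ((cl X G (t + b * i)).card : ℝ) := by exact_mod_cast hXc
    have hYc' : ∑ i ∈ σ, ((cl X G (t + b * i) + Dil K A).card : ℝ) ≤ (X + Dil K A).card := by
      exact_mod_cast hYc
    have hAc' : (A.card : ℝ) ≤ ∑ i ∈ σ, ((cl A G i).card : ℝ) := by exact_mod_cast hAc
    have : ((G * F₁ : ℕ) : ℝ) * A.card ≤ (G * F₁ : ℕ) * ∑ i ∈ σ, ((cl A G i).card : ℝ) := by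
      gcongr
    simp only [hd, defect, Finset.sum_sub_distrib, Finset.sum_add_distrib, ← Finset.mul_sum]
    linarith
  -- it suffices to improve a single piece
  suffices H : ∃ i₀ ∈ σ, ∃ y₀ : Finset ℤ × Finset ℤ, Adm (b :: lG) y₀ ∧
      (y₀.2.card : ℝ) ≤ (cl A G i₀).card ∧ d i₀ ≤ defect (G * F₁) K y₀ - δ * A.card + 1 by
    obtain ⟨i₀, hi₀, y₀, hy₀, hsz, hd₀⟩ := H
    obtain ⟨y, hy, hyS, hyT⟩ := assemble (sz := fun p : Finset ℤ × Finset ℤ => (p.2.card : ℝ))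
      (D := defect (G * F₁) K) hi₀ hP hy₀ hsz hdD hd₀ hS hT
    exact ⟨σ, y, hσG, hy, hyS, by linarith⟩
  set v : ℕ := ⌈δ * A.card⌉₊ with hv
  have hvle : δ * A.card ≤ v := Nat.le_ceil _
  by_cases h5 : ∃ i₀ ∈ σ, (cl A G i₀).card < v
  · obtain ⟨i₀, hi₀, hlt⟩ := h5
    have hlt' : ((cl A G i₀).card : ℝ) < δ * A.card := Nat.lt_ceil.1 hlt
    obtain ⟨a, ha⟩ := hclne i₀ hi₀
    -- a small piece can be replaced by a single point, which has nonnegative defect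
    refine ⟨i₀, hi₀, ({t + a * (b :: lG).sum}, {a}), ⟨by simp, t, ?_⟩, ?_, ?_⟩
    · dsimp only
      rw [SD_singleton]
      simp
    · have : 1 ≤ (cl A G i₀).card := Finset.card_pos.2 ⟨a, ha⟩
      simpa using this
    · have hne : (cl X G (t + b * i₀)).Nonempty :=
        ⟨_, hmemX i₀ _ (const_mem_SD ha)⟩
      have h6 := add_card_le hne (Dil_nonempty K hA)
      rw [card_Dil _ hK0] at h6
      have h6' : ((cl X G (t + b * i₀)).card : ℝ) + A.card ≤
        (cl X G (t + b * i₀) + Dil K A).card + 1 := by exact_mod_cast h6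
      have h7 : (G * F₁ : ℝ) * (cl A G i₀).card ≤ G * F₁ * (δ * A.card) := by gcongr
      have h8 : δ * A.card ≤ A.card / 2 := by
        rw [← hδ2]
        exact le_mul_of_one_le_left (by positivity) hGF
      simp only [hd, defect, Dil_singleton, Finset.singleton_add_singleton,
        Finset.card_singleton]
      push_cast
      rw [hδ2] at h7
      linarith
  push Not at h5 h4
  obtain ⟨a₀, ha₀, z, hz, hzA⟩ := h4
  obtain ⟨i₀, hi₀, hai⟩ := hAσ a₀ ha₀
  have hcl : ∀ {a i : ℤ}, (G : ℤ) ∣ a - i → cl A G a = cl A G i := by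
    intro a i h
    ext y
    rw [mem_cl, mem_cl]
    refine and_congr_right fun _ => ⟨fun h' => dvd_cong (dvd_add h' h) ?_,
      fun h' => dvd_cong (dvd_sub h' h) ?_⟩ <;> ring
  have hclX : cl X G (t + b * a₀) = cl X G (t + b * i₀) := by
    ext y
    rw [mem_cl, mem_cl]
    refine and_congr_right fun _ => ⟨fun h' => dvd_cong (dvd_add h' (hai.mul_left b)) ?_,
      fun h' => dvd_cong (dvd_sub h' (hai.mul_left b)) ?_⟩ <;> ring
  obtain ⟨X', hX', hc⟩ := piece_gain (v := v) hG hF₁ hn hbG ht ha₀ hcop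
    (fun p hp hpG => h2 p hp hpG a₀) hz hzA (by
      intro x hx
      obtain ⟨i, hi, h⟩ := hAσ x hx
      rw [hcl h]
      exact h5 i hi)
  rw [← hK, hcl hai, hclX] at hc
  rw [hcl hai] at hX'
  refine ⟨i₀, hi₀, (X', cl A G i₀), ⟨hclne i₀ hi₀, t, hX'⟩, le_rfl, ?_⟩
  have hc' : ((X' + Dil K (cl A G i₀)).card : ℝ) + (cl X G (t + b * i₀)).card + v ≤
    (cl X G (t + b * i₀) + Dil K A).card + X'.card + 1 := by exact_mod_cast hc
  simp only [hd, defect]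
  linarith

/-- If `X` contains a translate of `SD l A`, then `X + F n·A` has at least `|X| + F |A| - O(1)`
elements, provided no prime factor of `F` divides `n` or the whole of `l`. -/
lemma extend_bound (l : List ℤ) : ∀ (F : ℕ) (n : ℤ), 0 < F → n ≠ 0 →
    (∀ p : ℕ, p.Prime → p ∣ F → ¬ (p : ℤ) ∣ n) →
    (∀ p : ℕ, p.Prime → p ∣ F → ∃ a ∈ l, ¬ (p : ℤ) ∣ a) →
    ∃ C : ℝ, 0 ≤ C ∧ ∀ A X : Finset ℤ, A.Nonempty → (∃ t, ∀ s ∈ SD l A, t + s ∈ X) →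
      (X.card : ℝ) + F * A.card - C ≤ (X + Dil (F * n) A).card := by
  induction hlen : l.length generalizing l with
  | zero =>
    intro F n hF hn _ hFl
    have hl : l = [] := List.length_eq_zero_iff.1 hlen
    subst hl
    have hF1 : F = 1 := by
      by_contra h
      obtain ⟨p, hp, hpF⟩ := Nat.exists_prime_and_dvd h
      simpa using hFl p hp hpF
    subst hF1
    refine ⟨1, zero_le_one, ?_⟩
    rintro A X hA ⟨t, ht⟩
    have hX : X.Nonempty := ⟨_, ht 0 (by simp [SD])⟩
    have hn' : ((1 : ℕ) : ℤ) * n ≠ 0 := by simpa using hn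
    have h := add_card_le hX (Dil_nonempty (((1 : ℕ) : ℤ) * n) hA)
    rw [card_Dil _ hn'] at h
    have h' : (X.card : ℝ) + A.card ≤ (X + Dil (((1 : ℕ) : ℤ) * n) A).card + 1 := by
      exact_mod_cast h
    rw [Nat.cast_one, one_mul]
    linarith
  | succ k ih =>
    intro F n hF hn hFn hFl
    obtain ⟨b, l', rfl⟩ : ∃ b l', l = b :: l' := by
      cases l with
      | nil => simp at hlen
      | cons b l' => exact ⟨b, l', rfl⟩
    set G := Nat.gcd (lg l') F with hGdef
    have hG : 0 < G := Nat.gcd_pos_of_pos_right _ hF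
    have hGl : ∀ c ∈ l', (G : ℤ) ∣ c := (dvd_lg G l').1 (Nat.gcd_dvd_left _ _)
    obtain ⟨F₁, hF₁⟩ : G ∣ F := Nat.gcd_dvd_right _ _
    have hF₁pos : 0 < F₁ := by
      rcases Nat.eq_zero_or_pos F₁ with h | h
      · rw [h] at hF₁; omega
      · exact h
    set μ := l'.map (· / (G : ℤ)) with hμ
    have hl' : l' = μ.map ((G : ℤ) * ·) := by
      rw [hμ, List.map_map]
      symm
      rw [List.map_congr_left (g := id)]
      · simp
      · intro c hc
        exact Int.mul_ediv_cancel' (hGl c hc)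
    have hcopμ : ∀ p : ℕ, p.Prime → p ∣ F₁ → ∃ c ∈ μ, ¬ (p : ℤ) ∣ c := by
      intro p hp hpF
      by_contra! h
      have h1 : G * p ∣ lg l' := by
        rw [dvd_lg]
        intro c hc
        rw [hl'] at hc
        obtain ⟨d, hd, rfl⟩ := List.mem_map.1 hc
        push_cast
        exact mul_dvd_mul_left _ (h d hd)
      have h2 : G * p ∣ F := by
        rw [hF₁]
        exact mul_dvd_mul_left _ hpF
      have h3 : G * p ∣ G * 1 := by
        rw [mul_one]
        exact Nat.dvd_gcd h1 h2
      exact hp.one_lt.ne' (Nat.dvd_one.1 (Nat.dvd_of_mul_dvd_mul_left hG h3))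
    have hF₁F : F₁ ∣ F := ⟨G, by rw [mul_comm]; exact hF₁⟩
    have hGF : G ∣ F := ⟨F₁, hF₁⟩
    obtain ⟨C₁, hC₁, hIH⟩ := ih μ (by rw [hμ, List.length_map]; simpa using hlen) F₁ n hF₁pos hn
      (fun p hp h => hFn p hp (h.trans hF₁F)) hcopμ
    have hbG : IsCoprime b (G : ℤ) := by
      rw [Int.isCoprime_iff_gcd_eq_one]
      by_contra h
      obtain ⟨p, hp, hpg⟩ := Nat.exists_prime_and_dvd h
      have hpb : (p : ℤ) ∣ b := (Int.natCast_dvd_natCast.2 hpg).trans (Int.gcd_dvd_left _ _)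
      have hpG : (p : ℤ) ∣ G := (Int.natCast_dvd_natCast.2 hpg).trans (Int.gcd_dvd_right _ _)
      obtain ⟨a, ha, hpa⟩ := hFl p hp ((Int.natCast_dvd_natCast.1 hpG).trans hGF)
      rcases List.mem_cons.1 ha with rfl | ha
      · exact hpa hpb
      · exact hpa (hpG.trans (hGl a ha))
    have hcop : ∀ p : ℕ, p.Prime → p ∣ G → ¬ (p : ℤ) ∣ n ∧
        (¬ p ∣ F₁ ∨ ∃ c ∈ μ, ¬ (p : ℤ) ∣ c) := by
      intro p hp hpG
      refine ⟨hFn p hp (hpG.trans hGF), ?_⟩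
      by_cases h : p ∣ F₁
      · exact Or.inr (hcopμ p hp h)
      · exact Or.inl h
    have hstep := defect_step hG hF₁pos hn hbG hC₁ hcop hIH
    have hGFpos : (0 : ℝ) < G * F₁ := by positivity
    have hK0 : (G : ℤ) * (F₁ * n) ≠ 0 := by
      have h1 : (G : ℤ) ≠ 0 := by exact_mod_cast hG.ne'
      have h2 : (F₁ : ℤ) ≠ 0 := by exact_mod_cast hF₁pos.ne'
      exact mul_ne_zero h1 (mul_ne_zero h2 hn)
    obtain ⟨C, hC⟩ := iter (Adm (b :: μ.map ((G : ℤ) * ·))) (fun p => (p.2.card : ℝ))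
      (defect (G * F₁) ((G : ℤ) * (F₁ * n))) (fun p => spread p.2) (G * F₁)
      (1 / (2 * (G * F₁))) (G * (G * C₁) + G * F₁) G (by positivity)
      (fun x _ => Nat.cast_nonneg _) (by
        rintro ⟨X, A⟩ ⟨hA, -⟩
        have : X.card ≤ (X + Dil ((G : ℤ) * (F₁ * n)) A).card :=
          Finset.card_le_card_add_right (Dil_nonempty _ hA)
        have : (X.card : ℝ) ≤ (X + Dil ((G : ℤ) * (F₁ * n)) A).card := by exact_mod_cast this
        simp only [defect]
        push_cast
        linarith) hstep
    refine ⟨max C 0, le_max_right _ _, ?_⟩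
    rintro A X hA ⟨t, ht⟩
    have h := hC (X, A) ⟨hA, t, by rwa [← hl']⟩
    have h0 := le_max_left C 0
    simp only [defect] at h
    rw [← hF₁, ← mul_assoc, show (G : ℤ) * F₁ = F by rw [hF₁]; push_cast; ring] at h
    linarith

lemma cl_congr {A : Finset ℤ} {m a i : ℤ} (h : m ∣ a - i) : cl A m a = cl A m i := by
  ext y
  rw [mem_cl, mem_cl]
  refine and_congr_right fun _ => ⟨fun h' => dvd_cong (dvd_add h' h) ?_,
    fun h' => dvd_cong (dvd_sub h' h) ?_⟩ <;> ring

lemma SD_cons (a : ℤ) (l : List ℤ) (A : Finset ℤ) : SD (a :: l) A = Dil a A + SD l A := rfl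

lemma card_SD_map (l : List ℤ) (A : Finset ℤ) {u m : ℤ} (hu : u ≠ 0) (hm : m ≠ 0) (r : ℤ) :
    (SD (l.map (u * ·)) (A.image (fun x => m * x + r))).card = (SD l A).card := by
  rw [SD_map_affine, card_affine _ (mul_ne_zero hu hm)]

lemma card_SD_map_mul (l : List ℤ) (A : Finset ℤ) {u : ℤ} (hu : u ≠ 0) :
    (SD (l.map (u * ·)) A).card = (SD l A).card := by
  simpa using card_SD_map l A hu one_ne_zero 0

/-! ### The bound over the integers -/

/-- If the class of `a₀` mod `g` is not fully distributed mod `g ^ 2`, the part of the sumset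
coming from that class is larger than the sumset of the piece alone. -/
lemma class_gain {a : ℤ} {l : List ℤ} {g : ℕ} {a₀ z : ℤ} {A : Finset ℤ} {v : ℕ}
    (hg : 0 < g) (hag : IsCoprime a (g : ℤ)) (hl0 : ∀ c ∈ l, c ≠ 0) (ha₀ : a₀ ∈ A)
    (hcop : ∀ p : ℕ, p.Prime → p ∣ g → ∃ c ∈ l, ¬ (p : ℤ) ∣ c)
    (hsing : ∀ p : ℕ, p.Prime → p ∣ g → ∃ x ∈ A, ¬ (p : ℤ) ∣ x - a₀)
    (hz : (g : ℤ) ∣ z - a₀) (hzA : ∀ a ∈ A, ¬ (g : ℤ) * g ∣ a - z)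
    (hv : ∀ x ∈ A, v ≤ (cl A g x).card) :
    (SD (a :: l.map ((g : ℤ) * ·)) (cl A g a₀)).card + v ≤
      (Dil a (cl A g a₀) + SD (l.map ((g : ℤ) * ·)) A).card := by
  set lG := l.map ((g : ℤ) * ·) with hlG
  set A₀ := cl A g a₀ with hA₀
  have hg' : (g : ℤ) ≠ 0 := by exact_mod_cast hg.ne'
  have ha₀A₀ : a₀ ∈ A₀ := mem_cl.2 ⟨ha₀, by simp⟩
  have hlGd : ∀ c ∈ lG, (g : ℤ) ∣ c := by
    intro c hc
    obtain ⟨d, -, rfl⟩ := List.mem_map.1 hc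
    exact dvd_mul_right _ _
  have hA₀c : ∀ a ∈ A₀, (g : ℤ) ∣ a - a₀ := fun a ha => (mem_cl.1 ha).2
  by_cases h1 : ∃ d ∈ l, ∃ x ∈ A, ∃ a₁ ∈ A₀, ∀ a' ∈ A₀,
      ¬ (g : ℤ) * g ∣ a * a₁ + g * (d * (x - a₀)) - a * a'
  · obtain ⟨d, hd, x, hx, a₁, ha₁, hno⟩ := h1
    have hgd : (g : ℤ) * d ≠ 0 := mul_ne_zero hg' (hl0 d hd)
    set r : ℤ := a * a₁ + (a₀ * lG.sum - g * d * a₀) with hr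
    have hdisj : Disjoint (SD (a :: lG) A₀) ((cl A g x).image (fun y => g * d * y + r)) := by
      rw [Finset.disjoint_left]
      intro y hy hy'
      obtain ⟨a', ha', s, hs, rfl⟩ := mem_SD_cons.1 hy
      obtain ⟨x', hx', h⟩ := Finset.mem_image.1 hy'
      apply hno a' ha'
      have e1 := SD_cong hlGd hA₀c s hs
      have e2 : (g : ℤ) * g ∣ (g * d) * (x' - x) :=
        mul_dvd_mul (dvd_mul_right _ _) (mem_cl.1 hx').2
      refine dvd_cong (dvd_sub e1 e2) ?_
      linear_combination h + hr
    have hsub : SD (a :: lG) A₀ ∪ (cl A g x).image (fun y => g * d * y + r) ⊆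
        Dil a A₀ + SD lG A := by
      refine Finset.union_subset ?_ ?_
      · rw [SD_cons]
        exact Finset.add_subset_add_left (SD_mono (cl_subset _ _ _))
      · intro y hy
        obtain ⟨x', hx', rfl⟩ := Finset.mem_image.1 hy
        refine Finset.mem_add.2 ⟨a * a₁, mem_Dil.2 ⟨a₁, ha₁, rfl⟩, _,
          swap_mem_SD ha₀ (mem_cl.1 hx').1 (List.mem_map_of_mem hd), ?_⟩
        rw [hr]
        ring
    have h2 := Finset.card_le_card hsub
    rw [Finset.card_union_of_disjoint hdisj, card_affine _ hgd] at h2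
    have := hv x hx
    omega
  push Not at h1
  -- otherwise the residues of `a·A₀` mod `g ^ 2` fill a whole class mod `g`
  exfalso
  let Q : ℤ → Prop := fun w => ∃ a' ∈ A₀, (g : ℤ) * g ∣ w - a * a'
  let S : ℤ → Prop := fun h => ∃ d ∈ l, ∃ x ∈ A, h = d * (x - a₀)
  have hper : ∀ w w', (g : ℤ) * g ∣ w - w' → Q w → Q w' := by
    rintro w w' h ⟨x, hx, hwx⟩
    refine ⟨x, hx, ?_⟩
    have := dvd_sub hwx h
    rwa [sub_sub_sub_cancel_left] at this
  have hS : ∀ h, S h → ∀ w, Q w → Q (w + g * h) := by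
    rintro h ⟨d, hd, x, hx, rfl⟩ w ⟨a₁, ha₁, hw⟩
    obtain ⟨a', ha', h⟩ := h1 d hd x hx a₁ ha₁
    refine ⟨a', ha', dvd_cong (dvd_add hw h) ?_⟩
    ring
  have hSc : ∀ p : ℕ, p.Prime → p ∣ g → ∃ h, S h ∧ ¬ (p : ℤ) ∣ h := by
    intro p hp hpg
    obtain ⟨x, hx, hpx⟩ := hsing p hp hpg
    obtain ⟨d, hd, hpd⟩ := hcop p hp hpg
    refine ⟨_, ⟨d, hd, x, hx, rfl⟩, ?_⟩
    rw [(Nat.prime_iff_prime_int.1 hp).dvd_mul]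
    tauto
  obtain ⟨k, hk⟩ := hz
  have hQ : Q (a * a₀) := ⟨a₀, ha₀A₀, by simp⟩
  obtain ⟨a', ha', h⟩ := translate_all hg hper hS hSc _ (a * k) hQ
  apply hzA a' (mem_cl.1 ha').1
  have h4 : (g : ℤ) * g ∣ a * (a' - z) := by
    rw [← dvd_neg]
    refine dvd_cong h ?_
    rw [show z = a₀ + g * k by linear_combination hk]
    ring
  exact (IsCoprime.mul_right hag hag).symm.dvd_of_dvd_mul_left h4

/-- The contribution of one class of `A` mod `g` that is fully distributed mod `g ^ 2`: its parts
mod `g ^ 2` are nonempty, and each contributes `|SD l A_i| + |a| |A_{ij}| - C`. -/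
lemma class_full {a : ℤ} {l : List ℤ} {g L' : ℕ} {i : ℤ} {A : Finset ℤ} {C C' : ℝ}
    (hg : 0 < g) (hag : IsCoprime a (g : ℤ))
    (hIH : ∀ A : Finset ℤ, A.Nonempty → (L' : ℝ) * A.card - C' ≤ (SD l A).card)
    (hE : ∀ A X : Finset ℤ, A.Nonempty → (∃ t, ∀ s ∈ SD (l.map ((g : ℤ) * ·)) A, t + s ∈ X) →
      (X.card : ℝ) + a.natAbs * A.card - C ≤ (X + Dil a A).card)
    (hFD : ∀ z, (g : ℤ) ∣ z - i → ∃ a' ∈ A, (g : ℤ) * g ∣ a' - z) :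
    ((g * L' + a.natAbs : ℕ) : ℝ) * (cl A g i).card - g * (C' + C) ≤
      (Dil a (cl A g i) + SD (l.map ((g : ℤ) * ·)) A).card := by
  set lG := l.map ((g : ℤ) * ·) with hlG
  set Ai := cl A g i with hAi
  set X := SD lG Ai with hX
  have hg' : (g : ℤ) ≠ 0 := by exact_mod_cast hg.ne'
  have hgpos : (0 : ℤ) < g := by exact_mod_cast hg
  have hlGd : ∀ c ∈ lG, (g : ℤ) ∣ c := by
    intro c hc
    obtain ⟨d, -, rfl⟩ := List.mem_map.1 hc
    exact dvd_mul_right _ _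
  have hXc : ∀ s ∈ X, (g : ℤ) * g ∣ s - i * lG.sum :=
    SD_cong hlGd fun a ha => (mem_cl.1 ha).2
  set B : ℤ → Finset ℤ := fun j => cl A (g * g) (i + g * j) with hB
  have hBsub : ∀ j, B j ⊆ Ai := by
    intro j y hy
    obtain ⟨hy1, hy2⟩ := mem_cl.1 hy
    refine mem_cl.2 ⟨hy1, dvd_cong (dvd_add ((dvd_mul_right _ _).trans hy2)
      (dvd_mul_right (g : ℤ) j)) ?_⟩
    ring
  have hj : ∀ j ∈ Finset.Ico (0 : ℤ) g,
      (X.card : ℝ) + a.natAbs * (B j).card - C ≤ (X + Dil a (B j)).card := by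
    intro j _
    obtain ⟨y, hy, hyz⟩ := hFD (i + g * j) (by simp)
    exact hE _ _ ⟨y, mem_cl.2 ⟨hy, hyz⟩⟩
      ⟨0, fun s hs => by rw [zero_add]; exact SD_mono (hBsub j) hs⟩
  have h1 := Finset.sum_le_sum hj
  have hAc : Ai.card ≤ ∑ j ∈ Finset.Ico (0 : ℤ) g, (B j).card := by
    refine card_le_sum fun x hx => ?_
    obtain ⟨hxA, k, hk⟩ := mem_cl.1 hx
    refine ⟨k % g, Finset.mem_Ico.2 ⟨Int.emod_nonneg _ hg', Int.emod_lt_of_pos _ hgpos⟩,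
      mem_cl.2 ⟨hxA, k / g, ?_⟩⟩
    have := Int.emod_add_mul_ediv k g
    linear_combination hk - (g : ℤ) * this
  have hYc : ∑ j ∈ Finset.Ico (0 : ℤ) g, (X + Dil a (B j)).card ≤
      (Dil a Ai + SD lG A).card := by
    refine sum_card_le (m := (g : ℤ) * g) (ν := fun j => i * lG.sum + a * (i + g * j)) ?_ ?_ ?_
    · intro j _
      rw [add_comm]
      exact Finset.add_subset_add (Dil_mono a (hBsub j)) (SD_mono (cl_subset _ _ _))
    · intro j _ y hy
      simp only [Finset.mem_add, mem_Dil] at hy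
      obtain ⟨x, hx, _, ⟨b, hb, rfl⟩, rfl⟩ := hy
      refine dvd_cong (dvd_add (hXc x hx) ((mem_cl.1 hb).2.mul_left a)) ?_
      ring
    · intro j hj j' hj' h
      have h2 : (g : ℤ) * g ∣ g * (a * (j - j')) := dvd_cong h (by ring)
      exact Ico_cong hj hj' (hag.symm.dvd_of_dvd_mul_left ((mul_dvd_mul_iff_left hg').1 h2))
  simp only [Finset.sum_sub_distrib, Finset.sum_add_distrib, Finset.sum_const, Int.card_Ico,
    nsmul_eq_mul, sub_zero, Int.toNat_natCast, ← Finset.mul_sum] at h1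
  have hAc' : (Ai.card : ℝ) ≤ ∑ j ∈ Finset.Ico (0 : ℤ) g, ((B j).card : ℝ) := by
    exact_mod_cast hAc
  have hYc' : ∑ j ∈ Finset.Ico (0 : ℤ) g, ((X + Dil a (B j)).card : ℝ) ≤
      (Dil a Ai + SD lG A).card := by exact_mod_cast hYc
  have hAin : Ai.Nonempty := by
    obtain ⟨y, hy, hyz⟩ := hFD i (by simp)
    exact ⟨y, mem_cl.2 ⟨hy, (dvd_mul_right _ _).trans hyz⟩⟩
  have h2 := hIH Ai hAin
  rw [← card_SD_map_mul l Ai hg', ← hlG, ← hX] at h2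
  have h3 := mul_le_mul_of_nonneg_left h2 (Nat.cast_nonneg (α := ℝ) g)
  have h4 := mul_le_mul_of_nonneg_left hAc' (Nat.cast_nonneg (α := ℝ) a.natAbs)
  push_cast at h1 h3 h4 ⊢
  linarith

/-- The shortfall of `SD l A` from `L |A|`. -/
def shortfall (L : ℕ) (l : List ℤ) (A : Finset ℤ) : ℝ := L * A.card - (SD l A).card

/-- The trichotomy needed to apply `iter` to the shortfall. -/
lemma shortfall_step {a : ℤ} {l : List ℤ} {g L' L : ℕ} {C C' : ℝ}
    (hg : 0 < g) (hag : IsCoprime a (g : ℤ)) (hl0 : ∀ c ∈ l, c ≠ 0) (hl : l ≠ [])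
    (hC : 0 ≤ C) (hC' : 0 ≤ C') (hL : L = g * L' + a.natAbs) (hL0 : 0 < L)
    (hcop : ∀ p : ℕ, p.Prime → p ∣ g → ∃ c ∈ l, ¬ (p : ℤ) ∣ c)
    (hIH : ∀ A : Finset ℤ, A.Nonempty → (L' : ℝ) * A.card - C' ≤ (SD l A).card)
    (hE : ∀ A X : Finset ℤ, A.Nonempty → (∃ t, ∀ s ∈ SD (l.map ((g : ℤ) * ·)) A, t + s ∈ X) →
      (X.card : ℝ) + a.natAbs * A.card - C ≤ (X + Dil a A).card)
    (A : Finset ℤ) (hA : A.Nonempty) :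
    shortfall L (a :: l.map ((g : ℤ) * ·)) A ≤ g * (g * (C' + C)) + L ∨
    (∃ (s : Finset ℤ) (y : ℤ → Finset ℤ), s.card ≤ g ∧ (∀ i ∈ s, (y i).Nonempty) ∧
      ∑ i ∈ s, ((y i).card : ℝ) ≤ A.card ∧
      shortfall L (a :: l.map ((g : ℤ) * ·)) A ≤
        ∑ i ∈ s, shortfall L (a :: l.map ((g : ℤ) * ·)) (y i) - 1 / (2 * L) * A.card + g) ∨
    ∃ A' : Finset ℤ, A'.Nonempty ∧ (A'.card : ℝ) = A.card ∧
      shortfall L (a :: l.map ((g : ℤ) * ·)) A ≤ shortfall L (a :: l.map ((g : ℤ) * ·)) A' ∧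
      spread A' < spread A := by
  set lG := l.map ((g : ℤ) * ·) with hlG
  have hg' : (g : ℤ) ≠ 0 := by exact_mod_cast hg.ne'
  have hg1 : (1 : ℝ) ≤ g := by exact_mod_cast hg
  have hL1 : (1 : ℝ) ≤ L := by exact_mod_cast hL0
  have hlGd : ∀ c ∈ lG, (g : ℤ) ∣ c := by
    intro c hc
    obtain ⟨d, -, rfl⟩ := List.mem_map.1 hc
    exact dvd_mul_right _ _
  have hSDc : ∀ s ∈ SD lG A, (g : ℤ) ∣ s := by
    intro s hs
    simpa using SD_cong (m := 1) (i := 0) hlGd (by simp) s hs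
  have hA1 : 1 ≤ A.card := Finset.card_pos.2 hA
  have hCC : 0 ≤ (g : ℝ) * (g * (C' + C)) := by positivity
  have hδ2 : (L : ℝ) * (1 / (2 * L) * A.card) = A.card / 2 := by
    field_simp
  set δ : ℝ := 1 / (2 * (L : ℝ)) with hδdef
  by_cases hA2 : A.card = 1
  · left
    have : (0 : ℝ) ≤ (SD (a :: lG) A).card := Nat.cast_nonneg _
    simp only [shortfall, hA2]
    push_cast
    linarith
  by_cases h2 : ∃ p : ℕ, p.Prime ∧ p ∣ g ∧ ∃ r : ℤ, ∀ a ∈ A, (p : ℤ) ∣ a - r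
  · right; right
    obtain ⟨p, hp, -, r, hr⟩ := h2
    have hp0 : (p : ℤ) ≠ 0 := by exact_mod_cast hp.ne_zero
    obtain ⟨A', rfl⟩ := exists_affine hr
    have hc := card_affine A' hp0 r
    have hid : (a :: lG).map ((1 : ℤ) * ·) = a :: lG := by simp
    have hs := card_SD_map (a :: lG) A' one_ne_zero hp0 r
    rw [hid] at hs
    refine ⟨A', by simpa using hA, by rw [hc], ?_, ?_⟩
    · simp only [shortfall, hc, hs]
      exact le_rfl
    · exact spread_lt (by exact_mod_cast hp.two_le) r (by omega)
  push Not at h2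
  obtain ⟨σ, hσg, hσinj, hσA, hAσ⟩ := exists_reps A hg
  set d : ℤ → ℝ := fun i => L * (cl A g i).card - (Dil a (cl A g i) + SD lG A).card with hd
  have hclne : ∀ i ∈ σ, (cl A g i).Nonempty := by
    intro i hi
    obtain ⟨a, ha, h⟩ := hσA i hi
    exact ⟨a, mem_cl.2 ⟨ha, h⟩⟩
  have hdD : ∀ i ∈ σ, d i ≤ shortfall L (a :: lG) (cl A g i) := by
    intro i _
    have : (SD (a :: lG) (cl A g i)).card ≤ (Dil a (cl A g i) + SD lG A).card :=
      Finset.card_le_card (Finset.add_subset_add_left (SD_mono (cl_subset _ _ _)))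
    have : ((SD (a :: lG) (cl A g i)).card : ℝ) ≤ (Dil a (cl A g i) + SD lG A).card := by
      exact_mod_cast this
    simp only [hd, shortfall]
    linarith
  have hS : ∑ i ∈ σ, ((cl A g i).card : ℝ) ≤ A.card := by
    have : ∑ i ∈ σ, (cl A g i).card ≤ A.card :=
      sum_card_le (m := (g : ℤ)) (ν := fun i => i) (fun i _ => cl_subset _ _ _)
        (fun i _ y hy => (mem_cl.1 hy).2) hσinj
    exact_mod_cast this
  have hT : shortfall L (a :: lG) A ≤ ∑ i ∈ σ, d i := by
    have hYc : ∑ i ∈ σ, (Dil a (cl A g i) + SD lG A).card ≤ (SD (a :: lG) A).card := by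
      refine sum_card_le (m := (g : ℤ)) (ν := fun i => a * i) ?_ ?_ ?_
      · intro i _
        exact Finset.add_subset_add_right (Dil_mono a (cl_subset _ _ _))
      · intro i _ y hy
        simp only [Finset.mem_add, mem_Dil] at hy
        obtain ⟨_, ⟨x, hx, rfl⟩, s, hs, rfl⟩ := hy
        refine dvd_cong (dvd_add ((mem_cl.1 hx).2.mul_left a) (hSDc s hs)) ?_
        ring
      · intro i hi j hj h
        refine hσinj i hi j hj (hag.symm.dvd_of_dvd_mul_left (dvd_cong h ?_))
        ring
    have hAc : A.card ≤ ∑ i ∈ σ, (cl A g i).card := by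
      refine card_le_sum fun a ha => ?_
      obtain ⟨i, hi, hai⟩ := hAσ a ha
      exact ⟨i, hi, mem_cl.2 ⟨ha, hai⟩⟩
    have hYc' : ∑ i ∈ σ, ((Dil a (cl A g i) + SD lG A).card : ℝ) ≤ (SD (a :: lG) A).card := by
      exact_mod_cast hYc
    have hAc' : (A.card : ℝ) ≤ ∑ i ∈ σ, ((cl A g i).card : ℝ) := by exact_mod_cast hAc
    have : (L : ℝ) * A.card ≤ L * ∑ i ∈ σ, ((cl A g i).card : ℝ) := by gcongr
    simp only [hd, shortfall, Finset.sum_sub_distrib, ← Finset.mul_sum]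
    linarith
  by_cases h4 : ∀ i ∈ σ, ∀ z, (g : ℤ) ∣ z - i → ∃ a' ∈ A, (g : ℤ) * g ∣ a' - z
  · left
    have h5 : ∑ i ∈ σ, d i ≤ ∑ i ∈ σ, (g : ℝ) * (C' + C) := by
      refine Finset.sum_le_sum fun i hi => ?_
      have := class_full hg hag hIH hE (h4 i hi)
      rw [← hL, ← hlG] at this
      simp only [hd]
      linarith
    rw [Finset.sum_const, nsmul_eq_mul] at h5
    have h6 : (σ.card : ℝ) * (g * (C' + C)) ≤ g * (g * (C' + C)) := by gcongr
    linarith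
  right; left
  -- it suffices to improve a single piece
  suffices H : ∃ i₀ ∈ σ, ∃ y₀ : Finset ℤ, y₀.Nonempty ∧
      (y₀.card : ℝ) ≤ (cl A g i₀).card ∧ d i₀ ≤ shortfall L (a :: lG) y₀ - δ * A.card + 1 by
    obtain ⟨i₀, hi₀, y₀, hy₀, hsz, hd₀⟩ := H
    obtain ⟨y, hy, hyS, hyT⟩ := assemble (P := Finset.Nonempty)
      (sz := fun p : Finset ℤ => (p.card : ℝ))
      (D := shortfall L (a :: lG)) hi₀ hclne hy₀ hsz hdD hd₀ hS hT
    exact ⟨σ, y, hσg, hy, hyS, by linarith⟩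
  set v : ℕ := ⌈δ * A.card⌉₊ with hv
  have hvle : δ * A.card ≤ v := Nat.le_ceil _
  by_cases h5 : ∃ i₀ ∈ σ, (cl A g i₀).card < v
  · obtain ⟨i₀, hi₀, hlt⟩ := h5
    have hlt' : ((cl A g i₀).card : ℝ) < δ * A.card := Nat.lt_ceil.1 hlt
    obtain ⟨r, hr⟩ := hclne i₀ hi₀
    -- a small piece can be replaced by a single point, which has nonnegative shortfall
    refine ⟨i₀, hi₀, {r}, by simp, ?_, ?_⟩
    · have : 1 ≤ (cl A g i₀).card := Finset.card_pos.2 ⟨r, hr⟩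
      simpa using this
    · have h6 : A.card ≤ (Dil a (cl A g i₀) + SD lG A).card := by
        obtain ⟨c, l', rfl⟩ := List.exists_cons_of_ne_nil hl
        have h7 : ((g : ℤ) * c) ≠ 0 := mul_ne_zero hg' (hl0 c (by simp))
        calc A.card = (Dil (g * c) A).card := (card_Dil A h7).symm
          _ ≤ (SD lG A).card := Finset.card_le_card_add_right (SD_nonempty hA)
          _ ≤ _ := Finset.card_le_card_add_left (Dil_nonempty a ⟨r, hr⟩)
      have h6' : (A.card : ℝ) ≤ (Dil a (cl A g i₀) + SD lG A).card := by exact_mod_cast h6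
      have h7 : (L : ℝ) * (cl A g i₀).card ≤ L * (δ * A.card) := by gcongr
      have h8 : δ * A.card ≤ A.card / 2 := by
        rw [← hδ2]
        exact le_mul_of_one_le_left (by positivity) hL1
      simp only [hd, shortfall, SD_singleton, Finset.card_singleton]
      push_cast
      rw [hδ2] at h7
      linarith
  push Not at h5 h4
  obtain ⟨i₀, hi₀, z, hz, hzA⟩ := h4
  obtain ⟨a₀, ha₀, hai⟩ := hσA i₀ hi₀
  have hc := class_gain (v := v) hg hag hl0 ha₀ hcop (fun p hp hpg => h2 p hp hpg a₀)
    (z := z) (by refine dvd_cong (dvd_sub hz hai) ?_; ring) hzA (by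
      intro x hx
      obtain ⟨i, hi, h⟩ := hAσ x hx
      rw [cl_congr h]
      exact h5 i hi)
  rw [cl_congr hai, ← hlG] at hc
  refine ⟨i₀, hi₀, cl A g i₀, hclne i₀ hi₀, le_rfl, ?_⟩
  have hc' : ((SD (a :: lG) (cl A g i₀)).card : ℝ) + v ≤
    (Dil a (cl A g i₀) + SD lG A).card := by exact_mod_cast hc
  simp only [hd, shortfall]
  linarith

/-- The theorem for sets of integers, with coprimality of the coefficients stated as the absence
of a common prime factor. -/
lemma sum_dilates_int (l : List ℤ) : l ≠ [] → (∀ a ∈ l, a ≠ 0) →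
    (∀ p : ℕ, p.Prime → ∃ a ∈ l, ¬ (p : ℤ) ∣ a) →
    ∃ C : ℝ, 0 ≤ C ∧ ∀ A : Finset ℤ, A.Nonempty →
      ((l.map Int.natAbs).sum : ℝ) * A.card - C ≤ (SD l A).card := by
  induction hlen : l.length generalizing l with
  | zero => intro h; exact absurd (List.length_eq_zero_iff.1 hlen) h
  | succ k ih =>
    intro _ hl0 hcop
    obtain ⟨a, l', rfl⟩ : ∃ b l', l = b :: l' := by
      cases l with
      | nil => simp at hlen
      | cons b l' => exact ⟨b, l', rfl⟩
    have ha0 : a ≠ 0 := hl0 a (by simp)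
    by_cases hl'n : l' = []
    · subst hl'n
      have ha1 : a.natAbs = 1 := by
        by_contra h
        obtain ⟨p, hp, hpa⟩ := Nat.exists_prime_and_dvd h
        obtain ⟨b, hb, hpb⟩ := hcop p hp
        rw [List.mem_singleton] at hb
        subst hb
        exact hpb (Int.natCast_dvd.2 hpa)
      refine ⟨0, le_rfl, fun A hA => ?_⟩
      have h : A.card ≤ (SD [a] A).card := by
        rw [← card_Dil A ha0]
        exact Finset.card_le_card_add_right ⟨0, by simp [SD]⟩
      have h' : (A.card : ℝ) ≤ (SD [a] A).card := by exact_mod_cast h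
      simpa [ha1] using h'
    set g := lg l' with hgdef
    have hgl : ∀ c ∈ l', (g : ℤ) ∣ c := (dvd_lg g l').1 dvd_rfl
    have hg : 0 < g := by
      obtain ⟨c, l'', rfl⟩ := List.exists_cons_of_ne_nil hl'n
      rcases Nat.eq_zero_or_pos g with h | h
      · have h1 := hgl c (by simp)
        rw [h] at h1
        exact absurd (by simpa using h1) (hl0 c (by simp))
      · exact h
    have hg' : (g : ℤ) ≠ 0 := by exact_mod_cast hg.ne'
    set μ := l'.map (· / (g : ℤ)) with hμ
    have hl' : l' = μ.map ((g : ℤ) * ·) := by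
      rw [hμ, List.map_map]
      symm
      rw [List.map_congr_left (g := id)]
      · simp
      · intro c hc
        exact Int.mul_ediv_cancel' (hgl c hc)
    clear_value μ
    have hμ0 : ∀ c ∈ μ, c ≠ 0 := by
      rintro c hc rfl
      have : (g : ℤ) * 0 ∈ l' := by
        rw [hl']
        exact List.mem_map_of_mem hc
      exact hl0 _ (List.mem_cons_of_mem _ this) (mul_zero _)
    have hμn : μ ≠ [] := by
      rw [hμ]
      simpa using hl'n
    have hcopμ : ∀ p : ℕ, p.Prime → ∃ c ∈ μ, ¬ (p : ℤ) ∣ c := by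
      intro p hp
      by_contra! h
      have h1 : g * p ∣ g * 1 := by
        rw [mul_one]
        conv_rhs => rw [hgdef]
        rw [dvd_lg]
        intro c hc
        rw [hl'] at hc
        obtain ⟨d, hd, rfl⟩ := List.mem_map.1 hc
        push_cast
        exact mul_dvd_mul_left _ (h d hd)
      exact hp.one_lt.ne' (Nat.dvd_one.1 (Nat.dvd_of_mul_dvd_mul_left hg h1))
    have hag : IsCoprime a (g : ℤ) := by
      rw [Int.isCoprime_iff_gcd_eq_one]
      by_contra h
      obtain ⟨p, hp, hpg⟩ := Nat.exists_prime_and_dvd h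
      have hpa : (p : ℤ) ∣ a := (Int.natCast_dvd_natCast.2 hpg).trans (Int.gcd_dvd_left _ _)
      have hpg : (p : ℤ) ∣ g := (Int.natCast_dvd_natCast.2 hpg).trans (Int.gcd_dvd_right _ _)
      obtain ⟨c, hc, hpc⟩ := hcop p hp
      rcases List.mem_cons.1 hc with rfl | hc
      · exact hpc hpa
      · exact hpc (hpg.trans (hgl c hc))
    obtain ⟨C', hC', hIH⟩ := ih μ (by rw [hμ, List.length_map]; simpa using hlen) hμn hμ0 hcopμ
    obtain ⟨C, hC, hE⟩ := extend_bound l' a.natAbs a.sign (Int.natAbs_pos.2 ha0)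
      (by simpa [Int.sign_eq_zero_iff_zero] using ha0)
      (fun p hp _ h => by
        have h1 : IsUnit (a.sign) := by
          rw [Int.isUnit_iff_natAbs_eq, Int.natAbs_sign_of_ne_zero ha0]
        exact (Nat.prime_iff_prime_int.1 hp).not_isUnit (isUnit_of_dvd_unit h h1))
      (fun p hp hpa => by
        obtain ⟨c, hc, hpc⟩ := hcop p hp
        rcases List.mem_cons.1 hc with rfl | hc
        · exact absurd (Int.natCast_dvd.2 hpa) hpc
        · exact ⟨c, hc, hpc⟩)
    have hsgn : (a.natAbs : ℤ) * a.sign = a := by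
      rw [mul_comm]
      exact Int.sign_mul_natAbs a
    rw [hsgn] at hE
    set L' := (μ.map Int.natAbs).sum with hL'
    have hsum : ((a :: l').map Int.natAbs).sum = g * L' + a.natAbs := by
      have : l'.map Int.natAbs = (μ.map Int.natAbs).map (g * ·) := by
        conv_lhs => rw [hl']
        rw [List.map_map, List.map_map]
        refine List.map_congr_left fun c _ => ?_
        simp [Int.natAbs_mul]
      rw [List.map_cons, List.sum_cons, this, add_comm]
      congr 1
      simpa using List.sum_map_mul_left (μ.map Int.natAbs) id g
    rw [hsum]
    have hL0 : 0 < g * L' + a.natAbs := by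
      have := Int.natAbs_pos.2 ha0
      omega
    have hstep := shortfall_step (L := g * L' + a.natAbs) hg hag hμ0 hμn hC hC' rfl hL0
      (fun p hp _ => hcopμ p hp) hIH (by rwa [← hl'])
    rw [← hl'] at hstep
    obtain ⟨M, hM⟩ := iter Finset.Nonempty (fun A : Finset ℤ => (A.card : ℝ))
      (shortfall (g * L' + a.natAbs) (a :: l')) spread ((g * L' + a.natAbs : ℕ) : ℝ)
      (1 / (2 * ((g * L' + a.natAbs : ℕ) : ℝ)))
      (g * (g * (C' + C)) + ((g * L' + a.natAbs : ℕ) : ℝ)) g (by positivity)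
      (fun x _ => Nat.cast_nonneg _) (fun A _ => by
        simp only [shortfall]
        have : (0 : ℝ) ≤ (SD (a :: l') A).card := Nat.cast_nonneg _
        linarith) hstep
    refine ⟨max M 0, le_max_right _ _, fun A hA => ?_⟩
    have h := hM A hA
    have h0 := le_max_left M 0
    simp only [shortfall] at h
    linarith

/-! ### Reduction from `ℝ` to `ℤ` -/

/-- Some additive map sends `A` injectively onto a set of integers: take a `ℚ`-linear functional
that is nonzero on all differences of elements of `A` and clear denominators. -/
lemma exists_int_model (A : Finset ℝ) :
    ∃ (f : ℝ →+ ℚ) (B : Finset ℤ),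
      B.image (fun b : ℤ => (b : ℚ)) = A.image f ∧ B.card = A.card := by
  classical
  obtain ⟨f, hf⟩ := Module.exists_dual_forall_apply_ne_zero (K := ℚ)
    (fun p : {p : A × A // p.1 ≠ p.2} => ((p.1.1 : ℝ) - p.1.2)) (by
      rintro ⟨⟨x, y⟩, h⟩
      exact sub_ne_zero.2 fun h' => h (Subtype.ext h'))
  have hinj : Set.InjOn f A := by
    intro x hx y hy hxy
    by_contra hne
    refine hf ⟨(⟨x, hx⟩, ⟨y, hy⟩), fun h => hne (congrArg Subtype.val h)⟩ ?_
    simp [hxy]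
  set N : ℕ := ∏ a ∈ A, (f a).den with hN
  have hN0 : N ≠ 0 := Finset.prod_ne_zero_iff.2 fun a _ => (f a).den_ne_zero
  have hint : ∀ a ∈ A, ((N : ℚ) * f a).num = (N : ℚ) * f a := by
    intro a ha
    obtain ⟨m, hm⟩ := Finset.dvd_prod_of_mem (fun a => (f a).den) ha
    have : (N : ℚ) * f a = ((m * (f a).num : ℤ) : ℚ) := by
      have h1 := Rat.den_mul_eq_num (f a)
      rw [hN, hm]
      push_cast
      rw [← h1]
      ring
    rw [this, Rat.num_intCast]
  have hginj : Set.InjOn (fun x => (N : ℚ) * f x) A := by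
    intro x hx y hy h
    exact hinj hx hy (mul_left_cancel₀ (by exact_mod_cast hN0) h)
  refine ⟨(AddMonoidHom.mulLeft (N : ℚ)).comp f.toAddMonoidHom,
    A.image (fun a => ((N : ℚ) * f a).num), ?_, ?_⟩
  · rw [Finset.image_image]
    refine Finset.image_congr fun a ha => ?_
    exact hint a ha
  · refine Finset.card_image_of_injOn fun x hx y hy h => hginj hx hy ?_
    dsimp only at h ⊢
    rw [← hint x hx, ← hint y hy, h]

/-- The integer model of the sumset lies in the image of the real sumset. -/
lemma SD_subset_image {A : Finset ℝ} {f : ℝ →+ ℚ} {B : Finset ℤ}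
    (h : B.image (fun b : ℤ => (b : ℚ)) = A.image f) (k : ℕ) (l : Fin k → ℤ) :
    (SD (List.ofFn l) B).image (fun b : ℤ => (b : ℚ)) ⊆
      (∑ i, A.image (fun a => (l i : ℝ) * a)).image f := by
  induction k with
  | zero => simp [SD]
  | succ k ih =>
    intro q hq
    rw [List.ofFn_succ, Finset.mem_image] at hq
    obtain ⟨_, hz, rfl⟩ := hq
    obtain ⟨x, hx, y, hy, rfl⟩ := mem_SD_cons.1 hz
    have h1 : (x : ℚ) ∈ A.image f := h ▸ Finset.mem_image_of_mem _ hx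
    obtain ⟨a, ha, hax⟩ := Finset.mem_image.1 h1
    obtain ⟨w, hw, hwy⟩ := Finset.mem_image.1
      (ih (fun i => l i.succ) (Finset.mem_image_of_mem _ hy))
    rw [Fin.sum_univ_succ]
    refine Finset.mem_image.2 ⟨l 0 * a + w,
      Finset.add_mem_add (Finset.mem_image_of_mem _ ha) hw, ?_⟩
    rw [map_add, hwy, ← zsmul_eq_mul, map_zsmul, hax]
    push_cast
    rw [zsmul_eq_mul]

/-- **Sum of many dilates over ℝ.** For coprime nonzero integers `λ₁, …, λ_k` there is
a constant `C` such that for every finite `A ⊆ ℝ`,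
`|λ₁·A + … + λ_k·A| ≥ (|λ₁| + … + |λ_k|)·|A| − C`. -/
theorem sum_of_many_dilates_real (k : ℕ) (hk : 1 ≤ k) (l : Fin k → ℤ)
    (hl : ∀ i, l i ≠ 0) (hcop : Finset.univ.gcd l = 1) :
    ∃ C : ℤ, ∀ A : Finset ℝ,
      (∑ i, |l i|) * A.card - C ≤
        ((∑ i, A.image (fun a => (l i : ℝ) * a)).card : ℤ) := by
  obtain ⟨C, hC0, hC⟩ := sum_dilates_int (List.ofFn l)
    (by
      intro h
      have := congrArg List.length h
      simp at this
      omega)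
    (by
      intro a ha
      obtain ⟨i, rfl⟩ := List.mem_ofFn.1 ha
      exact hl i)
    (by
      intro p hp
      by_contra! h
      have h1 : (p : ℤ) ∣ Finset.univ.gcd l :=
        Finset.dvd_gcd fun i _ => h _ (List.mem_ofFn.2 ⟨i, rfl⟩)
      rw [hcop] at h1
      exact (Nat.prime_iff_prime_int.1 hp).not_isUnit (isUnit_of_dvd_one h1))
  refine ⟨⌈C⌉, fun A => ?_⟩
  have hCc : C ≤ (⌈C⌉ : ℤ) := Int.le_ceil C
  rcases A.eq_empty_or_nonempty with rfl | hA
  · have h0 : (0 : ℤ) ≤ ⌈C⌉ := Int.ceil_nonneg hC0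
    have h1 : (0 : ℤ) ≤ ((∑ i, (∅ : Finset ℝ).image (fun a => (l i : ℝ) * a)).card : ℤ) :=
      Int.natCast_nonneg _
    simp only [Finset.card_empty, Nat.cast_zero, mul_zero]
    linarith
  obtain ⟨f, B, hBA, hBc⟩ := exists_int_model A
  have hB : B.Nonempty := by
    rw [← Finset.card_pos, hBc]
    exact Finset.card_pos.2 hA
  have h1 := hC B hB
  have h2 : (SD (List.ofFn l) B).card ≤ (∑ i, A.image (fun a => (l i : ℝ) * a)).card := by
    rw [← Finset.card_image_of_injective (SD (List.ofFn l) B) (Int.cast_injective (α := ℚ))]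
    exact (Finset.card_le_card (SD_subset_image hBA k l)).trans Finset.card_image_le
  have h2' : ((SD (List.ofFn l) B).card : ℝ) ≤
      (∑ i, A.image (fun a => (l i : ℝ) * a)).card := by exact_mod_cast h2
  have h3 : ((((List.ofFn l).map Int.natAbs).sum : ℕ) : ℝ) = ((∑ i, |l i| : ℤ) : ℝ) := by
    rw [List.map_ofFn, List.sum_ofFn]
    push_cast
    refine Finset.sum_congr rfl fun i _ => ?_
    simp [Nat.cast_natAbs]
  rw [h3, hBc] at h1
  have h4 : (((∑ i, |l i|) * A.card - ⌈C⌉ : ℤ) : ℝ) ≤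
      (((∑ i, A.image (fun a => (l i : ℝ) * a)).card : ℤ) : ℝ) := by
    push_cast at h1 ⊢
    linarith
  exact_mod_cast h4
end
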